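/- arXiv:2512.15255 — 2 statements merged into one kernel-verified Lean document; each statement's English description precedes it below -/
import Mathlib

section
/- Let u be a very weak solution with integrability deficit δ ∈ (0,1), and assume the p-intrinsic hypotheses. Then for every θ ∈ ((q−1)/p, δ] and every s ∈ [2ρ, 4ρ] there exists a constant c = c(data) such that ⨍_{Q^π_s(z₀)} (inf_{w ∈ Q^π_s(z₀)} a(w))^θ · |u − (u)_{Q^π_s(z₀)}|^{θq}/s^{θq} dz ≤ c ⨍_{Q^π_s(z₀)} (H(z,|∇u|) + H(z,|F|))^θ dz. -/
open MeasureTheory Set Metric Filter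
open scoped ENNReal NNReal Topology BigOperators Classical

noncomputable section

namespace DoublePhase

/-- Spatial points: ℝⁿ. -/
abbrev Spc (n : ℕ) : Type := EuclideanSpace ℝ (Fin n)
/-- Space-time points `z = (x,t)`. -/
abbrev Pt (n : ℕ) : Type := Spc n × ℝ
/-- Values in ℝᴺ. -/
abbrev Vec (N : ℕ) : Type := Fin N → ℝ
/-- Matrices in ℝ^{N×n}. -/
abbrev Mat (N n : ℕ) : Type := Fin N → Fin n → ℝ

/-- Euclidean inner product on ℝᴺ. -/
def vdot {N : ℕ} (v w : Vec N) : ℝ := ∑ i, v i * w i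
/-- Euclidean norm on ℝᴺ. -/
def vnorm {N : ℕ} (v : Vec N) : ℝ := Real.sqrt (vdot v v)
/-- Euclidean inner product on ℝ^{N×n}. -/
def mdot {N n : ℕ} (A B : Mat N n) : ℝ := ∑ i, ∑ j, A i j * B i j
/-- Euclidean norm on ℝ^{N×n}. -/
def mnorm {N n : ℕ} (A : Mat N n) : ℝ := Real.sqrt (mdot A A)

/-- Parabolic cylinder `Q_{r,s}(z₀) = B_r(x₀) × (t₀−s, t₀+s)`. -/
def Qrs {n : ℕ} (z₀ : Pt n) (r s : ℝ) : Set (Pt n) :=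
  (Metric.ball z₀.1 r) ×ˢ (Set.Ioo (z₀.2 - s) (z₀.2 + s))

/-- Standard parabolic cylinder `Q_ρ(z₀) = B_ρ(x₀) × (t₀−ρ², t₀+ρ²)`. -/
def Qc {n : ℕ} (z₀ : Pt n) (ρ : ℝ) : Set (Pt n) := Qrs z₀ ρ (ρ ^ 2)

/-- The double-phase function `H(z,s) = s^p + a(z) s^q`. -/
def Hf {n : ℕ} (a : Pt n → ℝ) (p q : ℝ) (z : Pt n) (s : ℝ) : ℝ := s ^ p + a z * s ^ q

/-- `p`-intrinsic cylinder `Q_ρ^λ(z₀) = B_ρ(x₀) × (t₀−λ^{2−p}ρ², t₀+λ^{2−p}ρ²)`. -/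
def Qp {n : ℕ} (p : ℝ) (z₀ : Pt n) (lam ρ : ℝ) : Set (Pt n) :=
  Qrs z₀ ρ (lam ^ (2 - p) * ρ ^ 2)

/-- `(p,q)`-intrinsic cylinder `G_ρ^λ(z₀)`. -/
def Gpq {n : ℕ} (a : Pt n → ℝ) (p q : ℝ) (z₀ : Pt n) (lam ρ : ℝ) : Set (Pt n) :=
  Qrs z₀ ρ (lam ^ 2 / Hf a p q z₀ lam * ρ ^ 2)

/-- The space-time domain `Ω_T = Ω × (0,T)`. -/
def cyl {n : ℕ} (Ω : Set (Spc n)) (T : ℝ) : Set (Pt n) := Ω ×ˢ Set.Ioo 0 T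

/-- Spatial partial derivative `∂_{x_j} ψ` of a scalar test function. -/
def dxj {n : ℕ} (ψ : Pt n → ℝ) (j : Fin n) (z : Pt n) : ℝ :=
  fderiv ℝ ψ z (EuclideanSpace.single j 1, 0)

/-- Time derivative `∂_t φ` of a vector-valued test function. -/
def dtd {n N : ℕ} (φ : Pt n → Vec N) (z : Pt n) : Vec N :=
  fderiv ℝ φ z ((0 : Spc n), (1 : ℝ))

/-- Spatial gradient `∇φ` of a vector-valued test function, as a matrix. -/
def gradm {n N : ℕ} (φ : Pt n → Vec N) (z : Pt n) : Mat N n :=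
  fun i j => fderiv ℝ (fun w => φ w i) z (EuclideanSpace.single j 1, 0)

/-- The structural setting of the parabolic double-phase problem:
`data = (n, N, p, q, α, L₁, L₂, [a]_α)` together with the bounded domain `Ω`,
time `T`, the coefficient `a`, the vector field `𝒜` and the source `F`. -/
structure Setting (n N : ℕ) (p q α L₁ L₂ aH : ℝ) where
  Ω : Set (Spc n)
  T : ℝ
  a : Pt n → ℝ
  A : Pt n → Mat N n → Mat N n
  F : Pt n → Mat N n
  hn : 2 ≤ n
  hN : 1 ≤ N
  hΩo : IsOpen Ω
  hΩb : Bornology.IsBounded Ω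
  hΩne : Ω.Nonempty
  hT : 0 < T
  hα : α ∈ Set.Ioc (0 : ℝ) 1
  hp2 : 2 < p
  hpq : p < q
  hqub : q < p + 2 * α / ((n : ℝ) + 2)
  hL₁ : 0 < L₁
  hL₁₂ : L₁ ≤ L₂
  haH : 0 < aH
  ha0 : ∀ z, 0 ≤ a z
  haM : Measurable a
  haB : BddAbove (Set.range a)
  haHol : ∀ x ∈ Ω, ∀ y ∈ Ω, ∀ t ∈ Set.Ioo (0 : ℝ) T, ∀ s ∈ Set.Ioo (0 : ℝ) T,
    |a (x, t) - a (y, s)| ≤ aH * max (‖x - y‖ ^ α) (|t - s| ^ (α / 2))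
  hAM : Measurable (Function.uncurry A)
  hAcoer : ∀ᵐ z ∂(volume.restrict (cyl Ω T)), ∀ ξ : Mat N n,
    L₁ * (mnorm ξ ^ p + a z * mnorm ξ ^ q) ≤ mdot (A z ξ) ξ
  hAgrow : ∀ᵐ z ∂(volume.restrict (cyl Ω T)), ∀ ξ : Mat N n,
    mnorm (A z ξ) ≤ L₂ * (mnorm ξ ^ (p - 1) + a z * mnorm ξ ^ (q - 1))
  hFM : Measurable F
  hFint : IntegrableOn (fun z => Hf a p q z (mnorm (F z))) (cyl Ω T)

variable {n N : ℕ} {p q α L₁ L₂ aH : ℝ}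

/-- The right-hand side field `|F|^{p−2}F + a|F|^{q−2}F`. -/
def rhsF (S : Setting n N p q α L₁ L₂ aH) (z : Pt n) : Mat N n :=
  fun i j => mnorm (S.F z) ^ (p - 2) * S.F z i j + S.a z * mnorm (S.F z) ^ (q - 2) * S.F z i j

/-- Very weak solution with integrability deficit `δ`: `u ∈ L¹(0,T;W^{1,1})` with
weak spatial gradient `Du`, `H(·,|Du|)^δ` integrable, satisfying the weak formulation. -/
structure VeryWeakSolution (S : Setting n N p q α L₁ L₂ aH)
    (u : Pt n → Vec N) (Du : Pt n → Mat N n) (δ : ℝ) : Prop where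
  hδ : δ ∈ Set.Ioo (0 : ℝ) 1
  huM : Measurable u
  hDuM : Measurable Du
  huL1 : IntegrableOn (fun z => vnorm (u z)) (cyl S.Ω S.T)
  hDuL1 : IntegrableOn (fun z => mnorm (Du z)) (cyl S.Ω S.T)
  hgrad : ∀ (i : Fin N) (j : Fin n) (ψ : Pt n → ℝ),
    ContDiff ℝ (⊤ : ℕ∞) ψ → HasCompactSupport ψ → tsupport ψ ⊆ cyl S.Ω S.T →
    ∫ z in cyl S.Ω S.T, u z i * dxj ψ j z = - ∫ z in cyl S.Ω S.T, Du z i j * ψ z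
  henergy : IntegrableOn (fun z => Hf S.a p q z (mnorm (Du z)) ^ δ) (cyl S.Ω S.T)
  hweak : ∀ φ : Pt n → Vec N,
    ContDiff ℝ (⊤ : ℕ∞) φ → HasCompactSupport φ → tsupport φ ⊆ cyl S.Ω S.T →
    ∫ z in cyl S.Ω S.T, (-(vdot (u z) (dtd φ z)) + mdot (S.A z (Du z)) (gradm φ z))
      = ∫ z in cyl S.Ω S.T, mdot (rhsF S z) (gradm φ z)

/-- `H(z,|∇u|)`. -/
def HDu (S : Setting n N p q α L₁ L₂ aH) (Du : Pt n → Mat N n) (z : Pt n) : ℝ :=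
  Hf S.a p q z (mnorm (Du z))

/-- `H(z,|F|)`. -/
def HFf (S : Setting n N p q α L₁ L₂ aH) (z : Pt n) : ℝ :=
  Hf S.a p q z (mnorm (S.F z))

/-- Componentwise integral average `(u)_E` of a vector-valued function. -/
def vavg {n N : ℕ} (u : Pt n → Vec N) (E : Set (Pt n)) : Vec N := fun i => ⨍ z in E, u z i

/-- The `p`-intrinsic hypotheses \eqref{eq_pcase}-\eqref{eq_rho_decay}. -/
structure PHyp (S : Setting n N p q α L₁ L₂ aH) (Du : Pt n → Mat N n)
    (z₀ : Pt n) (π ρ δ : ℝ) : Prop where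
  hz₀ : z₀ ∈ cyl S.Ω S.T
  hπ : 1 < π
  hρ : ρ ∈ Set.Ioo (0 : ℝ) 1
  hcase : S.a z₀ * π ^ q ≤ π ^ p
  hsub : Qp p z₀ π (16 * ρ) ⊆ cyl S.Ω S.T
  hlow : π ^ (δ * p) ≤ ⨍ z in Qp p z₀ π ρ, (HDu S Du z + HFf S z) ^ δ
  hup : (⨍ z in Qp p z₀ π (16 * ρ), (HDu S Du z + HFf S z) ^ δ) ≤ π ^ (δ * p)
  hdecay : ρ ^ α ≤ π ^ (p - q)

/-- The `(p,q)`-intrinsic hypotheses \eqref{eq_pqcase}-\eqref{eq_pq4}. -/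
structure PQHyp (S : Setting n N p q α L₁ L₂ aH) (Du : Pt n → Mat N n)
    (z₀ : Pt n) (π ρ δ : ℝ) : Prop where
  hz₀ : z₀ ∈ cyl S.Ω S.T
  hπ : 1 < π
  hρ : ρ ∈ Set.Ioo (0 : ℝ) 1
  hcase : π ^ p < S.a z₀ * π ^ q
  hsub : Gpq S.a p q z₀ π (16 * ρ) ⊆ cyl S.Ω S.T
  hcomp : ∀ z ∈ Qc z₀ (10 * ρ), S.a z₀ / 2 ≤ S.a z ∧ S.a z ≤ 2 * S.a z₀
  hlow : Hf S.a p q z₀ π ^ δ ≤ ⨍ z in Gpq S.a p q z₀ π ρ, (HDu S Du z + HFf S z) ^ δ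
  hup : (⨍ z in Gpq S.a p q z₀ π (16 * ρ), (HDu S Du z + HFf S z) ^ δ) ≤ Hf S.a p q z₀ π ^ δ

/-- Strong maximal function over parabolic cylinders. -/
def strongMax {n : ℕ} (f : Pt n → ℝ) (z : Pt n) : ℝ :=
  sSup {m : ℝ | ∃ (w : Pt n) (r s : ℝ), 0 < r ∧ 0 < s ∧ z ∈ Qrs w r s ∧
    m = ⨍ y in Qrs w r s, |f y|}

/-- The function `g = (|∇u| + |u−u₀|/ρ + |F|) χ_{𝒬₂}`. -/
def gW (S : Setting n N p q α L₁ L₂ aH) (u : Pt n → Vec N) (Du : Pt n → Mat N n)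
    (Q2 : Set (Pt n)) (ρ : ℝ) (z : Pt n) : ℝ :=
  Q2.indicator (fun w => mnorm (Du w) + vnorm (u w - vavg u Q2) / ρ + mnorm (S.F w)) z

/-- Hölder extension of `a` to all of ℝ^{n+1}. -/
def aExt (S : Setting n N p q α L₁ L₂ aH) (Q2 : Set (Pt n)) (z : Pt n) : ℝ :=
  sInf {v : ℝ | ∃ w ∈ cyl S.Ω S.T,
    v = Q2.indicator S.a w + aH * (‖z.1 - w.1‖ ^ α + |z.2 - w.2| ^ (α / 2))}

/-- Hölder extension of `a` truncated between `inf_{𝒬₂} a` and `sup_{𝒬₂} a`. -/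
def aStar (S : Setting n N p q α L₁ L₂ aH) (Q2 : Set (Pt n)) (z : Pt n) : ℝ :=
  max (min (aExt S Q2 z) (sSup (S.a '' Q2))) (sInf (S.a '' Q2))

/-- The maximal weight `Υ(z) = (M(g^{q−1} + (a g^q)^{(q−1)/p})(z))^{p/(q−1)}`. -/
def Ups (S : Setting n N p q α L₁ L₂ aH) (u : Pt n → Vec N) (Du : Pt n → Mat N n)
    (Q2 : Set (Pt n)) (ρ : ℝ) (z : Pt n) : ℝ :=
  strongMax (fun w => gW S u Du Q2 ρ w ^ (q - 1)
      + (aStar S Q2 w * gW S u Du Q2 ρ w ^ q) ^ ((q - 1) / p)) z ^ (p / (q - 1))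

/-- `Υ̂(z) = max{Υ(z), θΠ}`. -/
def UpsHat (S : Setting n N p q α L₁ L₂ aH) (u : Pt n → Vec N) (Du : Pt n → Mat N n)
    (Q2 : Set (Pt n)) (ρ θ Pi' : ℝ) (z : Pt n) : ℝ :=
  max (Ups S u Du Q2 ρ z) (θ * Pi')

/-- `‖a‖_{L^∞(Ω_T)}`. -/
def supA (S : Setting n N p q α L₁ L₂ aH) : ℝ := sSup (S.a '' cyl S.Ω S.T)

/-- The constant `K = ((1+‖a‖_∞)/|B₁| ∬ Υ^μ)^{α/(n+2)}`. -/
def Kconst (S : Setting n N p q α L₁ L₂ aH) (u : Pt n → Vec N) (Du : Pt n → Mat N n)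
    (Q2 : Set (Pt n)) (ρ μ : ℝ) : ℝ :=
  (((1 + supA S) / (volume (Metric.ball (0 : Spc n) 1)).toReal)
      * ∫ z, Ups S u Du Q2 ρ z ^ μ) ^ (α / ((n : ℝ) + 2))

/-- Conditions \eqref{def_mu}-\eqref{def_mu_2} on `μ`. -/
def muCond (n : ℕ) (p q α μ : ℝ) : Prop :=
  max (1 - 2 / q + ((n : ℝ) + 2) * (q - p) / (q * α)) ((q - 1) / p) < μ ∧ μ < 1 ∧
    (1 / μ - 1) * (2 * (n : ℝ)) / (((n : ℝ) + 2) * q) + (n : ℝ) / ((n : ℝ) + 2) ≤ p / q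

/-- Condition \eqref{def_mfs} on `γ`. -/
def gammaCond (n : ℕ) (p q α μ γ : ℝ) : Prop :=
  0 < γ ∧ γ < 1 ∧ -(2 * α) / ((n : ℝ) + 2) + α * q * (1 - μ) / ((n : ℝ) + 2) < p - q - γ

/-- Condition \eqref{def_mfc} on the structural constant `c₀`. -/
def c0Cond (S : Setting n N p q α L₁ L₂ aH) (u : Pt n → Vec N) (Du : Pt n → Mat N n)
    (Q2 : Set (Pt n)) (ρ θ μ γ c₀ : ℝ) : Prop :=
  1 < c₀ ∧
    Kconst S u Du Q2 ρ μ * (θ * c₀ / (2 * (1 + supA S))) ^ (-(γ / p))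
      ≤ 1 / (800 * (1 + aH))

/-- The cylinder `𝒬` of \eqref{def_Qi}: `p`-intrinsic or `(p,q)`-intrinsic by phase. -/
def QorG (S : Setting n N p q α L₁ L₂ aH) (z₀ : Pt n) (π r : ℝ) : Set (Pt n) :=
  if S.a z₀ * π ^ q ≤ π ^ p then Qp p z₀ π r else Gpq S.a p q z₀ π r

/-- Half-length `σ` of the time interval of `𝒬`. -/
def sigmaOf (S : Setting n N p q α L₁ L₂ aH) (z₀ : Pt n) (π r : ℝ) : ℝ :=
  if S.a z₀ * π ^ q ≤ π ^ p then π ^ (2 - p) * r ^ 2 else π ^ 2 / Hf S.a p q z₀ π * r ^ 2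

/-- `Π_{z₀}` of \eqref{def_Pizo}. -/
def PiZ (S : Setting n N p q α L₁ L₂ aH) (z₀ : Pt n) (π : ℝ) : ℝ :=
  if S.a z₀ * π ^ q ≤ π ^ p then Hf S.a p q z₀ π else π ^ p

/-- Upper level set `Ψ(Λ)` of `H(z,|∇u|)`. -/
def PsiSet (S : Setting n N p q α L₁ L₂ aH) (Du : Pt n → Mat N n) (Λ : ℝ) : Set (Pt n) :=
  {z ∈ cyl S.Ω S.T | Λ < HDu S Du z}

/-- Upper level set `Φ(Λ)` of `H(z,|F|)`. -/
def PhiSet (S : Setting n N p q α L₁ L₂ aH) (Λ : ℝ) : Set (Pt n) :=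
  {z ∈ cyl S.Ω S.T | Λ < HFf S z}

/-- `Π > c₀` for the structural constant `c₀` of the paper. -/
def PiBig (S : Setting n N p q α L₁ L₂ aH) (u : Pt n → Vec N) (Du : Pt n → Mat N n)
    (z₀ : Pt n) (π ρ : ℝ) : Prop :=
  ∃ θ μ γ c₀ : ℝ, θ ∈ Set.Ioo (0 : ℝ) 1 ∧ muCond n p q α μ ∧ gammaCond n p q α μ γ ∧
    c0Cond S u Du (QorG S z₀ π (4 * ρ)) ρ θ μ γ c₀ ∧ c₀ < Hf S.a p q z₀ π

/-- `u ∈ C(0,T; L²(Ω,ℝᴺ))`. -/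
def ContL2 (S : Setting n N p q α L₁ L₂ aH) (u : Pt n → Vec N) : Prop :=
  (∀ t ∈ Set.Ioo (0 : ℝ) S.T, IntegrableOn (fun x => vnorm (u (x, t)) ^ 2) S.Ω) ∧
  ∀ t₁ ∈ Set.Ioo (0 : ℝ) S.T, ∀ ε > (0 : ℝ), ∃ η > (0 : ℝ), ∀ t₂ ∈ Set.Ioo (0 : ℝ) S.T,
    |t₂ - t₁| < η → ∫ x in S.Ω, vnorm (u (x, t₂) - u (x, t₁)) ^ 2 < ε

/-- The Vitali covering cylinder `U(w)`: `Q^{π_w}_{2ρ_w}(w)` or `G^{π_w}_{2ρ_w}(w)` by phase. -/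
def Uw (S : Setting n N p q α L₁ L₂ aH) (w : Pt n) (πw ρw : ℝ) : Set (Pt n) :=
  if S.a w * πw ^ q ≤ πw ^ p then Qp p w πw (2 * ρw) else Gpq S.a p q w πw (2 * ρw)

end DoublePhase

open DoublePhase

/-!
On a cylinder `Q = B_s × I` of half-length `σ = λ^(2-p) s²`, the oscillation of `u` splits into a
spatial and a temporal part. Mollification and the smooth Poincaré inequality on almost every time
slice bound the spatial part by `s |∇u|`. For a cutoff function `η` of `B_s`, the equation
`∂ₜu = div V` bounds the oscillation in time of `∫ η u dx`, and hence the temporal part, by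
`s⁻¹ σ ⨍ |V| = s λ^(2-p) ⨍ |V|`.

With `K = H(·,|∇u|) + H(·,|F|)` the growth of `𝒜` gives `|V| ≲ K^((p-1)/p) + a K^((q-1)/p)`. Since
`θ ≥ (q-1)/p`, Jensen's inequality bounds both means by powers of `y = (⨍ K^θ)^(1/(θp))`. The
intrinsic level gives `y ≲ λ`, and the Hölder continuity of `a` together with `ρ^α ≤ π^(p-q)` gives
`a ≲ λ^(p-q)` on `Q`; hence `λ^(2-p) ⨍ |V| ≲ y`. The weight is then absorbed by
`(inf a) y^q ≲ λ^(p-q) y^q ≲ y^p`, and by `(inf a) |∇u|^q ≤ K` in the spatial part.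
-/

namespace DoublePhase

section PoincareSmooth

lemma rpow_lintegral_le_measure_univ_mul_lintegral_rpow {β : Type*} [MeasurableSpace β]
    (μ : Measure β) {r : ℝ} (hr : 1 ≤ r) {g : β → ℝ≥0∞} (hg : AEMeasurable g μ) :
    (∫⁻ x, g x ∂μ) ^ r ≤ μ univ ^ (r - 1) * ∫⁻ x, g x ^ r ∂μ := by
  have hr0 : 0 < r := one_pos.trans_le hr
  have key := eLpNorm'_le_eLpNorm'_mul_rpow_measure_univ one_pos hr hg.aestronglyMeasurable
  simp only [eLpNorm', enorm_eq_self, ENNReal.rpow_one, div_one] at key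
  calc (∫⁻ x, g x ∂μ) ^ r
      ≤ ((∫⁻ x, g x ^ r ∂μ) ^ (1 / r) * μ univ ^ (1 - 1 / r)) ^ r := by gcongr
    _ = μ univ ^ (r - 1) * ∫⁻ x, g x ^ r ∂μ := by
        rw [ENNReal.mul_rpow_of_nonneg _ _ hr0.le, ← ENNReal.rpow_mul, ← ENNReal.rpow_mul,
          one_div_mul_cancel hr0.ne', sub_mul, one_div_mul_cancel hr0.ne', one_mul,
          ENNReal.rpow_one, mul_comm]

variable {E F : Type*} [NormedAddCommGroup E] [NormedSpace ℝ E]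
  [NormedAddCommGroup F] [NormedSpace ℝ F]

lemma enorm_sub_rpow_le_lintegral_fderiv_segment [CompleteSpace F] {v : E → F}
    (hv : ContDiff ℝ 1 v) (x y : E) {r : ℝ} (hr : 1 ≤ r) :
    ‖v x - v y‖ₑ ^ r ≤ ‖x - y‖ₑ ^ r *
      ∫⁻ τ in Icc (0 : ℝ) 1, ‖fderiv ℝ v (y + τ • (x - y))‖ₑ ^ r := by
  have hr0 : 0 ≤ r := by linarith
  have hcont : Continuous fun τ : ℝ => fderiv ℝ v (y + τ • (x - y)) :=
    (hv.continuous_fderiv one_ne_zero).comp (by fun_prop)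
  have hderiv (τ : ℝ) : HasDerivAt (fun τ : ℝ => v (y + τ • (x - y)))
      (fderiv ℝ v (y + τ • (x - y)) (x - y)) τ := by
    have hline : HasDerivAt (fun τ : ℝ => y + τ • (x - y)) (x - y) τ := by
      simpa using ((hasDerivAt_id τ).smul_const (x - y)).const_add y
    exact (hv.differentiable one_ne_zero _).hasFDerivAt.comp_hasDerivAt τ hline
  have hftc := intervalIntegral.integral_eq_sub_of_hasDerivAt (a := 0) (b := 1)
    (fun τ _ => hderiv τ) ((hcont.clm_apply continuous_const).intervalIntegrable _ _)
  simp only [one_smul, zero_smul, add_zero, add_sub_cancel] at hftc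
  have hmeas : Measurable fun τ : ℝ => ‖fderiv ℝ v (y + τ • (x - y))‖ₑ := hcont.enorm.measurable
  have hfirst : ‖v x - v y‖ₑ ≤
      ‖x - y‖ₑ * ∫⁻ τ in Icc (0 : ℝ) 1, ‖fderiv ℝ v (y + τ • (x - y))‖ₑ := by
    rw [← hftc, intervalIntegral.integral_of_le zero_le_one, ← integral_Icc_eq_integral_Ioc,
      ← lintegral_const_mul _ hmeas]
    refine (enorm_integral_le_lintegral_enorm _).trans (lintegral_mono fun τ => ?_)
    exact (ContinuousLinearMap.le_opENorm _ _).trans_eq (mul_comm _ _)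
  refine (ENNReal.rpow_le_rpow hfirst hr0).trans ?_
  rw [ENNReal.mul_rpow_of_nonneg _ _ hr0]
  gcongr
  simpa using rpow_lintegral_le_measure_univ_mul_lintegral_rpow
    (volume.restrict (Icc (0 : ℝ) 1)) hr hmeas.aemeasurable

variable [MeasurableSpace E] [BorelSpace E] [FiniteDimensional ℝ E]
  (μ : Measure E) [μ.IsAddHaarMeasure]

lemma lintegral_comp_add_smul (c : E) {τ : ℝ} (hτ : τ ≠ 0) {G : E → ℝ≥0∞} (hG : Measurable G) :
    ∫⁻ x, G (c + τ • x) ∂μ =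
      ENNReal.ofReal |(τ ^ Module.finrank ℝ E)⁻¹| * ∫⁻ x, G x ∂μ := by
  rw [← lintegral_map (f := fun y => G (c + y)) (hG.comp (measurable_const_add c))
    (measurable_const_smul τ), Measure.map_addHaar_smul _ hτ, lintegral_smul_measure,
    lintegral_add_left_eq_self G c, smul_eq_mul]

lemma lintegral_comp_add_smul_le (c : E) {τ : ℝ} (hτ : 1 / 2 ≤ τ) {G : E → ℝ≥0∞}
    (hG : Measurable G) :
    ∫⁻ x, G (c + τ • x) ∂μ ≤ 2 ^ Module.finrank ℝ E * ∫⁻ x, G x ∂μ := by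
  have hτ0 : 0 < τ := by linarith
  rw [lintegral_comp_add_smul μ c hτ0.ne' hG, abs_of_pos (by positivity), ← inv_pow,
    ENNReal.ofReal_pow (by positivity)]
  gcongr
  rw [← ENNReal.ofReal_ofNat 2]
  exact ENNReal.ofReal_le_ofReal (by rw [inv_le_comm₀ hτ0 two_pos]; linarith)

/- At least one of `τ`, `1 - τ` is `≥ 1/2`; changing variables in the corresponding point costs
only the factor `2 ^ dim E`. -/
lemma lintegral_lintegral_comp_lineMap_le {G : E → ℝ≥0∞} (hG : Measurable G) (B : Set E) (τ : ℝ) :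
    ∫⁻ x in B, ∫⁻ y in B, G (y + τ • (x - y)) ∂μ ∂μ ≤
      2 ^ Module.finrank ℝ E * (μ B * ∫⁻ x, G x ∂μ) := by
  have hone {σ : ℝ} (hσ : 1 / 2 ≤ σ) (c : E) :
      ∫⁻ x in B, G (c + σ • x) ∂μ ≤ 2 ^ Module.finrank ℝ E * ∫⁻ x, G x ∂μ :=
    (setLIntegral_le_lintegral _ _).trans (lintegral_comp_add_smul_le μ c hσ hG)
  have hconst : ∫⁻ _x in B, (2 : ℝ≥0∞) ^ Module.finrank ℝ E * ∫⁻ x, G x ∂μ ∂μ =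
      2 ^ Module.finrank ℝ E * (μ B * ∫⁻ x, G x ∂μ) := by
    rw [setLIntegral_const]; ring
  rw [← hconst]
  rcases le_total (1 / 2) τ with hτ | hτ
  · rw [lintegral_lintegral_swap (f := fun x y : E => G (y + τ • (x - y)))
      (hG.comp (by fun_prop)).aemeasurable]
    refine lintegral_mono fun y => (lintegral_congr fun x => ?_).trans_le (hone hτ ((1 - τ) • y))
    congr 1; module
  · refine lintegral_mono fun x =>
      (lintegral_congr fun y => ?_).trans_le (hone (σ := 1 - τ) (by linarith) (τ • x))
    congr 1; module

lemma lintegral_lintegral_segment_le {G : E → ℝ≥0∞} (hG : Measurable G) (B : Set E) :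
    ∫⁻ x in B, ∫⁻ y in B, (∫⁻ τ in Icc (0 : ℝ) 1, G (y + τ • (x - y))) ∂μ ∂μ ≤
      2 ^ Module.finrank ℝ E * (μ B * ∫⁻ x, G x ∂μ) := by
  have hmeas : Measurable fun w : (E × E) × ℝ => G (w.1.2 + w.2 • (w.1.1 - w.1.2)) :=
    hG.comp (by fun_prop)
  calc ∫⁻ x in B, ∫⁻ y in B, (∫⁻ τ in Icc (0 : ℝ) 1, G (y + τ • (x - y))) ∂μ ∂μ
      = ∫⁻ w, (∫⁻ τ in Icc (0 : ℝ) 1, G (w.2 + τ • (w.1 - w.2)))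
          ∂((μ.restrict B).prod (μ.restrict B)) := by
        rw [lintegral_prod _ hmeas.lintegral_prod_right'.aemeasurable]
    _ = ∫⁻ τ in Icc (0 : ℝ) 1, ∫⁻ x in B, ∫⁻ y in B, G (y + τ • (x - y)) ∂μ ∂μ := by
        rw [lintegral_lintegral_swap (f := fun (w : E × E) (τ : ℝ) =>
          G (w.2 + τ • (w.1 - w.2))) hmeas.aemeasurable]
        exact lintegral_congr fun τ => lintegral_prod _ (hG.comp (by fun_prop)).aemeasurable
    _ ≤ ∫⁻ _τ in Icc (0 : ℝ) 1, 2 ^ Module.finrank ℝ E * (μ B * ∫⁻ x, G x ∂μ) :=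
        lintegral_mono fun τ => lintegral_lintegral_comp_lineMap_le μ hG B τ
    _ = 2 ^ Module.finrank ℝ E * (μ B * ∫⁻ x, G x ∂μ) := by simp

lemma lintegral_lintegral_enorm_sub_rpow_le_of_contDiff [CompleteSpace F] {v : E → F}
    (hv : ContDiff ℝ 1 v) {B : Set E} (hB : Convex ℝ B) (hBm : MeasurableSet B) {d : ℝ≥0∞}
    (hd : d ≠ ∞) (hdiam : ∀ x ∈ B, ∀ y ∈ B, ‖x - y‖ₑ ≤ d) {r : ℝ} (hr : 1 ≤ r) :
    ∫⁻ x in B, ∫⁻ y in B, ‖v x - v y‖ₑ ^ r ∂μ ∂μ ≤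
      d ^ r * (2 ^ Module.finrank ℝ E * (μ B * ∫⁻ x in B, ‖fderiv ℝ v x‖ₑ ^ r ∂μ)) := by
  have hr0 : 0 ≤ r := by linarith
  have hdr : d ^ r ≠ ∞ := ENNReal.rpow_ne_top_of_nonneg hr0 hd
  set G : E → ℝ≥0∞ := B.indicator fun x => ‖fderiv ℝ v x‖ₑ ^ r
  have hGm : Measurable G :=
    ((hv.continuous_fderiv one_ne_zero).enorm.measurable.pow_const r).indicator hBm
  have hpoint : ∀ x ∈ B, ∀ y ∈ B, ‖v x - v y‖ₑ ^ r ≤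
      d ^ r * ∫⁻ τ in Icc (0 : ℝ) 1, G (y + τ • (x - y)) := by
    intro x hx y hy
    refine (enorm_sub_rpow_le_lintegral_fderiv_segment hv x y hr).trans
      (mul_le_mul' (ENNReal.rpow_le_rpow (hdiam x hx y hy) hr0) ?_)
    refine setLIntegral_mono' measurableSet_Icc fun τ hτ => ?_
    simp only [G, indicator_of_mem (hB.add_smul_sub_mem hy hx hτ), le_refl]
  calc ∫⁻ x in B, ∫⁻ y in B, ‖v x - v y‖ₑ ^ r ∂μ ∂μ
      ≤ ∫⁻ x in B, ∫⁻ y in B, (d ^ r * ∫⁻ τ in Icc (0 : ℝ) 1, G (y + τ • (x - y))) ∂μ ∂μ :=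
        setLIntegral_mono' hBm fun x hx => setLIntegral_mono' hBm fun y hy => hpoint x hx y hy
    _ = d ^ r * ∫⁻ x in B, ∫⁻ y in B, (∫⁻ τ in Icc (0 : ℝ) 1, G (y + τ • (x - y))) ∂μ ∂μ := by
        simp only [lintegral_const_mul' _ _ hdr]
    _ ≤ d ^ r * (2 ^ Module.finrank ℝ E * (μ B * ∫⁻ x in B, ‖fderiv ℝ v x‖ₑ ^ r ∂μ)) := by
        rw [← lintegral_indicator hBm fun x => ‖fderiv ℝ v x‖ₑ ^ r]
        exact mul_le_mul_right (lintegral_lintegral_segment_le μ hGm B) _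

end PoincareSmooth

section Mollification

variable (E : Type*) [NormedAddCommGroup E]

/-- The bump functions of outer radius `1 / (k + 1)`, along which mollifications converge. -/
def shrinkingBump (k : ℕ) : ContDiffBump (0 : E) where
  rIn := 1 / (k + 1) / 2
  rOut := 1 / (k + 1)
  rIn_pos := by positivity
  rIn_lt_rOut := half_lt_self (by positivity)

lemma tendsto_rOut_shrinkingBump :
    Tendsto (fun k => (shrinkingBump E k).rOut) atTop (𝓝 0) :=
  tendsto_one_div_add_atTop_nhds_zero_nat

variable {E} [NormedSpace ℝ E] [FiniteDimensional ℝ E] [MeasurableSpace E] (μ : Measure E)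

/-- `g` is the derivative of `f` in the direction `e` on `Q` in the sense of distributions: the
integration by parts formula holds for all smooth test functions compactly supported in `Q`. -/
def HasWeakDirDerivOn (f g : E → ℝ) (e : E) (Q : Set E) : Prop :=
  ∀ ψ : E → ℝ, ContDiff ℝ (⊤ : ℕ∞) ψ → HasCompactSupport ψ → tsupport ψ ⊆ Q →
    ∫ z in Q, f z * fderiv ℝ ψ z e ∂μ = -∫ z in Q, g z * ψ z ∂μ

/-- Mollification of a real function by the normalised bump function `κ`. -/
def mollify (κ : ContDiffBump (0 : E)) (F : E → ℝ) (z : E) : ℝ :=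
  ∫ w, F w * κ.normed μ (z - w) ∂μ

/-- Mollification of a function with values in `ℝ≥0∞`, by a Lebesgue integral. -/
def lmollify (κ : ContDiffBump (0 : E)) (G : E → ℝ≥0∞) (z : E) : ℝ≥0∞ :=
  ∫⁻ w, ENNReal.ofReal (κ.normed μ (z - w)) * G w ∂μ

variable (κ : ContDiffBump (0 : E)) {μ}

lemma mollify_eq_convolution (F : E → ℝ) :
    mollify μ κ F = convolution F (κ.normed μ) (ContinuousLinearMap.lsmul ℝ ℝ) μ := by
  ext z; simp only [mollify, convolution, ContinuousLinearMap.lsmul_apply, smul_eq_mul]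

lemma enorm_mollify_le_lmollify (F : E → ℝ) (z : E) :
    ‖mollify μ κ F z‖ₑ ≤ lmollify μ κ (fun w => ‖F w‖ₑ) z := by
  refine (enorm_integral_le_lintegral_enorm _).trans_eq (lintegral_congr fun w => ?_)
  rw [enorm_mul, mul_comm, Real.enorm_of_nonneg (κ.nonneg_normed _)]

lemma fderiv_normed_sub_apply (z w e : E) :
    fderiv ℝ (fun w => κ.normed μ (z - w)) w e = -fderiv ℝ (κ.normed μ) (z - w) e := by
  have hdiff : DifferentiableAt ℝ (κ.normed μ) (z - w) :=
    (κ.contDiff_normed (n := 1)).differentiable one_ne_zero _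
  have hcomp : HasFDerivAt (fun w => κ.normed μ (z - w)) _ w :=
    hdiff.hasFDerivAt.comp w ((hasFDerivAt_id w).const_sub z)
  simp [hcomp.fderiv]

variable [BorelSpace E]

lemma measurable_ofReal_normed : Measurable fun w => ENNReal.ofReal (κ.normed μ w) :=
  κ.continuous_normed.measurable.ennreal_ofReal

lemma measurable_uncurry_lmollify_kernel {G : E → ℝ≥0∞} (hG : Measurable G) :
    Measurable fun p : E × E => ENNReal.ofReal (κ.normed μ (p.1 - p.2)) * G p.2 :=
  ((measurable_ofReal_normed κ).comp measurable_sub).mul (hG.comp measurable_snd)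

variable [μ.IsAddHaarMeasure]

lemma measurable_lmollify {G : E → ℝ≥0∞} (hG : Measurable G) : Measurable (lmollify μ κ G) :=
  (measurable_uncurry_lmollify_kernel κ hG).lintegral_prod_right'

lemma ae_tendsto_mollify_shrinkingBump {F : E → ℝ} (hF : LocallyIntegrable F μ) :
    ∀ᵐ z ∂μ, Tendsto (fun k => mollify μ (shrinkingBump E k) F z) atTop (𝓝 (F z)) := by
  have hflip (k : ℕ) : mollify μ (shrinkingBump E k) F =
      convolution ((shrinkingBump E k).normed μ) F (ContinuousLinearMap.lsmul ℝ ℝ) μ := by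
    rw [mollify_eq_convolution, ← convolution_flip]
    congr 1
    ext; simp
  have hratio (k : ℕ) : (shrinkingBump E k).rOut ≤ 2 * (shrinkingBump E k).rIn :=
    (mul_div_cancel₀ _ two_ne_zero).ge
  simp only [hflip]
  exact ContDiffBump.ae_convolution_tendsto_right_of_locallyIntegrable
    (tendsto_rOut_shrinkingBump E) (Eventually.of_forall hratio) hF

lemma contDiff_mollify {F : E → ℝ} (hF : LocallyIntegrable F μ) {m : ℕ∞} :
    ContDiff ℝ m (mollify μ κ F) := by
  rw [mollify_eq_convolution]
  exact κ.hasCompactSupport_normed.contDiff_convolution_right _ hF κ.contDiff_normed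

lemma fderiv_mollify_apply {F : E → ℝ} (hF : LocallyIntegrable F μ) (z e : E) :
    fderiv ℝ (mollify μ κ F) z e = ∫ w, F w * fderiv ℝ (κ.normed μ) (z - w) e ∂μ := by
  have hκ : ContDiff ℝ 1 (κ.normed μ) := κ.contDiff_normed (n := 1)
  rw [mollify_eq_convolution, (κ.hasCompactSupport_normed.hasFDerivAt_convolution_right
    (ContinuousLinearMap.lsmul ℝ ℝ) hF hκ z).fderiv,
    convolution_precompR_apply (ContinuousLinearMap.lsmul ℝ ℝ) hF
    (κ.hasCompactSupport_normed.fderiv ℝ) (hκ.continuous_fderiv one_ne_zero)]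
  simp only [convolution, ContinuousLinearMap.lsmul_apply, smul_eq_mul]

lemma tsupport_normed_sub_subset (z : E) :
    tsupport (fun w => κ.normed μ (z - w)) ⊆ closedBall z κ.rOut := by
  refine closure_minimal (fun w hw => ?_) isClosed_closedBall
  have hmem : z - w ∈ Function.support (κ.normed μ) := hw
  rw [κ.support_normed_eq, mem_ball, dist_zero_right] at hmem
  rw [mem_closedBall, dist_comm, dist_eq_norm]
  exact hmem.le

lemma integral_indicator_mul {X : Type*} [MeasurableSpace X] {ν : Measure X} {Q : Set X}
    (hQ : MeasurableSet Q) (h k : X → ℝ) :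
    ∫ w, Q.indicator h w * k w ∂ν = ∫ w in Q, h w * k w ∂ν := by
  simp only [← integral_indicator hQ, ← indicator_mul_left]

lemma fderiv_mollify_indicator_eq_mollify {Q : Set E} (hQ : MeasurableSet Q) {f g : E → ℝ} {e : E}
    (hf : IntegrableOn f Q μ) (hfg : HasWeakDirDerivOn μ f g e Q) {z : E}
    (hz : closedBall z κ.rOut ⊆ Q) :
    fderiv ℝ (mollify μ κ (Q.indicator f)) z e = mollify μ κ (Q.indicator g) z := by
  have hsupp := tsupport_normed_sub_subset (μ := μ) κ z
  have hparts := hfg (fun w => κ.normed μ (z - w))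
    (κ.contDiff_normed.comp (contDiff_const.sub contDiff_id))
    ((isCompact_closedBall z κ.rOut).of_isClosed_subset (isClosed_tsupport _) hsupp)
    (hsupp.trans hz)
  simp only [fderiv_normed_sub_apply, mul_neg, integral_neg, neg_inj] at hparts
  rw [fderiv_mollify_apply κ ((integrable_indicator_iff hQ).2 hf).locallyIntegrable, mollify,
    integral_indicator_mul hQ, integral_indicator_mul hQ, hparts]

lemma lintegral_ofReal_normed : ∫⁻ w, ENNReal.ofReal (κ.normed μ w) ∂μ = 1 := by
  rw [← ofReal_integral_eq_lintegral_ofReal κ.integrable_normed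
    (ae_of_all _ fun _ => κ.nonneg_normed _), κ.integral_normed, ENNReal.ofReal_one]

lemma lmollify_rpow_le {r : ℝ} (hr : 1 ≤ r) {G : E → ℝ≥0∞} (hG : Measurable G) (z : E) :
    lmollify μ κ G z ^ r ≤ lmollify μ κ (fun w => G w ^ r) z := by
  set k : E → ℝ≥0∞ := fun w => ENNReal.ofReal (κ.normed μ (z - w))
  have hk : Measurable k := (measurable_ofReal_normed κ).comp (measurable_const_sub z)
  have hmass : μ.withDensity k univ = 1 := by
    rw [withDensity_apply _ MeasurableSet.univ, Measure.restrict_univ,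
      lintegral_sub_left_eq_self (fun w => ENNReal.ofReal (κ.normed μ w)) z,
      lintegral_ofReal_normed]
  have hdensity {G' : E → ℝ≥0∞} (hG' : Measurable G') :
      lmollify μ κ G' z = ∫⁻ w, G' w ∂μ.withDensity k :=
    (lintegral_withDensity_eq_lintegral_mul _ hk hG').symm
  rw [hdensity hG, hdensity (hG.pow_const r)]
  simpa [hmass] using
    rpow_lintegral_le_measure_univ_mul_lintegral_rpow (μ.withDensity k) hr hG.aemeasurable

lemma lintegral_lmollify {G : E → ℝ≥0∞} (hG : Measurable G) :
    ∫⁻ z, lmollify μ κ G z ∂μ = ∫⁻ w, G w ∂μ := by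
  simp only [lmollify]
  rw [lintegral_lintegral_swap (measurable_uncurry_lmollify_kernel κ hG).aemeasurable]
  refine lintegral_congr fun w => ?_
  have hk : Measurable fun z => ENNReal.ofReal (κ.normed μ (z - w)) :=
    (measurable_ofReal_normed κ).comp (measurable_sub_const w)
  rw [lintegral_mul_const _ hk,
    lintegral_sub_right_eq_self (fun z => ENNReal.ofReal (κ.normed μ z)) w,
    lintegral_ofReal_normed, one_mul]

end Mollification

section SlicePoincare

instance isAddHaarMeasure_volume_pt (n : ℕ) : (volume : Measure (Pt n)).IsAddHaarMeasure :=
  inferInstanceAs (((volume : Measure (Spc n)).prod (volume : Measure ℝ)).IsAddHaarMeasure)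

/-- `g j` is the weak derivative of `f` in the `j`-th spatial direction on `Q`, for each `j`. -/
def HasWeakSpatialGradOn {n : ℕ} (f : Pt n → ℝ) (g : Pt n → Fin n → ℝ) (Q : Set (Pt n)) : Prop :=
  ∀ j, HasWeakDirDerivOn volume f (fun z => g z j) (EuclideanSpace.single j 1, 0) Q

lemma measurableSet_Qrs {n : ℕ} (z₀ : Pt n) (s σ : ℝ) : MeasurableSet (Qrs z₀ s σ) :=
  measurableSet_ball.prod measurableSet_Ioo

lemma closedBall_subset_Qrs {n : ℕ} {z₀ z : Pt n} {s σ ε : ℝ}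
    (hz : z ∈ Qrs z₀ (s - ε) (σ - ε)) : closedBall z ε ⊆ Qrs z₀ s σ := by
  rintro w hw
  obtain ⟨hzx, hzt⟩ := hz
  rw [← closedBall_prod_same, Set.mem_prod, mem_closedBall, mem_closedBall, Real.dist_eq,
    abs_le] at hw
  rw [mem_ball] at hzx
  refine ⟨?_, ?_, ?_⟩
  · rw [mem_ball]
    linarith [dist_triangle w.1 z.1 z₀.1]
  · linarith [hzt.1]
  · linarith [hzt.2]

lemma enorm_clm_le_sum_enorm_single {ι F : Type*} [Fintype ι] [DecidableEq ι]
    [NormedAddCommGroup F] [NormedSpace ℝ F] (L : EuclideanSpace ℝ ι →L[ℝ] F) :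
    ‖L‖ₑ ≤ ∑ j, ‖L (EuclideanSpace.single j 1)‖ₑ := by
  have hreal : ‖L‖ ≤ ∑ j, ‖L (EuclideanSpace.single j 1)‖ := by
    refine L.opNorm_le_bound (by positivity) fun x => ?_
    have hx : x = ∑ j, x j • EuclideanSpace.single j (1 : ℝ) := by
      ext i; simp [Pi.single_apply]
    conv_lhs => rw [hx]
    rw [map_sum, Finset.sum_mul]
    refine (norm_sum_le _ _).trans (Finset.sum_le_sum fun j _ => ?_)
    rw [map_smul, norm_smul, mul_comm]
    exact mul_le_mul_of_nonneg_left (PiLp.norm_apply_le x j) (norm_nonneg _)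
  rw [← ofReal_norm]
  refine (ENNReal.ofReal_le_ofReal hreal).trans_eq ?_
  simp only [ENNReal.ofReal_sum_of_nonneg fun _ _ => norm_nonneg _, ofReal_norm]

variable {n : ℕ} {f : Pt n → ℝ} {g : Pt n → Fin n → ℝ} {D : Pt n → ℝ≥0∞} {r : ℝ}

lemma fderiv_slice_mollify_indicator_apply (κ : ContDiffBump (0 : Pt n)) {Q : Set (Pt n)}
    (hQ : MeasurableSet Q) (hf : IntegrableOn f Q) (hfg : HasWeakSpatialGradOn f g Q)
    {x : Spc n} {t : ℝ} (hz : closedBall (x, t) κ.rOut ⊆ Q) (j : Fin n) :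
    fderiv ℝ (fun y => mollify volume κ (Q.indicator f) (y, t)) x (EuclideanSpace.single j 1) =
      mollify volume κ (Q.indicator fun w => g w j) (x, t) := by
  have hdiff : DifferentiableAt ℝ (mollify volume κ (Q.indicator f)) (x, t) :=
    (contDiff_mollify κ ((integrable_indicator_iff hQ).2 hf).locallyIntegrable
      (m := 1)).differentiable one_ne_zero _
  have hcomp := HasFDerivAt.comp (f := fun y => (y, t)) x hdiff.hasFDerivAt
    (hasFDerivAt_prodMk_left x t)
  rw [← fderiv_mollify_indicator_eq_mollify κ hQ hf (hfg j) hz]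
  exact (DFunLike.congr_fun hcomp.fderiv _).trans (by simp)

lemma enorm_fderiv_slice_mollify_rpow_le (κ : ContDiffBump (0 : Pt n)) {Q : Set (Pt n)}
    (hQ : MeasurableSet Q) (hf : IntegrableOn f Q) (hfg : HasWeakSpatialGradOn f g Q)
    (hD : Measurable D) (hgD : ∀ z j, ‖g z j‖ₑ ≤ D z) {x : Spc n} {t : ℝ}
    (hz : closedBall (x, t) κ.rOut ⊆ Q) (hr : 1 ≤ r) :
    ‖fderiv ℝ (fun y => mollify volume κ (Q.indicator f) (y, t)) x‖ₑ ^ r ≤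
      (n : ℝ≥0∞) ^ r * lmollify volume κ (Q.indicator fun w => D w ^ r) (x, t) := by
  have hr0 : 0 < r := by linarith
  have hpartial (j : Fin n) :
      ‖mollify volume κ (Q.indicator fun w => g w j) (x, t)‖ₑ ≤
        lmollify volume κ (Q.indicator D) (x, t) := by
    refine (enorm_mollify_le_lmollify κ _ _).trans (lintegral_mono fun w => ?_)
    dsimp only
    gcongr
    rw [enorm_indicator_eq_indicator_enorm]
    exact indicator_le_indicator (hgD w j)
  calc ‖fderiv ℝ (fun y => mollify volume κ (Q.indicator f) (y, t)) x‖ₑ ^ r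
      ≤ (∑ _j : Fin n, lmollify volume κ (Q.indicator D) (x, t)) ^ r := by
        gcongr
        refine (enorm_clm_le_sum_enorm_single _).trans (Finset.sum_le_sum fun j _ => ?_)
        rw [fderiv_slice_mollify_indicator_apply κ hQ hf hfg hz]
        exact hpartial j
    _ = (n : ℝ≥0∞) ^ r * lmollify volume κ (Q.indicator D) (x, t) ^ r := by
        simp [ENNReal.mul_rpow_of_nonneg _ _ hr0.le]
    _ ≤ (n : ℝ≥0∞) ^ r * lmollify volume κ (Q.indicator fun w => D w ^ r) (x, t) := by
        gcongr
        refine (lmollify_rpow_le κ hr (hD.indicator hQ) _).trans_eq ?_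
        congr 1; ext w
        by_cases hw : w ∈ Q <;> simp [hw, hr0]

lemma lintegral_slice_enorm_sub_mollify_rpow_le (κ : ContDiffBump (0 : Pt n)) {z₀ : Pt n}
    {s σ : ℝ} (hf : IntegrableOn f (Qrs z₀ s σ)) (hfg : HasWeakSpatialGradOn f g (Qrs z₀ s σ))
    (hD : Measurable D) (hgD : ∀ z j, ‖g z j‖ₑ ≤ D z) (hr : 1 ≤ r) {t : ℝ}
    (ht : t ∈ Ioo (z₀.2 - (σ - κ.rOut)) (z₀.2 + (σ - κ.rOut))) :
    let v := mollify volume κ ((Qrs z₀ s σ).indicator f)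
    ∫⁻ x in ball z₀.1 (s - κ.rOut), ∫⁻ y in ball z₀.1 (s - κ.rOut), ‖v (x, t) - v (y, t)‖ₑ ^ r ≤
      ENNReal.ofReal (2 * s) ^ r * (2 ^ n * (volume (ball z₀.1 s) * ((n : ℝ≥0∞) ^ r *
        ∫⁻ x, lmollify volume κ ((Qrs z₀ s σ).indicator fun w => D w ^ r) (x, t)))) := by
  intro v
  have hQ := measurableSet_Qrs z₀ s σ
  have hε : 0 < κ.rOut := κ.rOut_pos
  have hv : ContDiff ℝ 1 v :=
    contDiff_mollify κ ((integrable_indicator_iff hQ).2 hf).locallyIntegrable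
  have hvt : ContDiff ℝ 1 fun x => v (x, t) := hv.comp (contDiff_id.prodMk contDiff_const)
  have hdiam : ∀ x ∈ ball z₀.1 (s - κ.rOut), ∀ y ∈ ball z₀.1 (s - κ.rOut),
      ‖x - y‖ₑ ≤ ENNReal.ofReal (2 * s) := fun x hx y hy => by
    rw [← ofReal_norm, ← dist_eq_norm]
    refine ENNReal.ofReal_le_ofReal ?_
    linarith [dist_triangle_right x y z₀.1, mem_ball.1 hx, mem_ball.1 hy]
  have hnr : (n : ℝ≥0∞) ^ r ≠ ∞ :=
    ENNReal.rpow_ne_top_of_nonneg (by linarith) (ENNReal.natCast_ne_top n)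
  refine (lintegral_lintegral_enorm_sub_rpow_le_of_contDiff volume hvt (convex_ball _ _)
    measurableSet_ball ENNReal.ofReal_ne_top hdiam hr).trans ?_
  rw [finrank_euclideanSpace_fin, ← lintegral_const_mul' _ _ hnr]
  gcongr _ * (_ * (volume (ball _ ?_) * ?_))
  · linarith
  refine (setLIntegral_mono' measurableSet_ball fun x hx => ?_).trans
    (setLIntegral_le_lintegral _ _)
  exact enorm_fderiv_slice_mollify_rpow_le κ hQ hf hfg hD hgD (closedBall_subset_Qrs ⟨hx, ht⟩) hr

lemma lintegral_enorm_sub_mollify_rpow_le (κ : ContDiffBump (0 : Pt n)) {z₀ : Pt n}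
    {s σ : ℝ} (hf : IntegrableOn f (Qrs z₀ s σ)) (hfg : HasWeakSpatialGradOn f g (Qrs z₀ s σ))
    (hD : Measurable D) (hgD : ∀ z j, ‖g z j‖ₑ ≤ D z) (hr : 1 ≤ r) :
    let v := mollify volume κ ((Qrs z₀ s σ).indicator f)
    ∫⁻ t in Ioo (z₀.2 - (σ - κ.rOut)) (z₀.2 + (σ - κ.rOut)),
      ∫⁻ x in ball z₀.1 (s - κ.rOut), ∫⁻ y in ball z₀.1 (s - κ.rOut),
        ‖v (x, t) - v (y, t)‖ₑ ^ r ≤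
    ENNReal.ofReal (2 * s) ^ r * (2 ^ n * (volume (ball z₀.1 s) *
      ((n : ℝ≥0∞) ^ r * ∫⁻ w in Qrs z₀ s σ, D w ^ r))) := by
  intro _
  have hr0 : 0 ≤ r := by linarith
  have hQ := measurableSet_Qrs z₀ s σ
  have hnr : (n : ℝ≥0∞) ^ r ≠ ∞ := ENNReal.rpow_ne_top_of_nonneg hr0 (ENNReal.natCast_ne_top n)
  have hsr : ENNReal.ofReal (2 * s) ^ r ≠ ∞ :=
    ENNReal.rpow_ne_top_of_nonneg hr0 ENNReal.ofReal_ne_top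
  set G : Pt n → ℝ≥0∞ := (Qrs z₀ s σ).indicator fun w => D w ^ r
  have hG : Measurable G := (hD.pow_const r).indicator hQ
  have hfubini : ∫⁻ t, ∫⁻ x, lmollify volume κ G (x, t) = ∫⁻ w in Qrs z₀ s σ, D w ^ r := by
    rw [← lintegral_indicator hQ, ← lintegral_lmollify κ hG]
    exact (lintegral_prod_symm _ (measurable_lmollify κ hG).aemeasurable).symm
  refine (setLIntegral_mono' measurableSet_Ioo fun t ht =>
    lintegral_slice_enorm_sub_mollify_rpow_le κ hf hfg hD hgD hr ht).trans
    ((setLIntegral_le_lintegral _ _).trans_eq ?_)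
  rw [lintegral_const_mul' _ _ hsr, lintegral_const_mul' _ _ (by simp),
    lintegral_const_mul' _ _ measure_ball_lt_top.ne, lintegral_const_mul' _ _ hnr, hfubini]

lemma setLIntegral_prod_prod {X Y : Type*} [MeasureSpace X] [MeasureSpace Y]
    [SFinite (volume : Measure X)] [SFinite (volume : Measure Y)]
    (I : Set X) (B : Set Y) {F : X × Y × Y → ℝ≥0∞} (hF : Measurable F) :
    ∫⁻ w in I ×ˢ B ×ˢ B, F w = ∫⁻ t in I, ∫⁻ x in B, ∫⁻ y in B, F (t, x, y) := by
  rw [Measure.volume_eq_prod, Measure.volume_eq_prod, ← Measure.prod_restrict,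
    ← Measure.prod_restrict, lintegral_prod _ hF.aemeasurable]
  exact lintegral_congr fun t =>
    lintegral_prod (fun y => F (t, y)) (hF.comp measurable_prodMk_left).aemeasurable

lemma ae_prod_prod_of_ae_pt {P : Pt n → Prop} (hP : ∀ᵐ z, P z) :
    ∀ᵐ w : ℝ × Spc n × Spc n, P (w.2.1, w.1) ∧ P (w.2.2, w.1) := by
  have hswap : Measure.QuasiMeasurePreserving (Prod.swap : ℝ × Spc n → Pt n) volume volume :=
    Measure.measurePreserving_swap.quasiMeasurePreserving
  have hid := Measure.QuasiMeasurePreserving.id (volume : Measure ℝ)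
  have hfst : Measure.QuasiMeasurePreserving (Prod.map id Prod.fst : ℝ × Spc n × Spc n → _)
      volume volume := QuasiMeasurePreserving.prodMap hid Measure.quasiMeasurePreserving_fst
  have hsnd : Measure.QuasiMeasurePreserving (Prod.map id Prod.snd : ℝ × Spc n × Spc n → _)
      volume volume := QuasiMeasurePreserving.prodMap hid Measure.quasiMeasurePreserving_snd
  filter_upwards [(hswap.comp hfst).ae hP, (hswap.comp hsnd).ae hP] with w h₁ h₂
  exact ⟨h₁, h₂⟩

lemma eventually_mem_Qrs_sub {z₀ z : Pt n} {s σ : ℝ} (hz : z ∈ Qrs z₀ s σ) {ε : ℕ → ℝ}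
    (hε : Tendsto ε atTop (𝓝 0)) : ∀ᶠ k in atTop, z ∈ Qrs z₀ (s - ε k) (σ - ε k) := by
  obtain ⟨hx, ht⟩ := hz
  rw [mem_ball] at hx
  filter_upwards [hε.eventually_lt_const (show 0 < s - dist z.1 z₀.1 by linarith),
    hε.eventually_lt_const (show 0 < z.2 - (z₀.2 - σ) by linarith [ht.1]),
    hε.eventually_lt_const (show 0 < z₀.2 + σ - z.2 by linarith [ht.2])] with k hk₁ hk₂ hk₃
  refine ⟨?_, ?_, ?_⟩
  · rw [mem_ball]; linarith
  · linarith
  · linarith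

lemma setLIntegral_le_of_ae_tendsto_of_eventually_mem {X : Type*} [MeasurableSpace X]
    {μ : Measure X} {A : Set X} {A' : ℕ → Set X} (hA : MeasurableSet A)
    (hA' : ∀ k, MeasurableSet (A' k)) (hmem : ∀ w ∈ A, ∀ᶠ k in atTop, w ∈ A' k)
    {h : X → ℝ≥0∞} {h' : ℕ → X → ℝ≥0∞} (hm : ∀ k, Measurable (h' k))
    (hlim : ∀ᵐ w ∂μ, w ∈ A → Tendsto (fun k => h' k w) atTop (𝓝 (h w)))
    {C : ℝ≥0∞} (hC : ∀ k, ∫⁻ w in A' k, h' k w ∂μ ≤ C) :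
    ∫⁻ w in A, h w ∂μ ≤ C := by
  have hle : ∀ᵐ w ∂μ, A.indicator h w ≤ liminf (fun k => (A' k).indicator (h' k) w) atTop := by
    filter_upwards [hlim] with w hw
    by_cases hwA : w ∈ A
    · rw [indicator_of_mem hwA]
      refine ((hw hwA).congr' ?_).liminf_eq.ge
      exact (hmem w hwA).mono fun k hk => (indicator_of_mem hk _).symm
    · simp [hwA]
  calc ∫⁻ w in A, h w ∂μ = ∫⁻ w, A.indicator h w ∂μ := (lintegral_indicator hA h).symm
    _ ≤ ∫⁻ w, liminf (fun k => (A' k).indicator (h' k) w) atTop ∂μ := lintegral_mono_ae hle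
    _ ≤ liminf (fun k => ∫⁻ w, (A' k).indicator (h' k) w ∂μ) atTop :=
        lintegral_liminf_le fun k => (hm k).indicator (hA' k)
    _ ≤ C := liminf_le_of_frequently_le' <| Frequently.of_forall fun k =>
        (lintegral_indicator (hA' k) (h' k)).trans_le (hC k)

lemma lintegral_slice_enorm_sub_rpow_le {z₀ : Pt n} {s σ : ℝ} (hfm : Measurable f)
    (hf : IntegrableOn f (Qrs z₀ s σ)) (hfg : HasWeakSpatialGradOn f g (Qrs z₀ s σ))
    (hD : Measurable D) (hgD : ∀ z j, ‖g z j‖ₑ ≤ D z) (hr : 1 ≤ r) :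
    ∫⁻ t in Ioo (z₀.2 - σ) (z₀.2 + σ), ∫⁻ x in ball z₀.1 s, ∫⁻ y in ball z₀.1 s,
      ‖f (x, t) - f (y, t)‖ₑ ^ r ≤
    ENNReal.ofReal (2 * s) ^ r * (2 ^ n * (volume (ball z₀.1 s) *
      ((n : ℝ≥0∞) ^ r * ∫⁻ w in Qrs z₀ s σ, D w ^ r))) := by
  set Q := Qrs z₀ s σ
  have hFi : LocallyIntegrable (Q.indicator f) :=
    ((integrable_indicator_iff (measurableSet_Qrs z₀ s σ)).2 hf).locallyIntegrable
  let ε : ℕ → ℝ := fun k => (shrinkingBump (Pt n) k).rOut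
  let v : ℕ → Pt n → ℝ := fun k => mollify volume (shrinkingBump (Pt n) k) (Q.indicator f)
  let diff (u : Pt n → ℝ) : ℝ × Spc n × Spc n → ℝ≥0∞ :=
    fun w => ‖u (w.2.1, w.1) - u (w.2.2, w.1)‖ₑ ^ r
  let box (δ : ℝ) : Set (ℝ × Spc n × Spc n) :=
    Ioo (z₀.2 - (σ - δ)) (z₀.2 + (σ - δ)) ×ˢ ball z₀.1 (s - δ) ×ˢ ball z₀.1 (s - δ)
  have hbox (δ : ℝ) : MeasurableSet (box δ) :=
    measurableSet_Ioo.prod (measurableSet_ball.prod measurableSet_ball)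
  have hmem_box {δ : ℝ} {w : ℝ × Spc n × Spc n} : w ∈ box δ ↔
      (w.2.1, w.1) ∈ Qrs z₀ (s - δ) (σ - δ) ∧ (w.2.2, w.1) ∈ Qrs z₀ (s - δ) (σ - δ) :=
    ⟨fun h => ⟨⟨h.2.1, h.1⟩, h.2.2, h.1⟩, fun h => ⟨h.1.2, h.1.1, h.2.1⟩⟩
  have hmem_box_zero {w : ℝ × Spc n × Spc n} (hw : w ∈ box 0) :
      (w.2.1, w.1) ∈ Q ∧ (w.2.2, w.1) ∈ Q := by
    simpa only [sub_zero] using hmem_box.1 hw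
  have hdiff {u : Pt n → ℝ} (hu : Measurable u) : Measurable (diff u) :=
    ((hu.comp (by fun_prop)).sub (hu.comp (by fun_prop))).enorm.pow_const r
  have hvm (k : ℕ) : Measurable (v k) :=
    (contDiff_mollify (m := 0) (shrinkingBump (Pt n) k) hFi).continuous.measurable
  have hε : Tendsto ε atTop (𝓝 0) := tendsto_rOut_shrinkingBump (Pt n)
  have hlim : ∀ᵐ w, w ∈ box 0 → Tendsto (fun k => diff (v k) w) atTop (𝓝 (diff f w)) := by
    filter_upwards [ae_prod_prod_of_ae_pt (ae_tendsto_mollify_shrinkingBump hFi)] with w hw hwbox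
    obtain ⟨hx, hy⟩ := hmem_box_zero hwbox
    rw [indicator_of_mem hx, indicator_of_mem hy] at hw
    exact (ENNReal.continuous_rpow_const.tendsto _).comp (hw.1.sub hw.2).enorm
  have hfatou := setLIntegral_le_of_ae_tendsto_of_eventually_mem (hbox 0) (fun k => hbox (ε k))
    (fun w hw => ((eventually_mem_Qrs_sub (hmem_box_zero hw).1 hε).and
      (eventually_mem_Qrs_sub (hmem_box_zero hw).2 hε)).mono fun _ => hmem_box.2)
    (fun k => hdiff (hvm k)) hlim fun k => by
      rw [setLIntegral_prod_prod _ _ (hdiff (hvm k))]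
      exact lintegral_enorm_sub_mollify_rpow_le (shrinkingBump (Pt n) k) hf hfg hD hgD hr
  rw [setLIntegral_prod_prod _ _ (hdiff hfm)] at hfatou
  simpa only [sub_zero] using hfatou

end SlicePoincare

section WeakDerivativeReal

/-- The smooth step from `0` to `1` whose derivative is the normalised bump `κ` centred at `t`. -/
def bumpStep (κ : ContDiffBump (0 : ℝ)) (t x : ℝ) : ℝ :=
  ∫ w in (t - κ.rOut)..x, κ.normed volume (t - w)

variable (κ : ContDiffBump (0 : ℝ)) (t : ℝ)

lemma contDiff_normed_sub {m : ℕ∞} : ContDiff ℝ m fun w => κ.normed volume (t - w) :=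
  κ.contDiff_normed.comp (contDiff_const.sub contDiff_id)

lemma normed_sub_eq_zero {w : ℝ} (hw : κ.rOut ≤ |t - w|) : κ.normed volume (t - w) = 0 := by
  rw [← Function.notMem_support, κ.support_normed_eq, mem_ball_zero_iff, Real.norm_eq_abs, not_lt]
  exact hw

lemma hasDerivAt_bumpStep (x : ℝ) :
    HasDerivAt (bumpStep κ t) (κ.normed volume (t - x)) x :=
  have hcont := (contDiff_normed_sub κ t (m := 0)).continuous
  intervalIntegral.integral_hasDerivAt_right (hcont.intervalIntegrable _ _)
    hcont.stronglyMeasurable.stronglyMeasurableAtFilter hcont.continuousAt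

lemma contDiff_bumpStep : ContDiff ℝ (⊤ : ℕ∞) (bumpStep κ t) := by
  refine contDiff_infty_iff_deriv.2 ⟨fun x => (hasDerivAt_bumpStep κ t x).differentiableAt, ?_⟩
  rw [funext fun x => (hasDerivAt_bumpStep κ t x).deriv]
  exact contDiff_normed_sub κ t

variable {x : ℝ}

lemma bumpStep_eq_zero (hx : x ≤ t - κ.rOut) : bumpStep κ t x = 0 := by
  refine intervalIntegral.integral_zero_ae (ae_of_all _ fun w hw => normed_sub_eq_zero κ t ?_)
  rw [uIoc_of_ge hx, mem_Ioc] at hw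
  exact le_abs.2 (Or.inl (by linarith))

lemma integral_normed_sub : ∫ w, κ.normed volume (t - w) = 1 := by
  rw [integral_sub_left_eq_self (fun w => κ.normed volume w) volume t, κ.integral_normed]

lemma bumpStep_eq_one (hx : t + κ.rOut ≤ x) : bumpStep κ t x = 1 := by
  have hκ := κ.rOut_pos
  rw [bumpStep, intervalIntegral.integral_of_le (by linarith), ← integral_normed_sub κ t]
  refine setIntegral_eq_integral_of_forall_compl_eq_zero fun w hw => normed_sub_eq_zero κ t ?_
  rw [mem_Ioc, not_and_or, not_lt, not_le] at hw
  rcases hw with hw | hw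
  · exact le_abs.2 (Or.inl (by linarith))
  · exact le_abs.2 (Or.inr (by linarith))

lemma bumpStep_mem_Icc : bumpStep κ t x ∈ Icc (0 : ℝ) 1 := by
  rcases le_total x (t - κ.rOut) with hx | hx
  · simp [bumpStep_eq_zero κ t hx]
  · rw [bumpStep, intervalIntegral.integral_of_le hx]
    refine ⟨integral_nonneg fun w => κ.nonneg_normed _, ?_⟩
    rw [← integral_normed_sub κ t]
    exact setIntegral_le_integral (κ.integrable_normed.comp_sub_left t)
      (ae_of_all _ fun w => κ.nonneg_normed _)

variable {κ t}

lemma tsupport_bumpStep_sub_subset {τ a b : ℝ} (ht : closedBall t κ.rOut ⊆ Ioo a b)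
    (hτ : closedBall τ κ.rOut ⊆ Ioo a b) :
    ∃ c d, Icc c d ⊆ Ioo a b ∧ tsupport (fun x => bumpStep κ t x - bumpStep κ τ x) ⊆ Icc c d := by
  have hκ := κ.rOut_pos.le
  rw [Real.closedBall_eq_Icc, Icc_subset_Ioo_iff (by linarith)] at ht hτ
  refine ⟨min (t - κ.rOut) (τ - κ.rOut), max (t + κ.rOut) (τ + κ.rOut),
    Icc_subset_Ioo (lt_min ht.1 hτ.1) (max_lt ht.2 hτ.2),
    closure_minimal (Function.support_subset_iff'.2 fun x hx => ?_) isClosed_Icc⟩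
  rw [mem_Icc, not_and_or, not_le, not_le, lt_min_iff, max_lt_iff] at hx
  rcases hx with ⟨hxt, hxτ⟩ | ⟨hxt, hxτ⟩
  · rw [bumpStep_eq_zero κ t hxt.le, bumpStep_eq_zero κ τ hxτ.le, sub_zero]
  · rw [bumpStep_eq_one κ t hxt.le, bumpStep_eq_one κ τ hxτ.le, sub_self]

/-- The distributional derivative of `m` on `I` has total mass at most `O`. -/
def WeakDerivMassLE (m : ℝ → ℝ) (I : Set ℝ) (O : ℝ) : Prop :=
  ∀ ψ : ℝ → ℝ, ContDiff ℝ (⊤ : ℕ∞) ψ → HasCompactSupport ψ → tsupport ψ ⊆ I →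
    (∀ t, |ψ t| ≤ 1) → |∫ t in I, m t * deriv ψ t| ≤ O

variable {m : ℝ → ℝ} {a b O : ℝ}

lemma abs_mollify_sub_mollify_le (hm : IntegrableOn m (Ioo a b))
    (hO : WeakDerivMassLE m (Ioo a b) O) {τ : ℝ} (ht : closedBall t κ.rOut ⊆ Ioo a b)
    (hτ : closedBall τ κ.rOut ⊆ Ioo a b) :
    |mollify volume κ ((Ioo a b).indicator m) t - mollify volume κ ((Ioo a b).indicator m) τ| ≤
      O := by
  obtain ⟨c, d, hcd, hsupp⟩ := tsupport_bumpStep_sub_subset ht hτ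
  have htest := hO (bumpStep κ t - bumpStep κ τ)
    ((contDiff_bumpStep κ t).sub (contDiff_bumpStep κ τ))
    (isCompact_Icc.of_isClosed_subset (isClosed_tsupport _) hsupp) (hsupp.trans hcd)
    fun x => abs_sub_le_of_nonneg_of_le (bumpStep_mem_Icc κ t).1 (bumpStep_mem_Icc κ t).2
      (bumpStep_mem_Icc κ τ).1 (bumpStep_mem_Icc κ τ).2
  have hderiv (x : ℝ) : deriv (bumpStep κ t - bumpStep κ τ) x =
      κ.normed volume (t - x) - κ.normed volume (τ - x) :=
    ((hasDerivAt_bumpStep κ t x).sub (hasDerivAt_bumpStep κ τ x)).deriv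
  simp only [hderiv, mul_sub] at htest
  have hint (τ' : ℝ) : IntegrableOn (fun x => m x * κ.normed volume (τ' - x)) (Ioo a b) := by
    obtain ⟨B, hB⟩ := κ.hasCompactSupport_normed.exists_bound_of_continuous
      (κ.continuous_normed (μ := volume))
    exact hm.mul_bdd (contDiff_normed_sub κ τ' (m := 0)).continuous.aestronglyMeasurable
      (ae_of_all _ fun x => hB (τ' - x))
  rwa [mollify, mollify, integral_indicator_mul measurableSet_Ioo,
    integral_indicator_mul measurableSet_Ioo, ← integral_sub (hint t) (hint τ)]

lemma eventually_closedBall_subset_Ioo (ht : t ∈ Ioo a b) :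
    ∀ᶠ k in atTop, closedBall t (shrinkingBump ℝ k).rOut ⊆ Ioo a b := by
  obtain ⟨ε, hε, hball⟩ := Metric.isOpen_iff.1 isOpen_Ioo t ht
  filter_upwards [(tendsto_rOut_shrinkingBump ℝ).eventually_lt_const hε] with k hk
  exact (closedBall_subset_ball hk).trans hball

lemma exists_ae_abs_sub_le_of_weakDerivMassLE (hab : a < b) (hm : IntegrableOn m (Ioo a b))
    (hO : WeakDerivMassLE m (Ioo a b) O) :
    ∃ c, ∀ᵐ t ∂volume.restrict (Ioo a b), |m t - c| ≤ O := by
  have hm_ind : LocallyIntegrable ((Ioo a b).indicator m) :=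
    ((integrable_indicator_iff measurableSet_Ioo).2 hm).locallyIntegrable
  have hlebesgue : ∀ᵐ t ∂volume.restrict (Ioo a b), t ∈ Ioo a b ∧ Tendsto
      (fun k => mollify volume (shrinkingBump ℝ k) ((Ioo a b).indicator m) t) atTop
      (𝓝 (m t)) := by
    rw [ae_restrict_iff' measurableSet_Ioo]
    filter_upwards [ae_tendsto_mollify_shrinkingBump hm_ind] with t ht htI
    exact ⟨htI, by rwa [indicator_of_mem htI] at ht⟩
  have : NeBot (ae (volume.restrict (Ioo a b))) := by
    rw [ae_neBot, Ne, Measure.restrict_eq_zero, Real.volume_Ioo]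
    simp [hab]
  obtain ⟨τ, hτI, hτ⟩ := hlebesgue.exists
  refine ⟨m τ, ?_⟩
  filter_upwards [hlebesgue] with t ⟨htI, ht⟩
  refine le_of_tendsto (ht.sub hτ).abs ?_
  filter_upwards [eventually_closedBall_subset_Ioo htI, eventually_closedBall_subset_Ioo hτI]
    with k hkt hkτ
  exact abs_mollify_sub_mollify_le hm hO hkt hkτ

end WeakDerivativeReal

section Cutoff

variable {E : Type*} [NormedAddCommGroup E] [NormedSpace ℝ E]

/-- `η` is a smooth cutoff function for the ball `B_s(x₀)`, equal to `1` on the concentric ball of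
radius `s / 4`, with gradient bounded by `G`. -/
structure IsBallCutoff (x₀ : E) (s G : ℝ) (η : E → ℝ) : Prop where
  contDiff : ContDiff ℝ (⊤ : ℕ∞) η
  hasCompactSupport : HasCompactSupport η
  tsupport_subset : tsupport η ⊆ ball x₀ s
  mem_Icc : ∀ x, η x ∈ Icc (0 : ℝ) 1
  eq_one : ∀ x ∈ ball x₀ (s / 4), η x = 1
  norm_fderiv_le : ∀ x, ‖fderiv ℝ η x‖ ≤ G

lemma IsBallCutoff.norm_le_one {x₀ : E} {s G : ℝ} {η : E → ℝ} (hη : IsBallCutoff x₀ s G η)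
    (x : E) : ‖η x‖ ≤ 1 := by
  rw [Real.norm_eq_abs, abs_of_nonneg (hη.mem_Icc x).1]
  exact (hη.mem_Icc x).2

variable (E)

lemma exists_isBallCutoff [FiniteDimensional ℝ E] :
    ∃ C : ℝ, 1 ≤ C ∧ ∀ (x₀ : E) (s : ℝ), 0 < s → ∃ η, IsBallCutoff x₀ s (C / s) η := by
  let b : ContDiffBump (0 : E) := ⟨1 / 4, 1 / 2, by norm_num, by norm_num⟩
  have hb : ContDiff ℝ (⊤ : ℕ∞) b := b.contDiff
  obtain ⟨C, hC⟩ := (b.hasCompactSupport.fderiv (𝕜 := ℝ)).exists_bound_of_continuous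
    (hb.continuous_fderiv (by norm_num))
  refine ⟨max C 1, le_max_right _ _, fun x₀ s hs => ⟨fun x => b (s⁻¹ • (x - x₀)), ?_⟩⟩
  have hnorm (x : E) : dist (s⁻¹ • (x - x₀)) 0 = dist x x₀ / s := by
    rw [dist_zero_right, norm_smul, norm_inv, Real.norm_of_nonneg hs.le, dist_eq_norm,
      inv_mul_eq_div]
  have hzero : tsupport (fun x => b (s⁻¹ • (x - x₀))) ⊆ closedBall x₀ (s / 2) := by
    refine closure_minimal (Function.support_subset_iff'.2 fun x hx => b.zero_of_le_dist ?_)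
      isClosed_closedBall
    rw [mem_closedBall, not_le] at hx
    rw [hnorm, le_div_iff₀ hs, show b.rOut = 1 / 2 from rfl]
    linarith
  refine ⟨hb.comp ((contDiff_id.sub contDiff_const).const_smul _),
    (isCompact_closedBall _ _).of_isClosed_subset (isClosed_tsupport _) hzero,
    hzero.trans (closedBall_subset_ball (by linarith)), fun x => ⟨b.nonneg, b.le_one⟩,
    fun x hx => b.one_of_mem_closedBall ?_, fun x => ?_⟩
  · rw [mem_ball] at hx
    rw [mem_closedBall, hnorm, div_le_iff₀ hs, show b.rIn = 1 / 4 from rfl]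
    linarith
  · have hscale : HasFDerivAt (fun x : E => s⁻¹ • (x - x₀)) (s⁻¹ • ContinuousLinearMap.id ℝ E) x :=
      ((hasFDerivAt_id x).sub_const x₀).const_smul s⁻¹
    have hcomp : HasFDerivAt (fun x => b (s⁻¹ • (x - x₀))) _ x :=
      (hb.differentiable (by norm_num) _).hasFDerivAt.comp x hscale
    rw [hcomp.fderiv, ContinuousLinearMap.comp_smul, ContinuousLinearMap.comp_id, norm_smul,
      norm_inv, Real.norm_of_nonneg hs.le, inv_mul_eq_div]
    gcongr
    exact (hC _).trans (le_max_left _ _)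

end Cutoff

section TimeOscillation

variable {n : ℕ}

/-- The equation `∂ₜ f = div V` holds on `Q` in the sense of distributions. -/
def HasWeakTimeDerivDivOn (f : Pt n → ℝ) (V : Pt n → Fin n → ℝ) (Q : Set (Pt n)) : Prop :=
  ∀ Ψ : Pt n → ℝ, ContDiff ℝ (⊤ : ℕ∞) Ψ → HasCompactSupport Ψ → tsupport Ψ ⊆ Q →
    ∫ z in Q, f z * fderiv ℝ Ψ z (0, 1) = ∫ z in Q, ∑ j, V z j * dxj Ψ j z

lemma volume_restrict_Qrs (z₀ : Pt n) (s σ : ℝ) :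
    volume.restrict (Qrs z₀ s σ) =
      (volume.restrict (ball z₀.1 s)).prod (volume.restrict (Ioo (z₀.2 - σ) (z₀.2 + σ))) := by
  rw [Measure.prod_restrict]; rfl

lemma fderiv_fst_mul_snd_apply {E : Type*} [NormedAddCommGroup E] [NormedSpace ℝ E] {η : E → ℝ}
    {ψ : ℝ → ℝ} {z : E × ℝ} (hη : DifferentiableAt ℝ η z.1) (hψ : DifferentiableAt ℝ ψ z.2)
    (e : E × ℝ) :
    fderiv ℝ (fun w : E × ℝ => η w.1 * ψ w.2) z e =
      η z.1 * (deriv ψ z.2 * e.2) + ψ z.2 * fderiv ℝ η z.1 e.1 := by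
  have hη' : HasFDerivAt (fun w : E × ℝ => η w.1) _ z := hη.hasFDerivAt.comp z hasFDerivAt_fst
  have hψ' : HasFDerivAt (fun w : E × ℝ => ψ w.2) _ z :=
    hψ.hasDerivAt.hasFDerivAt.comp z hasFDerivAt_snd
  have hmul : HasFDerivAt (fun w : E × ℝ => η w.1 * ψ w.2) _ z := hη'.mul hψ'
  rw [hmul.fderiv]
  simp [mul_comm (deriv ψ z.2)]

lemma tsupport_fst_mul_snd_subset {X Y : Type*} [TopologicalSpace X] [TopologicalSpace Y]
    (η : X → ℝ) (ψ : Y → ℝ) :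
    tsupport (fun w : X × Y => η w.1 * ψ w.2) ⊆ tsupport η ×ˢ tsupport ψ :=
  closure_minimal (fun _ hw => ⟨subset_tsupport _ (left_ne_zero_of_mul hw),
    subset_tsupport _ (right_ne_zero_of_mul hw)⟩)
    ((isClosed_tsupport _).prod (isClosed_tsupport _))

variable {z₀ : Pt n} {s σ G : ℝ} {f : Pt n → ℝ} {V : Pt n → Fin n → ℝ} {η : Spc n → ℝ}

lemma integrableOn_cutoff_mul (hf : IntegrableOn f (Qrs z₀ s σ)) (hη : IsBallCutoff z₀.1 s G η) :
    IntegrableOn (fun z => η z.1 * f z) (Qrs z₀ s σ) :=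
  Integrable.bdd_mul hf (hη.contDiff.continuous.comp continuous_fst).aestronglyMeasurable
    (ae_of_all _ fun z => hη.norm_le_one z.1)

lemma integral_cutoff_mean_mul_deriv (hf : IntegrableOn f (Qrs z₀ s σ))
    (hη : IsBallCutoff z₀.1 s G η) {ψ : ℝ → ℝ} (hψ : ContDiff ℝ (⊤ : ℕ∞) ψ)
    (hψc : HasCompactSupport ψ) :
    ∫ t in Ioo (z₀.2 - σ) (z₀.2 + σ), (∫ x in ball z₀.1 s, η x * f (x, t)) * deriv ψ t =
      ∫ z in Qrs z₀ s σ, f z * fderiv ℝ (fun w : Pt n => η w.1 * ψ w.2) z (0, 1) := by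
  have hderiv (z : Pt n) : f z * fderiv ℝ (fun w : Pt n => η w.1 * ψ w.2) z (0, 1) =
      η z.1 * f z * deriv ψ z.2 := by
    rw [fderiv_fst_mul_snd_apply (hη.contDiff.differentiable (by norm_num) _)
      (hψ.differentiable (by norm_num) _)]
    simp only [mul_one, map_zero, mul_zero, add_zero]
    ring
  have hint : IntegrableOn (fun z : Pt n => η z.1 * f z * deriv ψ z.2) (Qrs z₀ s σ) := by
    have hψ' := hψ.continuous_deriv (by norm_num)
    obtain ⟨M, hM⟩ := hψc.deriv.exists_bound_of_continuous hψ'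
    exact (integrableOn_cutoff_mul hf hη).mul_bdd
      (hψ'.comp continuous_snd).aestronglyMeasurable (ae_of_all _ fun z => hM z.2)
  rw [IntegrableOn, volume_restrict_Qrs] at hint
  simp only [hderiv]
  rw [volume_restrict_Qrs, integral_prod_symm _ hint]
  simp only [integral_mul_const]

lemma abs_integral_sum_mul_dxj_le (hV : ∀ j, IntegrableOn (fun z => V z j) (Qrs z₀ s σ))
    {Ψ : Pt n → ℝ} (hΨ : ∀ z j, |dxj Ψ j z| ≤ G) :
    |∫ z in Qrs z₀ s σ, ∑ j, V z j * dxj Ψ j z| ≤ G * ∫ z in Qrs z₀ s σ, ∑ j, |V z j| := by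
  rw [← Real.norm_eq_abs, ← integral_const_mul]
  refine norm_integral_le_of_norm_le
    ((integrable_finsetSum _ fun j _ => (hV j).abs).const_mul G) (ae_of_all _ fun z => ?_)
  rw [Real.norm_eq_abs, Finset.mul_sum]
  refine (Finset.abs_sum_le_sum_abs _ _).trans (Finset.sum_le_sum fun j _ => ?_)
  rw [abs_mul, mul_comm]
  exact mul_le_mul_of_nonneg_right (hΨ z j) (abs_nonneg _)

lemma abs_dxj_cutoff_mul_le (hη : IsBallCutoff z₀.1 s G η) {ψ : ℝ → ℝ}
    (hψ : ContDiff ℝ (⊤ : ℕ∞) ψ) (hψ1 : ∀ t, |ψ t| ≤ 1) (z : Pt n) (j : Fin n) :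
    |dxj (fun w : Pt n => η w.1 * ψ w.2) j z| ≤ G := by
  rw [dxj, fderiv_fst_mul_snd_apply (hη.contDiff.differentiable (by norm_num) _)
    (hψ.differentiable (by norm_num) _), mul_zero, mul_zero, zero_add, abs_mul]
  have hpartial : |fderiv ℝ η z.1 (EuclideanSpace.single j 1)| ≤ G := by
    simpa using ((fderiv ℝ η z.1).le_opNorm (EuclideanSpace.single j 1)).trans
      (mul_le_mul_of_nonneg_right (hη.norm_fderiv_le z.1) (norm_nonneg _))
  exact (mul_le_of_le_one_left (abs_nonneg _) (hψ1 z.2)).trans hpartial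

lemma exists_ae_abs_cutoff_mean_sub_le (hσ : 0 < σ) (hf : IntegrableOn f (Qrs z₀ s σ))
    (hV : ∀ j, IntegrableOn (fun z => V z j) (Qrs z₀ s σ))
    (hfV : HasWeakTimeDerivDivOn f V (Qrs z₀ s σ)) (hη : IsBallCutoff z₀.1 s G η) :
    ∃ c, ∀ᵐ t ∂volume.restrict (Ioo (z₀.2 - σ) (z₀.2 + σ)),
      |(∫ x in ball z₀.1 s, η x * f (x, t)) - c| ≤ G * ∫ z in Qrs z₀ s σ, ∑ j, |V z j| := by
  have hmean : IntegrableOn (fun t => ∫ x in ball z₀.1 s, η x * f (x, t))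
      (Ioo (z₀.2 - σ) (z₀.2 + σ)) := by
    have hprod := integrableOn_cutoff_mul hf hη
    rw [IntegrableOn, volume_restrict_Qrs] at hprod
    exact hprod.integral_prod_right
  refine exists_ae_abs_sub_le_of_weakDerivMassLE (by linarith) hmean fun ψ hψ hψc hψs hψ1 => ?_
  have hsupp := tsupport_fst_mul_snd_subset η ψ
  have hequation := hfV (fun w => η w.1 * ψ w.2)
    ((hη.contDiff.comp contDiff_fst).mul (hψ.comp contDiff_snd))
    ((hη.hasCompactSupport.isCompact.prod hψc.isCompact).of_isClosed_subset
      (isClosed_tsupport _) hsupp)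
    (hsupp.trans (prod_mono hη.tsupport_subset hψs))
  rw [integral_cutoff_mean_mul_deriv hf hη hψ hψc, hequation]
  exact abs_integral_sum_mul_dxj_le hV (abs_dxj_cutoff_mul_le hη hψ hψ1)

end TimeOscillation

section Averages

variable {X : Type*} [MeasurableSpace X] {μ : Measure X} [IsFiniteMeasure μ] {r : ℝ}

lemma rpow_laverage_le_laverage_rpow [NeZero μ] (hr : 1 ≤ r) {g : X → ℝ≥0∞}
    (hg : AEMeasurable g μ) : (⨍⁻ x, g x ∂μ) ^ r ≤ ⨍⁻ x, g x ^ r ∂μ := by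
  simpa only [laverage_eq', measure_univ, ENNReal.one_rpow, one_mul] using
    rpow_lintegral_le_measure_univ_mul_lintegral_rpow ((μ univ)⁻¹ • μ) hr (hg.smul_measure _)

lemma enorm_sub_average_le_laverage_enorm [NeZero μ] {f : X → ℝ} (hf : Integrable f μ) (c : ℝ) :
    ‖c - ⨍ x, f x ∂μ‖ₑ ≤ ⨍⁻ x, ‖f x - c‖ₑ ∂μ := by
  have hf' : Integrable f ((μ univ)⁻¹ • μ) := hf.to_average
  have hmean : (⨍ x, f x ∂μ) - c = ∫ x, (f x - c) ∂((μ univ)⁻¹ • μ) := by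
    rw [integral_sub hf' (integrable_const c), integral_const, probReal_univ, one_smul]
    rfl
  rw [enorm_sub_rev, hmean]
  exact enorm_integral_le_lintegral_enorm _

lemma laverage_enorm_sub_average_rpow_le [NeZero μ] {f : X → ℝ} (hf : Integrable f μ) (hr : 1 ≤ r)
    (c : ℝ) : ⨍⁻ x, ‖f x - ⨍ y, f y ∂μ‖ₑ ^ r ∂μ ≤ 2 ^ r * ⨍⁻ x, ‖f x - c‖ₑ ^ r ∂μ := by
  have hfc : AEMeasurable (fun x => ‖f x - c‖ₑ) μ :=
    (hf.sub (integrable_const c)).aestronglyMeasurable.enorm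
  have hfc' : AEMeasurable (fun x => ‖f x - c‖ₑ ^ r) ((μ univ)⁻¹ • μ) :=
    (hfc.smul_measure _).pow_const r
  set A := ⨍⁻ x, ‖f x - c‖ₑ ^ r ∂μ
  have hmean : ‖c - ⨍ y, f y ∂μ‖ₑ ^ r ≤ A :=
    (ENNReal.rpow_le_rpow (enorm_sub_average_le_laverage_enorm hf c) (by linarith)).trans
      (rpow_laverage_le_laverage_rpow hr hfc)
  have hsplit (x : X) : ‖f x - ⨍ y, f y ∂μ‖ₑ ^ r ≤ 2 ^ (r - 1) * (‖f x - c‖ₑ ^ r + A) := by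
    rw [← sub_add_sub_cancel (f x) c]
    refine (ENNReal.rpow_le_rpow (enorm_add_le _ _) (by linarith)).trans
      ((ENNReal.rpow_add_le_mul_rpow_add_rpow _ _ hr).trans ?_)
    gcongr
  calc ⨍⁻ x, ‖f x - ⨍ y, f y ∂μ‖ₑ ^ r ∂μ
      ≤ ∫⁻ x, 2 ^ (r - 1) * (‖f x - c‖ₑ ^ r + A) ∂((μ univ)⁻¹ • μ) := lintegral_mono hsplit
    _ = 2 ^ (r - 1) * (A + A) := by
        rw [lintegral_const_mul'' _ (hfc'.add_const A), lintegral_add_left' hfc',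
          lintegral_const, measure_univ (μ := (μ univ)⁻¹ • μ), mul_one]
        rfl
    _ = 2 ^ r * A := by
        rw [← two_mul, ← mul_assoc]
        congr 1
        nth_rewrite 2 [← ENNReal.rpow_one 2]
        rw [← ENNReal.rpow_add _ _ two_ne_zero ENNReal.ofNat_ne_top, sub_add_cancel]

lemma integrable_and_average_le_of_laverage_le {f : X → ℝ} {c : ℝ}
    (hf : AEStronglyMeasurable f μ) (hf0 : 0 ≤ f) (hc : 0 ≤ c)
    (h : ⨍⁻ x, ENNReal.ofReal (f x) ∂μ ≤ ENNReal.ofReal c) :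
    Integrable f μ ∧ ⨍ x, f x ∂μ ≤ c := by
  have hint : Integrable f μ := by
    refine ⟨hf, (hasFiniteIntegral_iff_ofReal (ae_of_all _ hf0)).2 ?_⟩
    rw [← measure_mul_laverage]
    exact ENNReal.mul_lt_top (measure_lt_top μ univ) (h.trans_lt ENNReal.ofReal_lt_top)
  refine ⟨hint, (ENNReal.ofReal_le_ofReal_iff hc).1 ?_⟩
  rwa [ofReal_average hint (ae_of_all _ hf0), ← laverage_eq]

variable {η v : X → ℝ} {κ c O : ℝ}

lemma abs_sub_div_integral_le [NeZero μ] (hv : Integrable v μ) (hη : AEStronglyMeasurable η μ)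
    (hη1 : ∀ x, ‖η x‖ ≤ 1) (hκ : 0 < κ) (hmass : μ.real univ ≤ κ * ∫ x, η x ∂μ)
    (hO : |(∫ x, η x * v x ∂μ) - c| ≤ O) (b : ℝ) :
    |b - c / ∫ x, η x ∂μ| ≤ κ * (⨍ x, ‖b - v x‖ ∂μ + O / μ.real univ) := by
  have hm : 0 < μ.real univ := measureReal_univ_pos
  have hηi : Integrable η μ := Integrable.of_bound hη 1 (ae_of_all _ hη1)
  have hηv : Integrable (fun x => η x * v x) μ := hv.bdd_mul hη (ae_of_all _ hη1)
  set E := ∫ x, η x ∂μ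
  have hE : 0 < E := pos_of_mul_pos_right (hm.trans_le hmass) hκ.le
  have hcentred : |E * b - ∫ x, η x * v x ∂μ| ≤ ∫ x, ‖b - v x‖ ∂μ := by
    have : E * b - ∫ x, η x * v x ∂μ = ∫ x, η x * (b - v x) ∂μ := by
      simp only [mul_sub]
      rw [integral_sub (hηi.mul_const b) hηv, integral_mul_const]
    rw [this, ← Real.norm_eq_abs]
    refine norm_integral_le_of_norm_le ((integrable_const b).sub hv).norm (ae_of_all _ fun x => ?_)
    rw [norm_mul]
    exact mul_le_of_le_one_left (norm_nonneg _) (hη1 x)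
  calc |b - c / E| = |E * b - c| / E := by
        rw [← abs_of_pos hE, ← abs_div, abs_of_pos hE, sub_div, mul_div_cancel_left₀ _ hE.ne']
    _ ≤ ((∫ x, ‖b - v x‖ ∂μ) + O) / E := by
        gcongr
        rw [← sub_add_sub_cancel _ (∫ x, η x * v x ∂μ)]
        exact (abs_add_le _ _).trans (add_le_add hcentred hO)
    _ ≤ ((∫ x, ‖b - v x‖ ∂μ) + O) / (μ.real univ / κ) := by
        have : 0 ≤ O := (abs_nonneg _).trans hO
        gcongr
        rwa [div_le_iff₀' hκ]
    _ = κ * (⨍ x, ‖b - v x‖ ∂μ + O / μ.real univ) := by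
        rw [average_eq, smul_eq_mul]
        field_simp

lemma enorm_sub_div_integral_rpow_le [NeZero μ] (hv : Integrable v μ)
    (hη : AEStronglyMeasurable η μ) (hη1 : ∀ x, ‖η x‖ ≤ 1) (hκ : 0 < κ)
    (hmass : μ.real univ ≤ κ * ∫ x, η x ∂μ) (hO : |(∫ x, η x * v x ∂μ) - c| ≤ O) (hr : 1 ≤ r)
    (b : ℝ) :
    ‖b - c / ∫ x, η x ∂μ‖ₑ ^ r ≤ ENNReal.ofReal (2 * κ) ^ r *
      (⨍⁻ x, ‖b - v x‖ₑ ^ r ∂μ + ENNReal.ofReal (O / μ.real univ) ^ r) := by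
  have hr0 : 0 ≤ r := by linarith
  have hbv : Integrable (fun x => b - v x) μ := (integrable_const b).sub hv
  have hO0 : 0 ≤ O / μ.real univ := div_nonneg ((abs_nonneg _).trans hO) measureReal_nonneg
  have hmean0 : 0 ≤ ⨍ x, ‖b - v x‖ ∂μ := integral_nonneg fun _ => norm_nonneg _
  have hlinear : ‖b - c / ∫ x, η x ∂μ‖ₑ ≤
      ENNReal.ofReal κ * (⨍⁻ x, ‖b - v x‖ₑ ∂μ + ENNReal.ofReal (O / μ.real univ)) := by
    rw [Real.enorm_eq_ofReal_abs]
    refine (ENNReal.ofReal_le_ofReal (abs_sub_div_integral_le hv hη hη1 hκ hmass hO b)).trans_eq ?_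
    rw [ENNReal.ofReal_mul hκ.le, ENNReal.ofReal_add hmean0 hO0,
      ofReal_average hbv.norm (ae_of_all _ fun _ => norm_nonneg _), laverage_eq]
    simp only [ofReal_norm]
  calc ‖b - c / ∫ x, η x ∂μ‖ₑ ^ r
      ≤ (ENNReal.ofReal κ * (⨍⁻ x, ‖b - v x‖ₑ ∂μ + ENNReal.ofReal (O / μ.real univ))) ^ r := by
        gcongr
    _ ≤ ENNReal.ofReal κ ^ r * (2 ^ r *
          (⨍⁻ x, ‖b - v x‖ₑ ^ r ∂μ + ENNReal.ofReal (O / μ.real univ) ^ r)) := by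
        rw [ENNReal.mul_rpow_of_nonneg _ _ hr0]
        gcongr _ * ?_
        refine (ENNReal.rpow_add_le_mul_rpow_add_rpow _ _ hr).trans ?_
        gcongr
        · exact one_le_two
        · linarith
        · exact rpow_laverage_le_laverage_rpow hr hbv.aestronglyMeasurable.enorm
    _ = _ := by
        rw [mul_comm 2 κ, ENNReal.ofReal_mul hκ.le, ENNReal.mul_rpow_of_nonneg _ _ hr0,
          ENNReal.ofReal_ofNat, mul_assoc]

end Averages

section ParabolicPoincare

lemma IsBallCutoff.measureReal_ball_le {E : Type*} [NormedAddCommGroup E] [NormedSpace ℝ E]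
    [FiniteDimensional ℝ E] [MeasurableSpace E] [BorelSpace E] (μ : Measure E) [μ.IsAddHaarMeasure]
    {x₀ : E} {s G : ℝ} {η : E → ℝ} (hη : IsBallCutoff x₀ s G η) (hs : 0 < s) :
    μ.real (ball x₀ s) ≤ 4 ^ Module.finrank ℝ E * ∫ x in ball x₀ s, η x ∂μ := by
  have hscale : μ.real (ball x₀ s) = 4 ^ Module.finrank ℝ E * μ.real (ball x₀ (s / 4)) := by
    have : μ (ball x₀ (4 * (s / 4))) = _ := μ.addHaar_ball_mul_of_pos x₀ four_pos (s / 4)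
    rw [mul_div_cancel₀ _ four_ne_zero, ← μ.addHaar_ball_center x₀] at this
    rw [measureReal_def, this, ENNReal.toReal_mul, ENNReal.toReal_ofReal (by positivity),
      measureReal_def]
  have hηi : IntegrableOn η (ball x₀ s) μ :=
    (hη.contDiff.continuous.integrable_of_hasCompactSupport hη.hasCompactSupport).integrableOn
  rw [hscale]
  gcongr
  calc μ.real (ball x₀ (s / 4)) = ∫ x in ball x₀ (s / 4), η x ∂μ := by
        rw [setIntegral_congr_fun measurableSet_ball hη.eq_one, setIntegral_const, smul_eq_mul,
          mul_one]
    _ ≤ ∫ x in ball x₀ s, η x ∂μ :=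
        setIntegral_mono_set hηi (ae_of_all _ fun x => (hη.mem_Icc x).1)
          (ball_subset_ball (by linarith)).eventuallyLE

variable {n : ℕ} {z₀ : Pt n} {s σ : ℝ}

lemma volume_Qrs (z₀ : Pt n) (s σ : ℝ) :
    volume (Qrs z₀ s σ) = volume (ball z₀.1 s) * volume (Ioo (z₀.2 - σ) (z₀.2 + σ)) :=
  Measure.prod_prod _ _

lemma volume_real_Qrs (z₀ : Pt n) (s : ℝ) (hσ : 0 ≤ σ) :
    volume.real (Qrs z₀ s σ) = volume.real (ball z₀.1 s) * (2 * σ) := by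
  rw [measureReal_def, volume_Qrs, ENNReal.toReal_mul, Real.volume_Ioo,
    ENNReal.toReal_ofReal (by linarith), measureReal_def]
  ring

instance isFiniteMeasure_restrict_Qrs : IsFiniteMeasure (volume.restrict (Qrs z₀ s σ)) := by
  refine isFiniteMeasure_restrict.2 ?_
  rw [volume_Qrs]
  exact ENNReal.mul_ne_top measure_ball_lt_top.ne measure_Ioo_lt_top.ne

lemma neZero_restrict_Qrs (hs : 0 < s) (hσ : 0 < σ) : NeZero (volume.restrict (Qrs z₀ s σ)) := by
  refine ⟨mt Measure.restrict_eq_zero.1 ?_⟩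
  rw [volume_Qrs, mul_eq_zero, not_or]
  exact ⟨(measure_ball_pos _ _ hs).ne', (Measure.measure_Ioo_pos _).2 (by linarith) |>.ne'⟩

variable {f : Pt n → ℝ} {g V : Pt n → Fin n → ℝ} {r : ℝ}

lemma setLIntegral_slice_enorm_sub_rpow_le {η v : Spc n → ℝ} {x₀ : Spc n} {c G O : ℝ}
    (hs : 0 < s) (hη : IsBallCutoff x₀ s G η) (hvm : Measurable v) (hv : IntegrableOn v (ball x₀ s))
    (hO : |(∫ x in ball x₀ s, η x * v x) - c| ≤ O) (hr : 1 ≤ r) :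
    ∫⁻ x in ball x₀ s, ‖v x - c / ∫ y in ball x₀ s, η y‖ₑ ^ r ≤
      ENNReal.ofReal (2 * 4 ^ n) ^ r *
        ((volume (ball x₀ s))⁻¹ * (∫⁻ x in ball x₀ s, ∫⁻ y in ball x₀ s, ‖v x - v y‖ₑ ^ r) +
          ENNReal.ofReal (O / volume.real (ball x₀ s)) ^ r * volume (ball x₀ s)) := by
  have : IsFiniteMeasure (volume.restrict (ball x₀ s)) :=
    isFiniteMeasure_restrict.2 measure_ball_lt_top.ne
  have : NeZero (volume.restrict (ball x₀ s)) :=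
    ⟨mt Measure.restrict_eq_zero.1 (measure_ball_pos _ _ hs).ne'⟩
  have hmass : (volume.restrict (ball x₀ s)).real univ ≤ 4 ^ n * ∫ x in ball x₀ s, η x := by
    simpa using hη.measureReal_ball_le volume hs
  have hpoint (x : Spc n) := enorm_sub_div_integral_rpow_le hv
    hη.contDiff.continuous.aestronglyMeasurable hη.norm_le_one (by positivity) hmass hO hr (v x)
  have hmeas : Measurable fun x => ∫⁻ y in ball x₀ s, ‖v x - v y‖ₑ ^ r :=
    Measurable.lintegral_prod_right'
      (f := fun w : Spc n × Spc n => ‖v w.1 - v w.2‖ₑ ^ r) (by fun_prop)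
  refine (lintegral_mono hpoint).trans_eq ?_
  simp only [setLAverage_eq, measureReal_restrict_apply_univ, ENNReal.div_eq_inv_mul]
  rw [lintegral_const_mul _ (by fun_prop), lintegral_add_right _ measurable_const,
    lintegral_const_mul _ hmeas, lintegral_const, Measure.restrict_apply_univ]

lemma exists_setLIntegral_enorm_sub_rpow_le {D : Pt n → ℝ≥0∞} {η : Spc n → ℝ} {G : ℝ} (hs : 0 < s)
    (hσ : 0 < σ) (hη : IsBallCutoff z₀.1 s G η) (hfm : Measurable f)
    (hf : IntegrableOn f (Qrs z₀ s σ)) (hfg : HasWeakSpatialGradOn f g (Qrs z₀ s σ))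
    (hD : Measurable D) (hgD : ∀ z j, ‖g z j‖ₑ ≤ D z)
    (hV : ∀ j, IntegrableOn (fun z => V z j) (Qrs z₀ s σ))
    (hfV : HasWeakTimeDerivDivOn f V (Qrs z₀ s σ)) (hr : 1 ≤ r) :
    ∃ c : ℝ, ∫⁻ z in Qrs z₀ s σ, ‖f z - c‖ₑ ^ r ≤ ENNReal.ofReal (2 * 4 ^ n) ^ r *
      (ENNReal.ofReal (2 * s) ^ r * 2 ^ n * n ^ r * (∫⁻ z in Qrs z₀ s σ, D z ^ r) +
        ENNReal.ofReal ((G * ∫ z in Qrs z₀ s σ, ∑ j, |V z j|) / volume.real (ball z₀.1 s)) ^ r *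
          volume (Qrs z₀ s σ)) := by
  set B := ball z₀.1 s
  obtain ⟨c, hc⟩ := exists_ae_abs_cutoff_mean_sub_le hσ hf hV hfV hη
  set W := ENNReal.ofReal ((G * ∫ z in Qrs z₀ s σ, ∑ j, |V z j|) / volume.real B) ^ r
  have hslice : ∀ᵐ t ∂volume.restrict (Ioo (z₀.2 - σ) (z₀.2 + σ)),
      IntegrableOn (fun x => f (x, t)) B := by
    rw [IntegrableOn, volume_restrict_Qrs] at hf
    exact hf.prod_left_ae
  have hmeas : Measurable fun t : ℝ => ∫⁻ x in B, ∫⁻ y in B, ‖f (x, t) - f (y, t)‖ₑ ^ r := by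
    have : Measurable fun w : ℝ × Spc n => ∫⁻ y in B, ‖f (w.2, w.1) - f (y, w.1)‖ₑ ^ r :=
      Measurable.lintegral_prod_right' (f := fun w : (ℝ × Spc n) × Spc n =>
        ‖f (w.1.2, w.1.1) - f (w.2, w.1.1)‖ₑ ^ r) (by fun_prop)
    exact this.lintegral_prod_right'
  refine ⟨c / ∫ y in B, η y, ?_⟩
  calc ∫⁻ z in Qrs z₀ s σ, ‖f z - c / ∫ y in B, η y‖ₑ ^ r
      = ∫⁻ t in Ioo (z₀.2 - σ) (z₀.2 + σ), ∫⁻ x in B, ‖f (x, t) - c / ∫ y in B, η y‖ₑ ^ r := by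
        rw [volume_restrict_Qrs, lintegral_prod_symm _ (by fun_prop)]
    _ ≤ ∫⁻ t in Ioo (z₀.2 - σ) (z₀.2 + σ), ENNReal.ofReal (2 * 4 ^ n) ^ r *
          ((volume B)⁻¹ * (∫⁻ x in B, ∫⁻ y in B, ‖f (x, t) - f (y, t)‖ₑ ^ r) + W * volume B) := by
        refine lintegral_mono_ae ?_
        filter_upwards [hslice, hc] with t ht hct
        exact setLIntegral_slice_enorm_sub_rpow_le hs hη (by fun_prop) ht hct hr
    _ = ENNReal.ofReal (2 * 4 ^ n) ^ r * ((volume B)⁻¹ * (∫⁻ t in Ioo (z₀.2 - σ) (z₀.2 + σ),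
          ∫⁻ x in B, ∫⁻ y in B, ‖f (x, t) - f (y, t)‖ₑ ^ r) + W * volume (Qrs z₀ s σ)) := by
        rw [lintegral_const_mul _ (by fun_prop), lintegral_add_right _ measurable_const,
          lintegral_const_mul _ hmeas, lintegral_const, Measure.restrict_apply_univ, volume_Qrs,
          mul_assoc]
    _ ≤ ENNReal.ofReal (2 * 4 ^ n) ^ r * ((volume B)⁻¹ * (ENNReal.ofReal (2 * s) ^ r * (2 ^ n *
          (volume B * ((n : ℝ≥0∞) ^ r * ∫⁻ z in Qrs z₀ s σ, D z ^ r)))) +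
          W * volume (Qrs z₀ s σ)) := by
        gcongr _ * (_ * ?_ + _)
        exact lintegral_slice_enorm_sub_rpow_le hfm hf hfg hD hgD hr
    _ = ENNReal.ofReal (2 * 4 ^ n) ^ r * ((volume B)⁻¹ * volume B * (ENNReal.ofReal (2 * s) ^ r *
          2 ^ n * n ^ r * (∫⁻ z in Qrs z₀ s σ, D z ^ r)) + W * volume (Qrs z₀ s σ)) := by ring
    _ = _ := by
        rw [ENNReal.inv_mul_cancel (measure_ball_pos _ _ hs).ne' measure_ball_lt_top.ne, one_mul]

lemma setLAverage_enorm_sub_setAverage_rpow_le {D : Pt n → ℝ≥0∞} {η : Spc n → ℝ} {G : ℝ}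
    (hs : 0 < s) (hσ : 0 < σ) (hη : IsBallCutoff z₀.1 s G η) (hfm : Measurable f)
    (hf : IntegrableOn f (Qrs z₀ s σ)) (hfg : HasWeakSpatialGradOn f g (Qrs z₀ s σ))
    (hD : Measurable D) (hgD : ∀ z j, ‖g z j‖ₑ ≤ D z)
    (hV : ∀ j, IntegrableOn (fun z => V z j) (Qrs z₀ s σ))
    (hfV : HasWeakTimeDerivDivOn f V (Qrs z₀ s σ)) (hr : 1 ≤ r) :
    ⨍⁻ z in Qrs z₀ s σ, ‖f z - ⨍ w in Qrs z₀ s σ, f w‖ₑ ^ r ∂volume ≤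
      ENNReal.ofReal (4 * 4 ^ n) ^ r *
        (ENNReal.ofReal (2 * s) ^ r * 2 ^ n * n ^ r * (⨍⁻ z in Qrs z₀ s σ, D z ^ r ∂volume) +
          ENNReal.ofReal (2 * G * (σ * ⨍ z in Qrs z₀ s σ, ∑ j, |V z j|)) ^ r) := by
  have hne := neZero_restrict_Qrs (z₀ := z₀) hs hσ
  obtain ⟨c, hc⟩ := exists_setLIntegral_enorm_sub_rpow_le hs hσ hη hfm hf hfg hD hgD hV hfV hr
  have hBpos : 0 < volume.real (ball z₀.1 s) :=
    ENNReal.toReal_pos (measure_ball_pos _ _ hs).ne' measure_ball_lt_top.ne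
  have hflux : (G * ∫ z in Qrs z₀ s σ, ∑ j, |V z j|) / volume.real (ball z₀.1 s) =
      2 * G * (σ * ⨍ z in Qrs z₀ s σ, ∑ j, |V z j|) := by
    rw [setAverage_eq, volume_real_Qrs z₀ s hσ.le, smul_eq_mul]
    field_simp
  have hconst : ENNReal.ofReal (4 * 4 ^ n) ^ r = 2 ^ r * ENNReal.ofReal (2 * 4 ^ n) ^ r := by
    rw [← ENNReal.mul_rpow_of_nonneg _ _ (by linarith), ← ENNReal.ofReal_ofNat,
      ← ENNReal.ofReal_mul zero_le_two]
    ring_nf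
  refine (laverage_enorm_sub_average_rpow_le hf hr c).trans ?_
  rw [hconst, mul_assoc, setLAverage_eq, setLAverage_eq, ← hflux]
  gcongr
  refine ENNReal.div_le_of_le_mul (hc.trans_eq ?_)
  have hQ : volume (Qrs z₀ s σ) ≠ 0 := by simpa using hne.out
  have hQ' : volume (Qrs z₀ s σ) ≠ ∞ := isFiniteMeasure_restrict.1 inferInstance
  rw [mul_assoc _ _ (volume (Qrs z₀ s σ)), add_mul, mul_assoc _ (_ / _),
    ENNReal.div_mul_cancel hQ hQ']

lemma poincare_constant_le {C X Y : ℝ} (hC : 1 ≤ C) (hs : 0 < s) (hX : 0 ≤ X) (hY : 0 ≤ Y)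
    (hr : 1 ≤ r) :
    (4 * 4 ^ n) ^ r * ((2 * s) ^ r * 2 ^ n * n ^ r * X + (2 * (C / s) * Y) ^ r) ≤
      (8 * 4 ^ n * 2 ^ n * (n + 1) * C) ^ r * (s ^ r * X + (s⁻¹ * Y) ^ r) := by
  have : 0 ≤ r := by linarith
  have htwo : (1 : ℝ) ≤ 2 ^ n := one_le_pow₀ one_le_two
  have hgradient : (2 * s) ^ r * 2 ^ n * n ^ r * X ≤
      (2 * 2 ^ n * (n + 1) * C) ^ r * (s ^ r * X) :=
    calc (2 * s) ^ r * 2 ^ n * n ^ r * X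
        ≤ (2 * s) ^ r * (2 ^ n) ^ r * ((n + 1) * C) ^ r * X := by
          gcongr
          · exact Real.self_le_rpow_of_one_le htwo hr
          · exact (le_add_of_nonneg_right zero_le_one).trans
              (le_mul_of_one_le_right (by positivity) hC)
      _ = (2 * 2 ^ n * (n + 1) * C) ^ r * (s ^ r * X) := by
          rw [← Real.mul_rpow (by positivity) (by positivity),
            ← Real.mul_rpow (by positivity) (by positivity), ← mul_assoc (_ ^ r) (s ^ r),
            ← Real.mul_rpow (by positivity) hs.le]
          ring_nf
  have hflux : (2 * (C / s) * Y) ^ r ≤ (2 * 2 ^ n * (n + 1) * C) ^ r * (s⁻¹ * Y) ^ r := by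
    rw [← Real.mul_rpow (by positivity) (by positivity)]
    have : 1 ≤ 2 ^ n * ((n : ℝ) + 1) := one_le_mul_of_one_le_of_one_le htwo (by simp)
    gcongr ?_ ^ r
    calc 2 * (C / s) * Y = 2 * C * (s⁻¹ * Y) * 1 := by field_simp
      _ ≤ 2 * C * (s⁻¹ * Y) * (2 ^ n * (n + 1)) := by gcongr
      _ = _ := by ring
  calc _ ≤ (4 * 4 ^ n) ^ r * ((2 * 2 ^ n * (n + 1) * C) ^ r * (s ^ r * X) +
          (2 * 2 ^ n * (n + 1) * C) ^ r * (s⁻¹ * Y) ^ r) := by gcongr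
    _ = _ := by
      rw [← mul_add, ← mul_assoc, ← Real.mul_rpow (by positivity) (by positivity)]
      ring_nf

variable (n)

lemma exists_setAverage_abs_sub_rpow_le :
    ∃ C : ℝ, 1 ≤ C ∧ ∀ {z₀ : Pt n} {s σ : ℝ} {f D : Pt n → ℝ} {g V : Pt n → Fin n → ℝ} {r : ℝ},
      0 < s → 0 < σ → Measurable f → IntegrableOn f (Qrs z₀ s σ) →
      HasWeakSpatialGradOn f g (Qrs z₀ s σ) → Measurable D → 0 ≤ D → (∀ z j, |g z j| ≤ D z) →
      (∀ j, IntegrableOn (fun z => V z j) (Qrs z₀ s σ)) →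
      HasWeakTimeDerivDivOn f V (Qrs z₀ s σ) → 1 ≤ r →
      IntegrableOn (fun z => D z ^ r) (Qrs z₀ s σ) →
      IntegrableOn (fun z => |f z - ⨍ w in Qrs z₀ s σ, f w| ^ r) (Qrs z₀ s σ) ∧
      ⨍ z in Qrs z₀ s σ, |f z - ⨍ w in Qrs z₀ s σ, f w| ^ r ≤
        C ^ r * (s ^ r * (⨍ z in Qrs z₀ s σ, D z ^ r) +
          (s⁻¹ * (σ * ⨍ z in Qrs z₀ s σ, ∑ j, |V z j|)) ^ r) := by
  obtain ⟨C, hC1, hC⟩ := exists_isBallCutoff (Spc n)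
  refine ⟨8 * 4 ^ n * 2 ^ n * (n + 1) * C, ?_, ?_⟩
  · have h4 : (1 : ℝ) ≤ 4 ^ n := one_le_pow₀ (by norm_num)
    have h2 : (1 : ℝ) ≤ 2 ^ n := one_le_pow₀ one_le_two
    have hn : (1 : ℝ) ≤ n + 1 := by simp
    nlinarith [one_le_mul_of_one_le_of_one_le (one_le_mul_of_one_le_of_one_le h4 h2)
      (one_le_mul_of_one_le_of_one_le hn hC1)]
  intro z₀ s σ f D g V r hs hσ hfm hf hfg hDm hD0 hgD hV hfV hr hD
  have hr0 : 0 ≤ r := by linarith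
  have := neZero_restrict_Qrs (z₀ := z₀) hs hσ
  obtain ⟨η, hη⟩ := hC z₀.1 s hs
  have hX : 0 ≤ ⨍ z in Qrs z₀ s σ, D z ^ r := integral_nonneg fun z => Real.rpow_nonneg (hD0 z) r
  have hY : 0 ≤ σ * ⨍ z in Qrs z₀ s σ, ∑ j, |V z j| :=
    mul_nonneg hσ.le (integral_nonneg fun z => Finset.sum_nonneg fun j _ => abs_nonneg _)
  refine integrable_and_average_le_of_laverage_le (by fun_prop)
    (fun z => Real.rpow_nonneg (abs_nonneg _) r) (by positivity) ?_
  have key := setLAverage_enorm_sub_setAverage_rpow_le hs hσ hη hfm hf hfg hDm.ennreal_ofReal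
    (fun z j => by
      rw [Real.enorm_eq_ofReal_abs]
      exact ENNReal.ofReal_le_ofReal (hgD z j)) hV hfV hr
  simp only [Real.enorm_eq_ofReal_abs, ENNReal.ofReal_rpow_of_nonneg (abs_nonneg _) hr0,
    ENNReal.ofReal_rpow_of_nonneg (hD0 _) hr0] at key
  refine key.trans (le_trans (le_of_eq ?_)
    (ENNReal.ofReal_le_ofReal (poincare_constant_le hC1 hs hX hY hr)))
  rw [setLAverage_eq, ← ofReal_setAverage hD (ae_of_all _ fun z => Real.rpow_nonneg (hD0 z) r)]
  have hpow : (2 : ℝ≥0∞) ^ n = ENNReal.ofReal (2 ^ n) := by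
    rw [ENNReal.ofReal_pow zero_le_two, ENNReal.ofReal_ofNat]
  rw [ENNReal.ofReal_rpow_of_nonneg (by positivity) hr0,
    ENNReal.ofReal_rpow_of_nonneg (by positivity) hr0,
    ENNReal.ofReal_rpow_of_nonneg (by positivity) hr0, hpow, ← ENNReal.ofReal_natCast,
    ENNReal.ofReal_rpow_of_nonneg (Nat.cast_nonneg n) hr0, ← ENNReal.ofReal_mul (by positivity),
    ← ENNReal.ofReal_mul (by positivity), ← ENNReal.ofReal_mul (by positivity),
    ← ENNReal.ofReal_add (by positivity) (by positivity), ← ENNReal.ofReal_mul (by positivity)]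

end ParabolicPoincare

section PowerAverages

lemma rpow_le_one_add_rpow {x e θ : ℝ} (hx : 0 ≤ x) (he : 0 ≤ e) (heθ : e ≤ θ) :
    x ^ e ≤ 1 + x ^ θ := by
  rcases le_total x 1 with hx1 | hx1
  · exact (Real.rpow_le_one hx hx1 he).trans (le_add_of_nonneg_right (Real.rpow_nonneg hx θ))
  · exact (Real.rpow_le_rpow_of_exponent_le hx1 heθ).trans (le_add_of_nonneg_left zero_le_one)

lemma rpow_rpow_div_cancel {x e θ : ℝ} (hx : 0 ≤ x) (hθ : θ ≠ 0) : (x ^ θ) ^ (e / θ) = x ^ e := by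
  rw [← Real.rpow_mul hx, mul_div_cancel₀ _ hθ]

variable {X : Type*} [MeasurableSpace X] {μ : Measure X} {K : X → ℝ} {e θ : ℝ}

lemma average_nonneg {f : X → ℝ} (hf : 0 ≤ f) : 0 ≤ ⨍ x, f x ∂μ := integral_nonneg hf

variable [IsFiniteMeasure μ]

lemma integrable_rpow_of_le (hK : 0 ≤ K) (hKθ : Integrable (fun x => K x ^ θ) μ) (hθ : 0 < θ)
    (he : 0 ≤ e) (heθ : e ≤ θ) : Integrable (fun x => K x ^ e) μ := by
  have hmeas : AEStronglyMeasurable (fun x => K x ^ e) μ := by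
    simpa only [rpow_rpow_div_cancel (hK _) hθ.ne'] using
      (hKθ.aemeasurable.pow_const (e / θ)).aestronglyMeasurable
  refine ((integrable_const 1).add hKθ).mono' hmeas (ae_of_all _ fun x => ?_)
  rw [Real.norm_of_nonneg (Real.rpow_nonneg (hK x) e)]
  exact rpow_le_one_add_rpow (hK x) he heθ

lemma average_rpow_le_rpow_average [NeZero μ] (hK : 0 ≤ K)
    (hKθ : Integrable (fun x => K x ^ θ) μ) (he : 0 < e) (heθ : e ≤ θ) :
    ⨍ x, K x ^ e ∂μ ≤ (⨍ x, K x ^ θ ∂μ) ^ (e / θ) := by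
  have hθ : 0 < θ := he.trans_le heθ
  have hconcave : ConcaveOn ℝ (Ici 0) fun x : ℝ => x ^ (e / θ) :=
    Real.concaveOn_rpow (by positivity) ((div_le_one hθ).2 heθ)
  have hjensen := hconcave.le_map_average (μ := μ) (f := fun x => K x ^ θ)
    (Real.continuous_rpow_const (by positivity)).continuousOn isClosed_Ici
    (ae_of_all _ fun x => Real.rpow_nonneg (hK x) _) hKθ
    (by simpa only [Function.comp_def, rpow_rpow_div_cancel (hK _) hθ.ne'] using
      integrable_rpow_of_le hK hKθ hθ he.le heθ)
  simpa only [rpow_rpow_div_cancel (hK _) hθ.ne'] using hjensen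

end PowerAverages

section EuclideanNorms

variable {n N : ℕ}

lemma mnorm_nonneg (A : Mat N n) : 0 ≤ mnorm A := Real.sqrt_nonneg _

lemma vnorm_nonneg (v : Vec N) : 0 ≤ vnorm v := Real.sqrt_nonneg _

lemma abs_apply_le_vnorm (v : Vec N) (i : Fin N) : |v i| ≤ vnorm v := by
  refine Real.abs_le_sqrt ?_
  rw [sq]
  exact Finset.single_le_sum (f := fun i => v i * v i) (fun _ _ => mul_self_nonneg _)
    (Finset.mem_univ i)

lemma abs_apply_le_mnorm (A : Mat N n) (i : Fin N) (j : Fin n) : |A i j| ≤ mnorm A := by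
  refine Real.abs_le_sqrt ?_
  rw [sq]
  exact (Finset.single_le_sum (f := fun j => A i j * A i j) (fun _ _ => mul_self_nonneg _)
    (Finset.mem_univ j)).trans (Finset.single_le_sum (f := fun i => ∑ j, A i j * A i j)
      (fun _ _ => Finset.sum_nonneg fun _ _ => mul_self_nonneg _) (Finset.mem_univ i))

lemma vnorm_le_sum_abs (v : Vec N) : vnorm v ≤ ∑ i, |v i| := by
  refine Real.sqrt_le_iff.2 ⟨Finset.sum_nonneg fun _ _ => abs_nonneg _, ?_⟩
  simp only [vdot, ← sq, ← sq_abs (v _)]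
  exact Finset.sum_sq_le_sq_sum_of_nonneg fun _ _ => abs_nonneg _

lemma vnorm_rpow_le_mul_sum_rpow (v : Vec N) {r : ℝ} (hr : 1 ≤ r) :
    vnorm v ^ r ≤ (N : ℝ) ^ (r - 1) * ∑ i, |v i| ^ r :=
  calc vnorm v ^ r ≤ (∑ i, |v i|) ^ r := by
        have := vnorm_nonneg v
        gcongr
        exact vnorm_le_sum_abs v
    _ ≤ (N : ℝ) ^ (r - 1) * ∑ i, |v i| ^ r := by
        simpa using Real.rpow_sum_le_const_mul_sum_rpow Finset.univ v hr

lemma measurable_mnorm : Measurable (mnorm : Mat N n → ℝ) := by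
  unfold mnorm mdot
  fun_prop

end EuclideanNorms

section IntrinsicScaling

variable {lam p q y M B L : ℝ}

lemma rpow_sub_one_le_of_le_mul {t : ℝ} (hlam : 0 < lam) (hM : 1 ≤ M) (hy : 0 ≤ y)
    (hyM : y ≤ M * lam) (ht : 2 ≤ t) (htq : t ≤ q) :
    y ^ (t - 1) ≤ M ^ q * lam ^ (t - 2) * y := by
  have hM0 : 0 ≤ M := by linarith
  calc y ^ (t - 1) = y ^ (t - 2) * y := by
        rw [← Real.rpow_add_one' hy (by linarith)]
        ring_nf
    _ ≤ (M * lam) ^ (t - 2) * y := by gcongr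
    _ = M ^ (t - 2) * lam ^ (t - 2) * y := by rw [Real.mul_rpow hM0 hlam.le]
    _ ≤ M ^ q * lam ^ (t - 2) * y := by gcongr; linarith

-- At the level `y ≲ lam` the `p`-growth and the `q`-growth of the flux both become linear after the
-- intrinsic time scaling `lam ^ (2 - p)`.
lemma rpow_mul_flux_le_of_le_mul (hlam : 0 < lam) (hp : 2 ≤ p) (hpq : p ≤ q) (hM : 1 ≤ M)
    (hy : 0 ≤ y) (hyM : y ≤ M * lam) (hL : 0 ≤ L) (hB : 0 ≤ B) :
    lam ^ (2 - p) * (L * (y ^ (p - 1) + B * lam ^ (p - q) * y ^ (q - 1))) ≤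
      L * (1 + B) * M ^ q * y := by
  have hcancel_p : lam ^ (2 - p) * lam ^ (p - 2) = 1 := by simp [← Real.rpow_add hlam]
  have hcancel_q : lam ^ (p - q) * lam ^ (q - 2) = lam ^ (p - 2) := by simp [← Real.rpow_add hlam]
  calc lam ^ (2 - p) * (L * (y ^ (p - 1) + B * lam ^ (p - q) * y ^ (q - 1)))
      ≤ lam ^ (2 - p) * (L * (M ^ q * lam ^ (p - 2) * y +
          B * lam ^ (p - q) * (M ^ q * lam ^ (q - 2) * y))) := by
        gcongr
        · exact rpow_sub_one_le_of_le_mul hlam hM hy hyM hp hpq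
        · exact rpow_sub_one_le_of_le_mul hlam hM hy hyM (hp.trans hpq) le_rfl
    _ = L * (lam ^ (2 - p) * lam ^ (p - 2) +
          lam ^ (2 - p) * (lam ^ (p - q) * lam ^ (q - 2)) * B) * M ^ q * y := by ring
    _ = L * (1 + B) * M ^ q * y := by rw [hcancel_q, hcancel_p, one_mul]

lemma mul_rpow_le_of_le_mul_rpow_sub {b : ℝ} (hlam : 0 < lam) (hp : 0 < p) (hpq : p ≤ q)
    (hM : 0 ≤ M) (hy : 0 ≤ y) (hyM : y ≤ M * lam) (hB : 0 ≤ B) (hb : b ≤ B * lam ^ (p - q)) :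
    b * y ^ q ≤ B * M ^ (q - p) * y ^ p := by
  have hcancel : lam ^ (p - q) * lam ^ (q - p) = 1 := by simp [← Real.rpow_add hlam]
  calc b * y ^ q ≤ B * lam ^ (p - q) * y ^ q := by gcongr
    _ = B * lam ^ (p - q) * y ^ (q - p) * y ^ p := by
        rw [mul_assoc _ _ (y ^ p), ← Real.rpow_add' hy (by linarith), sub_add_cancel]
    _ ≤ B * lam ^ (p - q) * (M * lam) ^ (q - p) * y ^ p := by gcongr
    _ = B * (lam ^ (p - q) * lam ^ (q - p)) * M ^ (q - p) * y ^ p := by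
        rw [Real.mul_rpow hM hlam.le]
        ring
    _ = B * M ^ (q - p) * y ^ p := by rw [hcancel, mul_one]

lemma rpow_mul_rpow_le_of_mul_rpow_le {b x W E θ : ℝ} (hb : 0 ≤ b) (hx : 0 ≤ x) (hxy : x ≤ W * y)
    (hW : 0 ≤ W) (hy : 0 ≤ y) (hq : 0 ≤ q) (hE : 0 ≤ E) (hbE : b * y ^ q ≤ E * y ^ p)
    (hθ : 0 ≤ θ) (hθ1 : θ ≤ 1) :
    b ^ θ * x ^ (θ * q) ≤ (1 + W ^ q * E) * y ^ (θ * p) := by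
  have hbase : b * x ^ q ≤ W ^ q * E * y ^ p :=
    calc b * x ^ q ≤ b * (W * y) ^ q := by gcongr
      _ = W ^ q * (b * y ^ q) := by rw [Real.mul_rpow hW hy]; ring
      _ ≤ W ^ q * (E * y ^ p) := by gcongr _ * ?_
      _ = W ^ q * E * y ^ p := by ring
  calc b ^ θ * x ^ (θ * q) = (b * x ^ q) ^ θ := by
        rw [mul_comm θ q, Real.rpow_mul hx, ← Real.mul_rpow hb (by positivity)]
    _ ≤ (W ^ q * E * y ^ p) ^ θ := by gcongr
    _ = (W ^ q * E) ^ θ * y ^ (θ * p) := by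
        rw [Real.mul_rpow (by positivity) (by positivity), mul_comm θ p, Real.rpow_mul hy]
    _ ≤ (1 + W ^ q * E) * y ^ (θ * p) := by
        gcongr
        simpa only [Real.rpow_one] using
          rpow_le_one_add_rpow (x := W ^ q * E) (by positivity) hθ hθ1

end IntrinsicScaling

section IntrinsicSystem

variable {n N : ℕ}

instance isFiniteMeasure_restrict_Qp (p : ℝ) (z₀ : Pt n) (lam s : ℝ) :
    IsFiniteMeasure (volume.restrict (Qp p z₀ lam s)) :=
  isFiniteMeasure_restrict_Qrs

lemma neZero_restrict_Qp (p : ℝ) (z₀ : Pt n) {lam s : ℝ} (hlam : 0 < lam) (hs : 0 < s) :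
    NeZero (volume.restrict (Qp p z₀ lam s)) :=
  neZero_restrict_Qrs hs (by positivity)

/-- A map `u` with weak spatial gradient `Du` solving `∂ₜu = div V` on the `p`-intrinsic cylinder
`Qp p z₀ lam s`, where the flux `V` obeys double-phase growth bounds in terms of an energy density
`K`. The constants `L`, `B`, `M` measure the growth of the flux, the size of the coefficient `a`
relative to the phase switch `lam ^ (p - q)`, and the size of `K` relative to `lam ^ p`. -/
structure IsPIntrinsicSystem (p q θ L B M : ℝ) (z₀ : Pt n) (lam s : ℝ) (a K : Pt n → ℝ)
    (u : Pt n → Vec N) (Du V : Pt n → Mat N n) : Prop where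
  two_le : 2 ≤ p
  p_le_q : p ≤ q
  theta_mem : θ ∈ Icc ((q - 1) / p) 1
  L_nonneg : 0 ≤ L
  one_le_M : 1 ≤ M
  lam_pos : 0 < lam
  s_pos : 0 < s
  measurable_u : Measurable u
  integrableOn_u : ∀ i, IntegrableOn (fun z => u z i) (Qp p z₀ lam s)
  measurable_Du : Measurable Du
  integrableOn_V : ∀ i j, IntegrableOn (fun z => V z i j) (Qp p z₀ lam s)
  a_nonneg : ∀ z ∈ Qp p z₀ lam s, 0 ≤ a z
  a_le : ∀ z ∈ Qp p z₀ lam s, a z ≤ B * lam ^ (p - q)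
  K_nonneg : 0 ≤ K
  mul_mnorm_rpow_le : ∀ z ∈ Qp p z₀ lam s, a z * mnorm (Du z) ^ q ≤ K z
  integrableOn_K : IntegrableOn (fun z => K z ^ θ) (Qp p z₀ lam s)
  average_K_le : ⨍ z in Qp p z₀ lam s, K z ^ θ ≤ (M * lam) ^ (θ * p)
  abs_V_le : ∀ᵐ z ∂(volume.restrict (Qp p z₀ lam s)), ∀ i j,
    |V z i j| ≤ L * (K z ^ ((p - 1) / p) + a z * K z ^ ((q - 1) / p))
  weakGrad : ∀ i, HasWeakSpatialGradOn (fun z => u z i) (fun z => Du z i) (Qp p z₀ lam s)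
  weakTimeDeriv : ∀ i, HasWeakTimeDerivDivOn (fun z => u z i) (fun z => V z i) (Qp p z₀ lam s)

namespace IsPIntrinsicSystem

variable {p q θ L B M : ℝ} {z₀ : Pt n} {lam s : ℝ} {a K : Pt n → ℝ}
  {u : Pt n → Vec N} {Du V : Pt n → Mat N n}

lemma p_pos (h : IsPIntrinsicSystem p q θ L B M z₀ lam s a K u Du V) : 0 < p := by
  linarith [h.two_le]

lemma q_sub_one_le (h : IsPIntrinsicSystem p q θ L B M z₀ lam s a K u Du V) : q - 1 ≤ θ * p :=
  (div_le_iff₀ h.p_pos).1 h.theta_mem.1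

lemma theta_pos (h : IsPIntrinsicSystem p q θ L B M z₀ lam s a K u Du V) : 0 < θ :=
  pos_of_mul_pos_left (by linarith [h.q_sub_one_le, h.two_le, h.p_le_q]) h.p_pos.le

lemma one_le_theta_mul_q (h : IsPIntrinsicSystem p q θ L B M z₀ lam s a K u Du V) :
    1 ≤ θ * q := by
  have := mul_le_mul_of_nonneg_left h.p_le_q h.theta_pos.le
  linarith [h.q_sub_one_le, h.two_le, h.p_le_q]

lemma center_mem (h : IsPIntrinsicSystem p q θ L B M z₀ lam s a K u Du V) :
    z₀ ∈ Qp p z₀ lam s := by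
  have := h.lam_pos
  have := h.s_pos
  have : 0 < lam ^ (2 - p) * s ^ 2 := by positivity
  exact ⟨mem_ball_self h.s_pos, by linarith, by linarith⟩

lemma B_nonneg (h : IsPIntrinsicSystem p q θ L B M z₀ lam s a K u Du V) : 0 ≤ B :=
  nonneg_of_mul_nonneg_left ((h.a_nonneg z₀ h.center_mem).trans (h.a_le z₀ h.center_mem))
    (Real.rpow_pos_of_pos h.lam_pos _)

lemma average_K_nonneg (h : IsPIntrinsicSystem p q θ L B M z₀ lam s a K u Du V) :
    0 ≤ ⨍ z in Qp p z₀ lam s, K z ^ θ :=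
  average_nonneg fun z => Real.rpow_nonneg (h.K_nonneg z) θ

lemma rpow_average_K_le (h : IsPIntrinsicSystem p q θ L B M z₀ lam s a K u Du V) :
    (⨍ z in Qp p z₀ lam s, K z ^ θ) ^ (1 / (θ * p)) ≤ M * lam := by
  have hθp : 0 < θ * p := mul_pos h.theta_pos h.p_pos
  have hMlam : 0 ≤ M * lam := mul_nonneg (by linarith [h.one_le_M]) h.lam_pos.le
  refine (Real.rpow_le_rpow h.average_K_nonneg h.average_K_le (by positivity)).trans_eq ?_
  rw [← Real.rpow_mul hMlam, mul_one_div_cancel hθp.ne', Real.rpow_one]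

lemma integrableOn_K_rpow (h : IsPIntrinsicSystem p q θ L B M z₀ lam s a K u Du V) {t : ℝ}
    (ht : 1 ≤ t) (htq : t ≤ q) :
    IntegrableOn (fun z => K z ^ ((t - 1) / p)) (Qp p z₀ lam s) := by
  have := h.p_pos
  refine integrable_rpow_of_le h.K_nonneg h.integrableOn_K h.theta_pos
    (div_nonneg (by linarith) h.p_pos.le) (le_trans ?_ h.theta_mem.1)
  gcongr

lemma average_K_rpow_le (h : IsPIntrinsicSystem p q θ L B M z₀ lam s a K u Du V) {t : ℝ}
    (ht : 1 < t) (htq : t ≤ q) :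
    ⨍ z in Qp p z₀ lam s, K z ^ ((t - 1) / p) ≤
      ((⨍ z in Qp p z₀ lam s, K z ^ θ) ^ (1 / (θ * p))) ^ (t - 1) := by
  have := neZero_restrict_Qp p z₀ h.lam_pos h.s_pos
  have hp := h.p_pos
  have hexp : (t - 1) / p ≤ (q - 1) / p := by gcongr
  refine (average_rpow_le_rpow_average h.K_nonneg h.integrableOn_K
    (div_pos (by linarith) hp) (hexp.trans h.theta_mem.1)).trans_eq ?_
  rw [← Real.rpow_mul h.average_K_nonneg]
  congr 1
  field_simp

lemma sum_abs_V_le (h : IsPIntrinsicSystem p q θ L B M z₀ lam s a K u Du V) (i : Fin N) :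
    ∀ᵐ z ∂(volume.restrict (Qp p z₀ lam s)), ∑ j, |V z i j| ≤
      n * L * (K z ^ ((p - 1) / p) + B * lam ^ (p - q) * K z ^ ((q - 1) / p)) := by
  filter_upwards [h.abs_V_le, ae_restrict_mem (measurableSet_Qrs z₀ s (lam ^ (2 - p) * s ^ 2))]
    with z hV hz
  have hL := h.L_nonneg
  have hK := Real.rpow_nonneg (h.K_nonneg z) ((q - 1) / p)
  calc ∑ j, |V z i j|
      ≤ ∑ _j : Fin n, L * (K z ^ ((p - 1) / p) + B * lam ^ (p - q) * K z ^ ((q - 1) / p)) := by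
        refine Finset.sum_le_sum fun j _ => (hV i j).trans ?_
        gcongr
        exact h.a_le z hz
    _ = _ := by simp [mul_assoc]

lemma rpow_mul_average_sum_abs_V_le (h : IsPIntrinsicSystem p q θ L B M z₀ lam s a K u Du V)
    (i : Fin N) :
    lam ^ (2 - p) * ⨍ z in Qp p z₀ lam s, ∑ j, |V z i j| ≤
      n * L * (1 + B) * M ^ q * (⨍ z in Qp p z₀ lam s, K z ^ θ) ^ (1 / (θ * p)) := by
  have hp := h.two_le
  have hpq := h.p_le_q
  have hlam := h.lam_pos
  have hB := h.B_nonneg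
  have hnL : 0 ≤ n * L := mul_nonneg n.cast_nonneg h.L_nonneg
  have hKp := h.integrableOn_K_rpow (by linarith) hpq
  have hKq := h.integrableOn_K_rpow (by linarith) (le_refl q)
  have hmean : ⨍ z in Qp p z₀ lam s, ∑ j, |V z i j| ≤
      n * L * ((⨍ z in Qp p z₀ lam s, K z ^ ((p - 1) / p)) +
        B * lam ^ (p - q) * ⨍ z in Qp p z₀ lam s, K z ^ ((q - 1) / p)) := by
    have hVint : IntegrableOn (fun z => ∑ j, |V z i j|) (Qp p z₀ lam s) :=
      integrable_finsetSum _ fun j _ => (h.integrableOn_V i j).abs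
    have hmono := integral_mono_ae hVint ((hKp.add (hKq.const_mul (B * lam ^ (p - q)))).const_mul
      (n * L)) (h.sum_abs_V_le i)
    simp only [Pi.add_apply] at hmono
    rw [integral_const_mul, integral_add hKp (hKq.const_mul _), integral_const_mul] at hmono
    simp only [setAverage_eq, smul_eq_mul]
    calc _ ≤ _ := mul_le_mul_of_nonneg_left hmono (inv_nonneg.2 measureReal_nonneg)
      _ = _ := by ring
  refine le_trans ?_ (rpow_mul_flux_le_of_le_mul hlam hp hpq h.one_le_M
    (Real.rpow_nonneg h.average_K_nonneg _) h.rpow_average_K_le hnL hB)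
  refine mul_le_mul_of_nonneg_left (hmean.trans ?_) (by positivity)
  gcongr
  · exact h.average_K_rpow_le (by linarith) hpq
  · exact h.average_K_rpow_le (by linarith) le_rfl

variable {b : ℝ}

lemma rpow_mul_mnorm_rpow_le (h : IsPIntrinsicSystem p q θ L B M z₀ lam s a K u Du V)
    (hb : 0 ≤ b) {z : Pt n} (hz : z ∈ Qp p z₀ lam s) (hba : b ≤ a z) :
    b ^ θ * mnorm (Du z) ^ (θ * q) ≤ K z ^ θ := by
  have hDu := mnorm_nonneg (Du z)
  have hθ := h.theta_pos
  rw [mul_comm θ q, Real.rpow_mul hDu, ← Real.mul_rpow hb (by positivity)]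
  gcongr
  exact (by gcongr : b * mnorm (Du z) ^ q ≤ a z * mnorm (Du z) ^ q).trans
    (h.mul_mnorm_rpow_le z hz)

lemma integrableOn_rpow_mul_mnorm_rpow
    (h : IsPIntrinsicSystem p q θ L B M z₀ lam s a K u Du V) (hb : 0 ≤ b)
    (hba : ∀ z ∈ Qp p z₀ lam s, b ≤ a z) :
    IntegrableOn (fun z => b ^ θ * mnorm (Du z) ^ (θ * q)) (Qp p z₀ lam s) := by
  have hmeas : Measurable fun z => b ^ θ * mnorm (Du z) ^ (θ * q) :=
    ((measurable_mnorm.comp h.measurable_Du).pow_const _).const_mul _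
  refine h.integrableOn_K.mono' hmeas.aestronglyMeasurable ?_
  filter_upwards [ae_restrict_mem (measurableSet_Qrs z₀ s (lam ^ (2 - p) * s ^ 2))] with z hz
  have := mnorm_nonneg (Du z)
  rw [Real.norm_of_nonneg (by positivity)]
  exact h.rpow_mul_mnorm_rpow_le hb hz (hba z hz)

lemma rpow_mul_average_mnorm_rpow_le
    (h : IsPIntrinsicSystem p q θ L B M z₀ lam s a K u Du V) (hb : 0 ≤ b)
    (hba : ∀ z ∈ Qp p z₀ lam s, b ≤ a z) :
    b ^ θ * ⨍ z in Qp p z₀ lam s, mnorm (Du z) ^ (θ * q) ≤ ⨍ z in Qp p z₀ lam s, K z ^ θ := by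
  simp only [setAverage_eq, smul_eq_mul]
  rw [mul_left_comm, ← integral_const_mul]
  refine mul_le_mul_of_nonneg_left (setIntegral_mono_on
    (h.integrableOn_rpow_mul_mnorm_rpow hb hba) h.integrableOn_K (measurableSet_Qrs _ _ _)
    fun z hz => h.rpow_mul_mnorm_rpow_le hb hz (hba z hz)) (inv_nonneg.2 measureReal_nonneg)

lemma rpow_mul_time_term_le (h : IsPIntrinsicSystem p q θ L B M z₀ lam s a K u Du V) (hb : 0 ≤ b)
    (hba : ∀ z ∈ Qp p z₀ lam s, b ≤ a z) (i : Fin N) :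
    b ^ θ * (lam ^ (2 - p) * ⨍ z in Qp p z₀ lam s, ∑ j, |V z i j|) ^ (θ * q) ≤
      (1 + (n * L * (1 + B) * M ^ q) ^ q * (B * M ^ (q - p))) *
        ⨍ z in Qp p z₀ lam s, K z ^ θ := by
  have hB := h.B_nonneg
  have hL := h.L_nonneg
  have hM : 0 ≤ M := by linarith [h.one_le_M]
  have hlam := h.lam_pos
  have hV : 0 ≤ ⨍ z in Qp p z₀ lam s, ∑ j, |V z i j| :=
    average_nonneg fun z => Finset.sum_nonneg fun j _ => abs_nonneg _
  have hy : 0 ≤ (⨍ z in Qp p z₀ lam s, K z ^ θ) ^ (1 / (θ * p)) :=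
    Real.rpow_nonneg h.average_K_nonneg _
  have hb_le : b ≤ B * lam ^ (p - q) := (hba z₀ h.center_mem).trans (h.a_le z₀ h.center_mem)
  refine (rpow_mul_rpow_le_of_mul_rpow_le (p := p) hb (by positivity)
    (h.rpow_mul_average_sum_abs_V_le i) (by positivity) hy (h.p_pos.le.trans h.p_le_q)
    (by positivity) (mul_rpow_le_of_le_mul_rpow_sub hlam h.p_pos h.p_le_q hM hy
      h.rpow_average_K_le hB hb_le) h.theta_pos.le h.theta_mem.2).trans_eq ?_
  rw [← Real.rpow_mul h.average_K_nonneg, one_div_mul_cancel (mul_pos h.theta_pos h.p_pos).ne',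
    Real.rpow_one]

lemma integrableOn_mnorm_rpow (h : IsPIntrinsicSystem p q θ L B M z₀ lam s a K u Du V)
    (hb : 0 < b) (hba : ∀ z ∈ Qp p z₀ lam s, b ≤ a z) :
    IntegrableOn (fun z => mnorm (Du z) ^ (θ * q)) (Qp p z₀ lam s) := by
  have hbθ : b ^ θ ≠ 0 := (Real.rpow_pos_of_pos hb θ).ne'
  exact (integrable_const_mul_iff hbθ.isUnit _).1 (h.integrableOn_rpow_mul_mnorm_rpow hb.le hba)

end IsPIntrinsicSystem

lemma exists_average_component_rpow_le (n : ℕ) : ∃ C : ℝ, 1 ≤ C ∧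
    ∀ {N : ℕ} {p q θ L B M : ℝ} {z₀ : Pt n} {lam s b : ℝ} {a K : Pt n → ℝ}
      {u : Pt n → Vec N} {Du V : Pt n → Mat N n},
      IsPIntrinsicSystem p q θ L B M z₀ lam s a K u Du V → 0 < b →
      (∀ z ∈ Qp p z₀ lam s, b ≤ a z) → ∀ i,
      IntegrableOn (fun z => |(u z - vavg u (Qp p z₀ lam s)) i| ^ (θ * q)) (Qp p z₀ lam s) ∧
        b ^ θ * ⨍ z in Qp p z₀ lam s, |(u z - vavg u (Qp p z₀ lam s)) i| ^ (θ * q) ≤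
          (C * s) ^ (θ * q) * ((2 + (n * L * (1 + B) * M ^ q) ^ q * (B * M ^ (q - p))) *
            ⨍ z in Qp p z₀ lam s, K z ^ θ) := by
  obtain ⟨C, hC, hpoincare⟩ := exists_setAverage_abs_sub_rpow_le n
  refine ⟨C, hC, fun {N p q θ L B M z₀ lam s b a K u Du V} h hb hba i => ?_⟩
  have hs := h.s_pos
  have hlam := h.lam_pos
  have hV : 0 ≤ ⨍ z in Qp p z₀ lam s, ∑ j, |V z i j| :=
    average_nonneg fun z => Finset.sum_nonneg fun j _ => abs_nonneg _
  obtain ⟨hint, hle⟩ := hpoincare hs (by positivity : 0 < lam ^ (2 - p) * s ^ 2)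
    ((measurable_pi_apply i).comp h.measurable_u) (h.integrableOn_u i) (h.weakGrad i)
    (measurable_mnorm.comp h.measurable_Du) (fun z => mnorm_nonneg (Du z))
    (fun z j => abs_apply_le_mnorm (Du z) i j) (h.integrableOn_V i) (h.weakTimeDeriv i)
    h.one_le_theta_mul_q (h.integrableOn_mnorm_rpow hb hba)
  refine ⟨hint, (mul_le_mul_of_nonneg_left hle (by positivity)).trans ?_⟩
  have hscale (x : ℝ) : s⁻¹ * (lam ^ (2 - p) * s ^ 2 * x) = s * (lam ^ (2 - p) * x) := by
    field_simp
  rw [hscale, Real.mul_rpow hs.le (by positivity), ← mul_add, ← mul_assoc _ (s ^ _),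
    ← Real.mul_rpow (by linarith) hs.le, mul_left_comm]
  refine mul_le_mul_of_nonneg_left ?_ (by positivity)
  rw [mul_add]
  refine (add_le_add (h.rpow_mul_average_mnorm_rpow_le hb.le hba)
    (h.rpow_mul_time_term_le hb.le hba i)).trans_eq ?_
  ring

lemma average_vnorm_rpow_le_sum {E : Set (Pt n)} {w : Pt n → Vec N} {r : ℝ} (hr : 1 ≤ r)
    (hw : ∀ i, IntegrableOn (fun z => |w z i| ^ r) E) :
    ⨍ z in E, vnorm (w z) ^ r ≤ (N : ℝ) ^ (r - 1) * ∑ i, ⨍ z in E, |w z i| ^ r := by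
  have hmono : ∫ z in E, vnorm (w z) ^ r ≤ ∫ z in E, (N : ℝ) ^ (r - 1) * ∑ i, |w z i| ^ r :=
    integral_mono_of_nonneg (ae_of_all _ fun z => Real.rpow_nonneg (vnorm_nonneg _) _)
      ((integrable_finsetSum _ fun i _ => hw i).const_mul _)
      (ae_of_all _ fun z => vnorm_rpow_le_mul_sum_rpow (w z) hr)
  rw [integral_const_mul, integral_finsetSum _ fun i _ => hw i] at hmono
  simp only [setAverage_eq, smul_eq_mul, ← Finset.mul_sum]
  rw [mul_left_comm]
  exact mul_le_mul_of_nonneg_left hmono (inv_nonneg.2 measureReal_nonneg)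

lemma natCast_rpow_sub_one_mul_self_le (N : ℕ) {r q : ℝ} (hr : 1 ≤ r) (hrq : r ≤ q) :
    (N : ℝ) ^ (r - 1) * N ≤ (N + 1 : ℝ) ^ q := by
  have : (0 : ℝ) ≤ N := N.cast_nonneg
  calc (N : ℝ) ^ (r - 1) * N ≤ (N + 1 : ℝ) ^ (r - 1) * (N + 1 : ℝ) := by
        gcongr <;> linarith
    _ = (N + 1 : ℝ) ^ r := by
        rw [← Real.rpow_add_one (by positivity), sub_add_cancel]
    _ ≤ (N + 1 : ℝ) ^ q := Real.rpow_le_rpow_of_exponent_le (by linarith) hrq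

lemma exists_average_vnorm_rpow_le (n N : ℕ) (q : ℝ) : ∃ C : ℝ, 0 < C ∧
    ∀ {p θ L B M : ℝ} {z₀ : Pt n} {lam s b : ℝ} {a K : Pt n → ℝ}
      {u : Pt n → Vec N} {Du V : Pt n → Mat N n},
      IsPIntrinsicSystem p q θ L B M z₀ lam s a K u Du V → 0 < b →
      (∀ z ∈ Qp p z₀ lam s, b ≤ a z) →
        b ^ θ * ⨍ z in Qp p z₀ lam s, vnorm (u z - vavg u (Qp p z₀ lam s)) ^ (θ * q) ≤
          s ^ (θ * q) * (C * ((2 + (n * L * (1 + B) * M ^ q) ^ q * (B * M ^ (q - p))) *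
            ⨍ z in Qp p z₀ lam s, K z ^ θ)) := by
  obtain ⟨C, hC, hcomponent⟩ := exists_average_component_rpow_le n
  refine ⟨(N + 1 : ℝ) ^ q * C ^ q, by positivity,
    fun {p θ L B M z₀ lam s b a K u Du V} h hb hba => ?_⟩
  have hr := h.one_le_theta_mul_q
  have hrq : θ * q ≤ q :=
    mul_le_of_le_one_left (h.p_pos.le.trans h.p_le_q) h.theta_mem.2
  have hs := h.s_pos
  have hL := h.L_nonneg
  have hB := h.B_nonneg
  have hM : 0 ≤ M := by linarith [h.one_le_M]
  have hK := h.average_K_nonneg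
  set Y := (2 + (n * L * (1 + B) * M ^ q) ^ q * (B * M ^ (q - p))) *
    ⨍ z in Qp p z₀ lam s, K z ^ θ
  have : 0 ≤ Y := by positivity
  calc b ^ θ * ⨍ z in Qp p z₀ lam s, vnorm (u z - vavg u (Qp p z₀ lam s)) ^ (θ * q)
      ≤ b ^ θ * ((N : ℝ) ^ (θ * q - 1) *
          ∑ i, ⨍ z in Qp p z₀ lam s, |(u z - vavg u (Qp p z₀ lam s)) i| ^ (θ * q)) := by
        gcongr
        exact average_vnorm_rpow_le_sum hr fun i => (hcomponent h hb hba i).1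
    _ = (N : ℝ) ^ (θ * q - 1) * ∑ i,
          b ^ θ * ⨍ z in Qp p z₀ lam s, |(u z - vavg u (Qp p z₀ lam s)) i| ^ (θ * q) := by
        rw [mul_left_comm, Finset.mul_sum]
    _ ≤ (N : ℝ) ^ (θ * q - 1) * ∑ _i : Fin N, (C * s) ^ (θ * q) * Y :=
        mul_le_mul_of_nonneg_left
          (Finset.sum_le_sum fun i _ => (hcomponent h hb hba i).2) (by positivity)
    _ = s ^ (θ * q) * (((N : ℝ) ^ (θ * q - 1) * N) * C ^ (θ * q) * Y) := by
        rw [Real.mul_rpow (by linarith) hs.le]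
        simp only [Finset.sum_const, Finset.card_univ, Fintype.card_fin, nsmul_eq_mul]
        ring
    _ ≤ s ^ (θ * q) * ((N + 1 : ℝ) ^ q * C ^ q * Y) := by
        gcongr
        exact natCast_rpow_sub_one_mul_self_le N hr hrq

end IntrinsicSystem

section TestFunctions

variable {n N : ℕ}

lemma tsupport_pi_single_subset {X : Type*} [TopologicalSpace X] (i : Fin N) (Ψ : X → ℝ) :
    tsupport (fun z => (Pi.single i (Ψ z) : Vec N)) ⊆ tsupport Ψ :=
  closure_mono fun z hz hΨz => hz (by simp only [hΨz, Pi.single_zero])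

lemma vdot_dtd_pi_single {Ψ : Pt n → ℝ} {z : Pt n} (hΨ : DifferentiableAt ℝ Ψ z) (v : Vec N)
    (i : Fin N) :
    vdot v (dtd (fun w => Pi.single i (Ψ w)) z) = v i * fderiv ℝ Ψ z (0, 1) := by
  have hderiv := ((ContinuousLinearMap.single ℝ (fun _ : Fin N => ℝ) i).hasFDerivAt.comp z
    hΨ.hasFDerivAt).fderiv
  simp only [Function.comp_def, ContinuousLinearMap.single_apply] at hderiv
  simp [vdot, dtd, hderiv, Pi.single_apply]

lemma mdot_gradm_pi_single (Ψ : Pt n → ℝ) (z : Pt n) (A : Mat N n) (i : Fin N) :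
    mdot A (gradm (fun w => Pi.single i (Ψ w)) z) = ∑ j, A i j * dxj Ψ j z := by
  rw [mdot, Finset.sum_eq_single_of_mem i (Finset.mem_univ i)]
  · simp only [gradm, dxj, Pi.single_eq_same]
  · intro k _ hk
    simp [gradm, Pi.single_eq_of_ne hk]

lemma integrableOn_mul_fderiv_apply {E : Type*} [NormedAddCommGroup E] [NormedSpace ℝ E]
    [MeasurableSpace E] [OpensMeasurableSpace E] {μ : Measure E} {g Ψ : E → ℝ} {Q : Set E}
    (hg : IntegrableOn g Q μ) (hΨ : ContDiff ℝ (⊤ : ℕ∞) Ψ) (hΨc : HasCompactSupport Ψ) (v : E) :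
    IntegrableOn (fun z => g z * fderiv ℝ Ψ z v) Q μ := by
  have hcont : Continuous fun z => fderiv ℝ Ψ z v :=
    (hΨ.continuous_fderiv (by norm_num)).clm_apply continuous_const
  obtain ⟨C, hC⟩ := (hΨc.fderiv_apply ℝ v).exists_bound_of_continuous hcont
  exact Integrable.mul_bdd (c := C) hg hcont.aestronglyMeasurable (ae_of_all _ hC)

end TestFunctions

section DoublePhaseSystem

variable {n N : ℕ} {p q α L₁ L₂ aH : ℝ}

/-- The energy density `H(z,|∇u|) + H(z,|F|)`. -/
def energyDensity (S : Setting n N p q α L₁ L₂ aH) (Du : Pt n → Mat N n) (z : Pt n) : ℝ :=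
  HDu S Du z + HFf S z

/-- The total flux `𝒜(z,∇u) - (|F|^{p-2}F + a|F|^{q-2}F)`, so that the system reads
`∂ₜu = div (totalFlux S Du)`. -/
def totalFlux (S : Setting n N p q α L₁ L₂ aH) (Du : Pt n → Mat N n) (z : Pt n) : Mat N n :=
  fun i j => S.A z (Du z) i j - rhsF S z i j

lemma rpow_le_rpow_div_of_rpow_le {t E e : ℝ} (ht : 0 ≤ t) (hp : 0 < p) (hE : t ^ p ≤ E)
    (he : 0 ≤ e) : t ^ e ≤ E ^ (e / p) := by
  rw [← rpow_rpow_div_cancel ht hp.ne']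
  gcongr

variable (S : Setting n N p q α L₁ L₂ aH) (Du : Pt n → Mat N n)

lemma HDu_nonneg : 0 ≤ HDu S Du := fun z =>
  add_nonneg (Real.rpow_nonneg (mnorm_nonneg _) _)
    (mul_nonneg (S.ha0 z) (Real.rpow_nonneg (mnorm_nonneg _) _))

lemma HFf_nonneg : 0 ≤ HFf S := HDu_nonneg S S.F

lemma energyDensity_nonneg : 0 ≤ energyDensity S Du :=
  add_nonneg (HDu_nonneg S Du) (HFf_nonneg S)

lemma HDu_le_energyDensity (z : Pt n) : HDu S Du z ≤ energyDensity S Du z :=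
  le_add_of_nonneg_right (HFf_nonneg S z)

lemma HFf_le_energyDensity (z : Pt n) : HFf S z ≤ energyDensity S Du z :=
  le_add_of_nonneg_left (HDu_nonneg S Du z)

lemma mnorm_rpow_le_HDu (z : Pt n) : mnorm (Du z) ^ p ≤ HDu S Du z :=
  le_add_of_nonneg_right (mul_nonneg (S.ha0 z) (Real.rpow_nonneg (mnorm_nonneg _) _))

lemma mul_mnorm_rpow_le_HDu (z : Pt n) : S.a z * mnorm (Du z) ^ q ≤ HDu S Du z :=
  le_add_of_nonneg_left (Real.rpow_nonneg (mnorm_nonneg _) _)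

lemma measurable_HDu {Du : Pt n → Mat N n} (hDu : Measurable Du) : Measurable (HDu S Du) := by
  have hnorm : Measurable fun z => mnorm (Du z) := measurable_mnorm.comp hDu
  exact (hnorm.pow_const p).add (S.haM.mul (hnorm.pow_const q))

lemma abs_rhsF_le (z : Pt n) (i : Fin N) (j : Fin n) :
    |rhsF S z i j| ≤ mnorm (S.F z) ^ (p - 1) + S.a z * mnorm (S.F z) ^ (q - 1) := by
  have ha := S.ha0 z
  have hnorm := mnorm_nonneg (S.F z)
  have hsplit {t : ℝ} (ht : 2 < t) :
      mnorm (S.F z) ^ (t - 1) = mnorm (S.F z) ^ (t - 2) * mnorm (S.F z) := by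
    rw [← Real.rpow_add_one' hnorm (by linarith)]
    ring_nf
  rw [hsplit S.hp2, hsplit (S.hp2.trans S.hpq), rhsF]
  refine (abs_add_le _ _).trans ?_
  rw [abs_mul, abs_mul, abs_mul, abs_of_nonneg ha, abs_of_nonneg (Real.rpow_nonneg hnorm _),
    abs_of_nonneg (Real.rpow_nonneg hnorm _), mul_assoc]
  gcongr <;> exact abs_apply_le_mnorm _ _ _

lemma growth_le_growth_energyDensity {t : ℝ} (ht : 0 ≤ t) {z : Pt n}
    (hle : t ^ p ≤ energyDensity S Du z) :
    t ^ (p - 1) + S.a z * t ^ (q - 1) ≤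
      energyDensity S Du z ^ ((p - 1) / p) + S.a z * energyDensity S Du z ^ ((q - 1) / p) := by
  have hp := S.hp2
  have hpq := S.hpq
  have ha := S.ha0 z
  have hpow {e : ℝ} (he : 0 ≤ e) := rpow_le_rpow_div_of_rpow_le ht (by linarith) hle he
  gcongr
  · exact hpow (by linarith)
  · exact hpow (by linarith)

lemma abs_rhsF_le_energyDensity (z : Pt n) (i : Fin N) (j : Fin n) :
    |rhsF S z i j| ≤
      energyDensity S Du z ^ ((p - 1) / p) + S.a z * energyDensity S Du z ^ ((q - 1) / p) :=
  (abs_rhsF_le S z i j).trans (growth_le_growth_energyDensity S Du (mnorm_nonneg _)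
    ((mnorm_rpow_le_HDu S S.F z).trans (HFf_le_energyDensity S Du z)))

lemma ae_abs_A_le_energyDensity : ∀ᵐ z ∂(volume.restrict (cyl S.Ω S.T)), ∀ i j,
    |S.A z (Du z) i j| ≤ L₂ *
      (energyDensity S Du z ^ ((p - 1) / p) + S.a z * energyDensity S Du z ^ ((q - 1) / p)) := by
  have hL : 0 ≤ L₂ := S.hL₁.le.trans S.hL₁₂
  filter_upwards [S.hAgrow] with z hz i j
  exact (abs_apply_le_mnorm _ i j).trans ((hz (Du z)).trans (mul_le_mul_of_nonneg_left
    (growth_le_growth_energyDensity S Du (mnorm_nonneg _)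
      ((mnorm_rpow_le_HDu S Du z).trans (HDu_le_energyDensity S Du z))) hL))

lemma ae_abs_totalFlux_le : ∀ᵐ z ∂(volume.restrict (cyl S.Ω S.T)), ∀ i j,
    |totalFlux S Du z i j| ≤ (L₂ + 1) *
      (energyDensity S Du z ^ ((p - 1) / p) + S.a z * energyDensity S Du z ^ ((q - 1) / p)) := by
  filter_upwards [ae_abs_A_le_energyDensity S Du] with z hz i j
  rw [add_one_mul]
  exact (abs_sub _ _).trans (add_le_add (hz i j) (abs_rhsF_le_energyDensity S Du z i j))

lemma measurable_rhsF_apply (i : Fin N) (j : Fin n) : Measurable fun z => rhsF S z i j := by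
  have hnorm : Measurable fun z => mnorm (S.F z) := measurable_mnorm.comp S.hFM
  have ha := S.haM
  have hF := S.hFM
  unfold rhsF
  fun_prop

lemma measurable_A_apply {Du : Pt n → Mat N n} (hDu : Measurable Du) (i : Fin N) (j : Fin n) :
    Measurable fun z => S.A z (Du z) i j := by
  have hA : Measurable fun z => S.A z (Du z) := S.hAM.comp (measurable_id.prodMk hDu)
  fun_prop

variable {S Du} {u : Pt n → Vec N} {δ : ℝ} {Q : Set (Pt n)}

namespace VeryWeakSolution

lemma integrableOn_apply (hu : VeryWeakSolution S u Du δ) (hQ : Q ⊆ cyl S.Ω S.T) (i : Fin N) :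
    IntegrableOn (fun z => u z i) Q :=
  (hu.huL1.mono_set hQ).mono' ((measurable_pi_apply i).comp hu.huM).aestronglyMeasurable
    (ae_of_all _ fun z => abs_apply_le_vnorm (u z) i)

lemma hasWeakSpatialGradOn (hu : VeryWeakSolution S u Du δ) (hQ : Q ⊆ cyl S.Ω S.T) (i : Fin N) :
    HasWeakSpatialGradOn (fun z => u z i) (fun z => Du z i) Q := by
  intro j ψ hψ hψc hψQ
  have hcyl : MeasurableSet (cyl S.Ω S.T) := S.hΩo.measurableSet.prod measurableSet_Ioo
  have hgrad := hu.hgrad i j ψ hψ hψc (hψQ.trans hQ)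
  rwa [setIntegral_eq_of_subset_of_forall_sdiff_eq_zero hcyl hQ fun z hz => ?_,
    setIntegral_eq_of_subset_of_forall_sdiff_eq_zero hcyl hQ fun z hz => ?_] at hgrad
  · simp [image_eq_zero_of_notMem_tsupport fun h => hz.2 (hψQ h)]
  · simp [dxj, fderiv_of_notMem_tsupport ℝ fun h => hz.2 (hψQ h)]

lemma integral_component_mul_fderiv (hu : VeryWeakSolution S u Du δ) (hQ : Q ⊆ cyl S.Ω S.T)
    (i : Fin N) {Ψ : Pt n → ℝ} (hΨ : ContDiff ℝ (⊤ : ℕ∞) Ψ) (hΨc : HasCompactSupport Ψ)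
    (hΨQ : tsupport Ψ ⊆ Q) :
    ∫ z in Q, (-(u z i * fderiv ℝ Ψ z (0, 1)) + ∑ j, S.A z (Du z) i j * dxj Ψ j z) =
      ∫ z in Q, ∑ j, rhsF S z i j * dxj Ψ j z := by
  have hcyl : MeasurableSet (cyl S.Ω S.T) := S.hΩo.measurableSet.prod measurableSet_Ioo
  have hsupp := tsupport_pi_single_subset i Ψ
  have hweak := hu.hweak (fun z => Pi.single i (Ψ z))
    ((ContinuousLinearMap.single ℝ (fun _ : Fin N => ℝ) i).contDiff.comp hΨ)
    (hΨc.of_isClosed_subset (isClosed_tsupport _) hsupp) ((hsupp.trans hΨQ).trans hQ)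
  simp only [vdot_dtd_pi_single (hΨ.differentiable (by norm_num) _), mdot_gradm_pi_single] at hweak
  have hzero {z : Pt n} (hz : z ∉ Q) : fderiv ℝ Ψ z = 0 :=
    fderiv_of_notMem_tsupport ℝ fun h => hz (hΨQ h)
  rwa [setIntegral_eq_of_subset_of_forall_sdiff_eq_zero hcyl hQ fun z hz => ?_,
    setIntegral_eq_of_subset_of_forall_sdiff_eq_zero hcyl hQ fun z hz => ?_] at hweak
  · simp [dxj, hzero hz.2]
  · simp [dxj, hzero hz.2]

variable [IsFiniteMeasure (volume.restrict Q)]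

lemma integrableOn_energyDensity_rpow (hu : VeryWeakSolution S u Du δ) (hQ : Q ⊆ cyl S.Ω S.T)
    {e : ℝ} (he : 0 ≤ e) (heδ : e ≤ δ) : IntegrableOn (fun z => energyDensity S Du z ^ e) Q := by
  refine integrable_rpow_of_le (energyDensity_nonneg S Du) ?_ hu.hδ.1 he heδ
  have hF : IntegrableOn (fun z => HFf S z ^ δ) Q :=
    integrable_rpow_of_le (θ := 1) (HFf_nonneg S)
      (by simp only [Real.rpow_one]; exact S.hFint.mono_set hQ) one_pos hu.hδ.1.le hu.hδ.2.le
  have hmeas : Measurable fun z => energyDensity S Du z ^ δ :=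
    ((measurable_HDu S hu.hDuM).add (measurable_HDu S S.hFM)).pow_const δ
  refine ((hu.henergy.mono_set hQ).add hF).mono' hmeas.aestronglyMeasurable
    (ae_of_all _ fun z => ?_)
  rw [Real.norm_of_nonneg (Real.rpow_nonneg (energyDensity_nonneg S Du z) δ)]
  exact Real.rpow_add_le_add_rpow (HDu_nonneg S Du z) (HFf_nonneg S z) hu.hδ.1.le hu.hδ.2.le

lemma integrableOn_growth_energyDensity (hu : VeryWeakSolution S u Du δ) (hQ : Q ⊆ cyl S.Ω S.T)
    (hδ : (q - 1) / p ≤ δ) :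
    IntegrableOn (fun z => energyDensity S Du z ^ ((p - 1) / p) +
      S.a z * energyDensity S Du z ^ ((q - 1) / p)) Q := by
  have hp := S.hp2
  have hpq := S.hpq
  have hexp : (p - 1) / p ≤ (q - 1) / p := by gcongr
  have hexp_nonneg : 0 ≤ (p - 1) / p := div_nonneg (by linarith) (by linarith)
  obtain ⟨A, hA⟩ := S.haB
  refine (hu.integrableOn_energyDensity_rpow hQ hexp_nonneg (hexp.trans hδ)).add
    ((hu.integrableOn_energyDensity_rpow hQ (hexp_nonneg.trans hexp) hδ).bdd_mul (c := A)
      S.haM.aestronglyMeasurable (ae_of_all _ fun z => ?_))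
  rw [Real.norm_of_nonneg (S.ha0 z)]
  exact hA (mem_range_self z)

lemma integrableOn_A_apply (hu : VeryWeakSolution S u Du δ) (hQ : Q ⊆ cyl S.Ω S.T)
    (hδ : (q - 1) / p ≤ δ) (i : Fin N) (j : Fin n) :
    IntegrableOn (fun z => S.A z (Du z) i j) Q :=
  ((hu.integrableOn_growth_energyDensity hQ hδ).const_mul L₂).mono'
    (measurable_A_apply S hu.hDuM i j).aestronglyMeasurable
    ((ae_restrict_of_ae_restrict_of_subset hQ (ae_abs_A_le_energyDensity S Du)).mono
      fun _ hz => hz i j)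

lemma integrableOn_rhsF_apply (hu : VeryWeakSolution S u Du δ) (hQ : Q ⊆ cyl S.Ω S.T)
    (hδ : (q - 1) / p ≤ δ) (i : Fin N) (j : Fin n) : IntegrableOn (fun z => rhsF S z i j) Q :=
  (hu.integrableOn_growth_energyDensity hQ hδ).mono'
    (measurable_rhsF_apply S i j).aestronglyMeasurable
    (ae_of_all _ fun z => abs_rhsF_le_energyDensity S Du z i j)

lemma hasWeakTimeDerivDivOn (hu : VeryWeakSolution S u Du δ) (hQ : Q ⊆ cyl S.Ω S.T)
    (hδ : (q - 1) / p ≤ δ) (i : Fin N) :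
    HasWeakTimeDerivDivOn (fun z => u z i) (fun z => totalFlux S Du z i) Q := by
  intro Ψ hΨ hΨc hΨQ
  have hweak := hu.integral_component_mul_fderiv hQ i hΨ hΨc hΨQ
  have hA : IntegrableOn (fun z => ∑ j, S.A z (Du z) i j * dxj Ψ j z) Q :=
    integrable_finsetSum _ fun j _ =>
      integrableOn_mul_fderiv_apply (hu.integrableOn_A_apply hQ hδ i j) hΨ hΨc _
  have hF : IntegrableOn (fun z => ∑ j, rhsF S z i j * dxj Ψ j z) Q :=
    integrable_finsetSum _ fun j _ =>
      integrableOn_mul_fderiv_apply (hu.integrableOn_rhsF_apply hQ hδ i j) hΨ hΨc _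
  have htime := integrableOn_mul_fderiv_apply (hu.integrableOn_apply hQ i) hΨ hΨc (0, 1)
  rw [integral_add (f := fun z => -(u z i * fderiv ℝ Ψ z (0, 1))) htime.neg hA,
    integral_neg] at hweak
  simp only [totalFlux, sub_mul, Finset.sum_sub_distrib]
  rw [integral_sub hA hF]
  linarith

end VeryWeakSolution

end DoublePhaseSystem

section IntrinsicCylinders

lemma setAverage_le_mul_setAverage_of_subset {X : Type*} [MeasurableSpace X] {μ : Measure X}
    {s t : Set X} {f : X → ℝ} {c : ℝ} (hst : s ⊆ t) (ht : μ t ≠ ∞) (hc : 0 ≤ c)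
    (hμ : μ.real t ≤ c * μ.real s) (hf : 0 ≤ f) (hft : IntegrableOn f t μ) :
    ⨍ x in s, f x ∂μ ≤ c * ⨍ x in t, f x ∂μ := by
  have hint_nonneg : 0 ≤ ∫ x in t, f x ∂μ := integral_nonneg hf
  have hint : ∫ x in s, f x ∂μ ≤ ∫ x in t, f x ∂μ :=
    setIntegral_mono_set hft (ae_of_all _ hf) hst.eventuallyLE
  simp only [setAverage_eq, smul_eq_mul, ← div_eq_inv_mul]
  obtain hs | hs := (measureReal_nonneg (μ := μ) (s := s)).eq_or_lt
  · rw [← hs, div_zero]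
    positivity
  · have ht₀ : 0 < μ.real t := hs.trans_le (measureReal_mono hst ht)
    rw [mul_div_assoc', div_le_div_iff₀ hs ht₀]
    calc (∫ x in s, f x ∂μ) * μ.real t ≤ (∫ x in t, f x ∂μ) * (c * μ.real s) := by gcongr
      _ = c * (∫ x in t, f x ∂μ) * μ.real s := by ring

variable {n : ℕ} {p lam R R' : ℝ} {z₀ : Pt n}

lemma Qp_subset_Qp (hlam : 0 ≤ lam) (hR : 0 ≤ R) (h : R ≤ R') :
    Qp p z₀ lam R ⊆ Qp p z₀ lam R' := by
  have htime : lam ^ (2 - p) * R ^ 2 ≤ lam ^ (2 - p) * R' ^ 2 := by gcongr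
  exact prod_mono (ball_subset_ball h) (Ioo_subset_Ioo (by linarith) (by linarith))

lemma volume_real_Qp (p : ℝ) (z₀ : Pt n) (hlam : 0 ≤ lam) (hR : 0 < R) :
    volume.real (Qp p z₀ lam R) =
      R ^ (n + 2) * (2 * lam ^ (2 - p) * volume.real (ball (0 : Spc n) 1)) := by
  rw [Qp, volume_real_Qrs z₀ R (by positivity), Measure.real, Measure.addHaar_ball_of_pos _ _ hR,
    ENNReal.toReal_mul, ENNReal.toReal_ofReal (by positivity), finrank_euclideanSpace_fin,
    ← Measure.real]
  ring

lemma volume_real_Qp_le_pow_mul {c : ℝ} (hlam : 0 ≤ lam) (hR : 0 < R) (hR' : 0 < R')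
    (h : R' ≤ c * R) :
    volume.real (Qp p z₀ lam R') ≤ c ^ (n + 2) * volume.real (Qp p z₀ lam R) := by
  rw [volume_real_Qp p z₀ hlam hR, volume_real_Qp p z₀ hlam hR', ← mul_assoc (c ^ _), ← mul_pow]
  gcongr

lemma max_rpow_le_of_mem_Qp {α : ℝ} (hα : 0 ≤ α) (hlam : 1 ≤ lam) (hp : 2 ≤ p)
    (hR : 0 ≤ R) {z : Pt n} (hz : z ∈ Qp p z₀ lam R) :
    max (‖z.1 - z₀.1‖ ^ α) (|z.2 - z₀.2| ^ (α / 2)) ≤ R ^ α := by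
  have hspace : ‖z.1 - z₀.1‖ ≤ R := (mem_ball_iff_norm.1 hz.1).le
  have htime : |z.2 - z₀.2| ≤ R ^ 2 := by
    have hlam_le : lam ^ (2 - p) * R ^ 2 ≤ R ^ 2 := mul_le_of_le_one_left (by positivity)
      (Real.rpow_le_one_of_one_le_of_nonpos hlam (by linarith))
    rw [abs_le]
    constructor <;> linarith [hz.2.1, hz.2.2]
  refine max_le (by gcongr) ?_
  calc |z.2 - z₀.2| ^ (α / 2) ≤ (R ^ 2) ^ (α / 2) := by gcongr
    _ = R ^ α := by
      rw [← Real.rpow_two, rpow_rpow_div_cancel hR two_ne_zero]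

end IntrinsicCylinders

namespace PHyp

variable {n N : ℕ} {p q α L₁ L₂ aH π ρ δ s θ : ℝ} {S : Setting n N p q α L₁ L₂ aH}
  {u : Pt n → Vec N} {Du : Pt n → Mat N n} {z₀ : Pt n}

lemma Qp_subset_Qp_sixteen (h : PHyp S Du z₀ π ρ δ) (hs : s ∈ Icc (2 * ρ) (4 * ρ)) :
    Qp p z₀ π s ⊆ Qp p z₀ π (16 * ρ) :=
  Qp_subset_Qp (by linarith [h.hπ]) (by linarith [h.hρ.1, hs.1]) (by linarith [h.hρ.1, hs.2])

lemma a_center_le (h : PHyp S Du z₀ π ρ δ) : S.a z₀ ≤ π ^ (p - q) := by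
  have hπ : 0 < π := one_pos.trans h.hπ
  rw [Real.rpow_sub hπ, le_div_iff₀ (by positivity)]
  exact h.hcase

lemma rpow_alpha_le (h : PHyp S Du z₀ π ρ δ) (hs : s ∈ Icc (2 * ρ) (4 * ρ)) :
    s ^ α ≤ 4 * π ^ (p - q) := by
  obtain ⟨hα, hα_le⟩ := S.hα
  have hρ := h.hρ.1
  have hs₀ : 0 ≤ s := by linarith [hs.1]
  calc s ^ α ≤ (4 * ρ) ^ α := Real.rpow_le_rpow hs₀ hs.2 hα.le
    _ = 4 ^ α * ρ ^ α := Real.mul_rpow (by norm_num) hρ.le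
    _ ≤ 4 * π ^ (p - q) := by
      gcongr
      · exact Real.rpow_le_self_of_one_le (by norm_num) hα_le
      · exact h.hdecay

lemma a_le (h : PHyp S Du z₀ π ρ δ) (hs : s ∈ Icc (2 * ρ) (4 * ρ)) {z : Pt n}
    (hz : z ∈ Qp p z₀ π s) : S.a z ≤ (1 + 4 * aH) * π ^ (p - q) := by
  have hzΩ := h.hsub (h.Qp_subset_Qp_sixteen hs hz)
  have haH := S.haH
  calc S.a z ≤ S.a z₀ + |S.a z - S.a z₀| := by linarith [le_abs_self (S.a z - S.a z₀)]
    _ ≤ S.a z₀ + aH * max (‖z.1 - z₀.1‖ ^ α) (|z.2 - z₀.2| ^ (α / 2)) := by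
      gcongr
      exact S.haHol z.1 hzΩ.1 z₀.1 h.hz₀.1 z.2 hzΩ.2 z₀.2 h.hz₀.2
    _ ≤ π ^ (p - q) + aH * (4 * π ^ (p - q)) := by
      gcongr
      · exact h.a_center_le
      · exact (max_rpow_le_of_mem_Qp S.hα.1.le h.hπ.le S.hp2.le
          (by linarith [h.hρ.1, hs.1]) hz).trans (h.rpow_alpha_le hs)
    _ = (1 + 4 * aH) * π ^ (p - q) := by ring

lemma average_energyDensity_delta_le (h : PHyp S Du z₀ π ρ δ) (hu : VeryWeakSolution S u Du δ)
    (hs : s ∈ Icc (2 * ρ) (4 * ρ)) :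
    ⨍ z in Qp p z₀ π s, energyDensity S Du z ^ δ ≤ 8 ^ (n + 2) * π ^ (δ * p) := by
  have hπ : 0 < π := one_pos.trans h.hπ
  have hρ := h.hρ.1
  have hs₀ : 0 < s := by linarith [hs.1]
  refine (setAverage_le_mul_setAverage_of_subset (h.Qp_subset_Qp_sixteen hs)
    (isFiniteMeasure_restrict.1 inferInstance) (by positivity)
    (volume_real_Qp_le_pow_mul (c := 8) hπ.le hs₀ (by positivity) (by linarith [hs.1]))
    (fun z => Real.rpow_nonneg (energyDensity_nonneg S Du z) δ)
    (hu.integrableOn_energyDensity_rpow h.hsub hu.hδ.1.le le_rfl)).trans ?_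
  gcongr _ * ?_
  exact h.hup

lemma average_energyDensity_le (h : PHyp S Du z₀ π ρ δ) (hu : VeryWeakSolution S u Du δ)
    (hθ : θ ∈ Ioc ((q - 1) / p) δ) (hs : s ∈ Icc (2 * ρ) (4 * ρ)) :
    ⨍ z in Qp p z₀ π s, energyDensity S Du z ^ θ ≤ (8 ^ (n + 2) * π) ^ (θ * p) := by
  have hp := S.hp2
  have hpq := S.hpq
  have hπ : 0 < π := one_pos.trans h.hπ
  have hs₀ : 0 < s := by linarith [h.hρ.1, hs.1]
  have := neZero_restrict_Qp p z₀ hπ hs₀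
  have hθp : 1 ≤ θ * p := by linarith [(div_lt_iff₀ (by linarith)).1 hθ.1]
  have hθ₀ : 0 < θ := pos_of_mul_pos_left (one_pos.trans_le hθp) (by linarith)
  have hδ := hu.hδ.1
  have hone : (1 : ℝ) ≤ 8 ^ (n + 2) := one_le_pow₀ (by norm_num)
  have hK := energyDensity_nonneg S Du
  have hnonneg : 0 ≤ ⨍ z in Qp p z₀ π s, energyDensity S Du z ^ δ :=
    average_nonneg fun z => Real.rpow_nonneg (hK z) δ
  calc ⨍ z in Qp p z₀ π s, energyDensity S Du z ^ θ
      ≤ (⨍ z in Qp p z₀ π s, energyDensity S Du z ^ δ) ^ (θ / δ) :=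
        average_rpow_le_rpow_average hK (hu.integrableOn_energyDensity_rpow
          ((h.Qp_subset_Qp_sixteen hs).trans h.hsub) hδ.le le_rfl) hθ₀ hθ.2
    _ ≤ (8 ^ (n + 2) * π ^ (δ * p)) ^ (θ / δ) := by
      gcongr
      exact h.average_energyDensity_delta_le hu hs
    _ = (8 ^ (n + 2)) ^ (θ / δ) * π ^ (θ * p) := by
      rw [Real.mul_rpow (by positivity) (by positivity), ← Real.rpow_mul hπ.le]
      congr 2
      field_simp
    _ ≤ (8 ^ (n + 2)) ^ (θ * p) * π ^ (θ * p) := by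
      gcongr ?_ * _
      exact Real.rpow_le_rpow_of_exponent_le hone (((div_le_one hδ).2 hθ.2).trans hθp)
    _ = (8 ^ (n + 2) * π) ^ (θ * p) := (Real.mul_rpow (by positivity) hπ.le).symm

theorem isPIntrinsicSystem (h : PHyp S Du z₀ π ρ δ) (hu : VeryWeakSolution S u Du δ)
    (hθ : θ ∈ Ioc ((q - 1) / p) δ) (hs : s ∈ Icc (2 * ρ) (4 * ρ)) :
    IsPIntrinsicSystem p q θ (L₂ + 1) (1 + 4 * aH) (8 ^ (n + 2)) z₀ π s S.a
      (energyDensity S Du) u Du (totalFlux S Du) := by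
  have hQ : Qp p z₀ π s ⊆ cyl S.Ω S.T := (h.Qp_subset_Qp_sixteen hs).trans h.hsub
  have hδ : (q - 1) / p ≤ δ := hθ.1.le.trans hθ.2
  have hθ₀ : 0 ≤ θ :=
    (div_nonneg (by linarith [S.hp2, S.hpq]) (by linarith [S.hp2])).trans hθ.1.le
  exact {
    two_le := S.hp2.le
    p_le_q := S.hpq.le
    theta_mem := ⟨hθ.1.le, hθ.2.trans hu.hδ.2.le⟩
    L_nonneg := by linarith [S.hL₁, S.hL₁₂]
    one_le_M := one_le_pow₀ (by norm_num)
    lam_pos := one_pos.trans h.hπ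
    s_pos := by linarith [h.hρ.1, hs.1]
    measurable_u := hu.huM
    integrableOn_u := hu.integrableOn_apply hQ
    measurable_Du := hu.hDuM
    integrableOn_V := fun i j =>
      (hu.integrableOn_A_apply hQ hδ i j).sub (hu.integrableOn_rhsF_apply hQ hδ i j)
    a_nonneg := fun z _ => S.ha0 z
    a_le := fun _ hz => h.a_le hs hz
    K_nonneg := energyDensity_nonneg S Du
    mul_mnorm_rpow_le := fun z _ =>
      (mul_mnorm_rpow_le_HDu S Du z).trans (HDu_le_energyDensity S Du z)
    integrableOn_K := hu.integrableOn_energyDensity_rpow hQ hθ₀ hθ.2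
    average_K_le := h.average_energyDensity_le hu hθ hs
    abs_V_le := ae_restrict_of_ae_restrict_of_subset hQ (ae_abs_totalFlux_le S Du)
    weakGrad := hu.hasWeakSpatialGradOn hQ
    weakTimeDeriv := hu.hasWeakTimeDerivDivOn hQ hδ }

end PHyp

end DoublePhase

theorem p_intrinsic_poincare_weighted_general (n N : ℕ) (p q L B M : ℝ) :
    ∃ c : ℝ, 0 < c ∧
      ∀ {θ : ℝ} {z₀ : Pt n} {lam s : ℝ} {a K : Pt n → ℝ} {u : Pt n → Vec N}
        {Du V : Pt n → Mat N n}, IsPIntrinsicSystem p q θ L B M z₀ lam s a K u Du V →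
        ⨍ z in Qp p z₀ lam s, sInf (a '' Qp p z₀ lam s) ^ θ *
            (vnorm (u z - vavg u (Qp p z₀ lam s)) ^ (θ * q) / s ^ (θ * q)) ≤
          c * ⨍ z in Qp p z₀ lam s, K z ^ θ := by
  obtain ⟨C, hC, hpoincare⟩ := exists_average_vnorm_rpow_le n N q
  set E := (n * L * (1 + B) * M ^ q) ^ q * (B * M ^ (q - p))
  refine ⟨C * (2 + |E|), by positivity, fun {θ z₀ lam s a K u Du V} h => ?_⟩
  have hK := h.average_K_nonneg
  have hs : 0 < s ^ (θ * q) := Real.rpow_pos_of_pos h.s_pos _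
  have hinf_nonneg : 0 ≤ sInf (a '' Qp p z₀ lam s) :=
    Real.sInf_nonneg (forall_mem_image.2 h.a_nonneg)
  have hinf_le : ∀ z ∈ Qp p z₀ lam s, sInf (a '' Qp p z₀ lam s) ≤ a z := fun z hz =>
    csInf_le ⟨0, forall_mem_image.2 h.a_nonneg⟩ (mem_image_of_mem a hz)
  obtain hinf | hinf := hinf_nonneg.eq_or_lt
  · simp only [← hinf, Real.zero_rpow h.theta_pos.ne', zero_mul, average_zero]
    positivity
  · have hle := hpoincare h hinf hinf_le
    simp only [average, integral_const_mul, integral_div] at hle hK ⊢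
    rw [← mul_div_assoc, div_le_iff₀' hs]
    refine hle.trans ?_
    rw [mul_assoc C]
    gcongr
    exact le_abs_self E

/-- Lemma 4.3: weighted Poincaré-type inequality in the `p`-intrinsic case. -/
theorem p_intrinsic_poincare_weighted (n N : ℕ) (p q α L₁ L₂ aH : ℝ) :
    ∃ c : ℝ, 0 < c ∧
      ∀ (S : Setting n N p q α L₁ L₂ aH) (u : Pt n → Vec N) (Du : Pt n → Mat N n) (δ : ℝ),
        VeryWeakSolution S u Du δ →
        ∀ (z₀ : Pt n) (π ρ : ℝ), PHyp S Du z₀ π ρ δ →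
        ∀ θ ∈ Set.Ioc ((q - 1) / p) δ, ∀ s ∈ Set.Icc (2 * ρ) (4 * ρ),
          (⨍ z in Qp p z₀ π s,
              sInf (S.a '' Qp p z₀ π s) ^ θ
                * (vnorm (u z - vavg u (Qp p z₀ π s)) ^ (θ * q) / s ^ (θ * q)))
            ≤ c * (⨍ z in Qp p z₀ π s, (HDu S Du z + HFf S z) ^ θ) := by
  obtain ⟨c, hc, hle⟩ :=
    p_intrinsic_poincare_weighted_general n N p q (L₂ + 1) (1 + 4 * aH) (8 ^ (n + 2))
  exact ⟨c, hc, fun S u Du δ hu z₀ π ρ h θ hθ s hs => hle (h.isPIntrinsicSystem hu hθ hs)⟩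
end
end

section
/- In the stopping-time setup, for each w ∈ Ψ(Π,R₁) let ρ_w be the stopping radius and set U(w) = Q^{π_w}_{2ρ_w}(w) if π_w^p ≥ a(w)π_w^q and U(w) = G^{π_w}_{2ρ_w}(w) if π_w^p < a(w)π_w^q. Assume R ≤ R₀, where R₀ ∈ (0,1) is small enough that the radius-decay estimate ρ_w^α π_w^{q−p} ≤ 1/(1+10[a]_α) holds whenever π_w^p ≥ a(w)π_w^q, and a(w)/2 ≤ a(z) ≤ 2a(w) holds for all z ∈ Q_{10ρ_w}(w) whenever π_w^p < a(w)π_w^q. Then for v, w ∈ Ψ(Π,R₁): if U(v) ∩ U(w) ≠ ∅ and ρ_w ≤ 2ρ_v, then π_v ≤ 2^{1/p} π_w. -/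
open MeasureTheory Set Metric Filter
open scoped ENNReal NNReal Topology BigOperators Classical

noncomputable section

open DoublePhase

/-!
An intrinsic cylinder with scale at least `1` lies in the standard parabolic cylinder of the same
radius, and standard cylinders behave like balls of a metric. Since `ρ_w ≤ 2 ρ_v`, meeting cylinders
force `w ∈ Q_{6ρ_v}(v) ⊆ Q_{10ρ_v}(v)`. There both phases give the same control of the coefficient,
`a(w) π_v^q ≤ π_v^p + 2 a(v) π_v^q`: Hölder continuity and radius decay in the `p`-phase,
comparability of `a` in the `(p,q)`-phase. If `2^{1/p} π_w < π_v`, then `2 π_w^p < π_v^p` and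
`2 π_w^q < π_v^q`, whence `H(w, π_w) < H(v, π_v)`, although both levels equal `Π`.
-/

namespace DoublePhase

section ParabolicCylinders

variable {n : ℕ} {v w y z : Pt n} {r s : ℝ}

theorem mem_Qc : y ∈ Qc z r ↔ dist y.1 z.1 < r ∧ |y.2 - z.2| < r ^ 2 := by
  rw [Qc, Qrs, ← Real.ball_eq_Ioo, mem_prod, mem_ball, mem_ball, Real.dist_eq]

theorem pos_of_mem_Qc (hy : y ∈ Qc z r) : 0 < r :=
  dist_nonneg.trans_lt (mem_Qc.1 hy).1

theorem Qc_mono : Monotone (Qc z) := by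
  intro r s hrs y hy
  have hr := pos_of_mem_Qc hy
  rw [mem_Qc] at hy ⊢
  exact ⟨hy.1.trans_le hrs, hy.2.trans_le (by gcongr)⟩

theorem mem_Qc_add (hyv : y ∈ Qc v r) (hyw : y ∈ Qc w s) : w ∈ Qc v (r + s) := by
  have hrs : 0 < r * s := mul_pos (pos_of_mem_Qc hyv) (pos_of_mem_Qc hyw)
  rw [mem_Qc] at hyv hyw ⊢
  constructor
  · linarith [dist_triangle_left w.1 v.1 y.1]
  · calc |w.2 - v.2| ≤ |w.2 - y.2| + |y.2 - v.2| := abs_sub_le _ _ _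
      _ < s ^ 2 + r ^ 2 := by rw [abs_sub_comm w.2]; exact add_lt_add hyw.2 hyv.2
      _ ≤ (r + s) ^ 2 := by linarith [add_sq r s]

theorem max_rpow_le_of_mem_Qc {α : ℝ} (hα : 0 ≤ α) (hy : y ∈ Qc z r) :
    max (‖y.1 - z.1‖ ^ α) (|y.2 - z.2| ^ (α / 2)) ≤ r ^ α := by
  have hr := pos_of_mem_Qc hy
  rw [mem_Qc, dist_eq_norm] at hy
  refine max_le (by gcongr; exact hy.1.le) ?_
  calc |y.2 - z.2| ^ (α / 2) ≤ (r ^ 2) ^ (α / 2) := by gcongr; exact hy.2.le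
    _ = r ^ α := by rw [← Real.rpow_natCast_mul hr.le]; congr 1; push_cast; ring

end ParabolicCylinders

section IntrinsicCylinders

variable {n : ℕ} {a : Pt n → ℝ} {p q lam mu r : ℝ} {v w z : Pt n}

/-- The intrinsic cylinder of radius `r` and scale `lam` around `z`: `p`-intrinsic or
`(p,q)`-intrinsic according to the phase at `z`. It depends on the problem only through the
coefficient `a`, and `Uw S w π ρ` is `intrinsicCylinder S.a p q w π (2 * ρ)`. -/
def intrinsicCylinder (a : Pt n → ℝ) (p q : ℝ) (z : Pt n) (lam r : ℝ) : Set (Pt n) :=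
  if a z * lam ^ q ≤ lam ^ p then Qp p z lam r else Gpq a p q z lam r

theorem Qrs_mul_sq_subset_Qc {c : ℝ} (hc : c ≤ 1) : Qrs z r (c * r ^ 2) ⊆ Qc z r := by
  have hcr : c * r ^ 2 ≤ r ^ 2 := mul_le_of_le_one_left (sq_nonneg r) hc
  exact prod_mono_right (Ioo_subset_Ioo (by linarith) (by linarith))

theorem rpow_le_Hf (ha : 0 ≤ a z) (hlam : 0 ≤ lam) : lam ^ p ≤ Hf a p q z lam :=
  le_add_of_nonneg_right (mul_nonneg ha (Real.rpow_nonneg hlam q))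

theorem sq_div_Hf_le_one (hp : 2 ≤ p) (ha : 0 ≤ a z) (hlam : 1 ≤ lam) :
    lam ^ 2 / Hf a p q z lam ≤ 1 := by
  have hsq : lam ^ 2 ≤ Hf a p q z lam :=
    calc lam ^ 2 = lam ^ (2 : ℝ) := (Real.rpow_two lam).symm
      _ ≤ lam ^ p := Real.rpow_le_rpow_of_exponent_le hlam hp
      _ ≤ Hf a p q z lam := rpow_le_Hf ha (zero_le_one.trans hlam)
  exact div_le_one_of_le₀ hsq ((sq_nonneg lam).trans hsq)

theorem intrinsicCylinder_subset_Qc (hp : 2 ≤ p) (ha : 0 ≤ a z) (hlam : 1 ≤ lam) :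
    intrinsicCylinder a p q z lam r ⊆ Qc z r := by
  unfold intrinsicCylinder
  split_ifs
  · exact Qrs_mul_sq_subset_Qc (Real.rpow_le_one_of_one_le_of_nonpos hlam (by linarith))
  · exact Qrs_mul_sq_subset_Qc (sq_div_Hf_le_one hp ha hlam)

theorem mem_Qc_of_intrinsicCylinder_inter_nonempty {s : ℝ} (hp : 2 ≤ p)
    (hav : 0 ≤ a v) (haw : 0 ≤ a w) (hlam : 1 ≤ lam) (hmu : 1 ≤ mu)
    (hmeet : (intrinsicCylinder a p q v lam r ∩ intrinsicCylinder a p q w mu s).Nonempty) :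
    w ∈ Qc v (r + s) :=
  let ⟨_, hyv, hyw⟩ := hmeet
  mem_Qc_add (intrinsicCylinder_subset_Qc hp hav hlam hyv)
    (intrinsicCylinder_subset_Qc hp haw hmu hyw)

end IntrinsicCylinders

section Levels

variable {n : ℕ} {a : Pt n → ℝ} {p q lam mu : ℝ} {v w z : Pt n}

theorem two_mul_rpow_lt_rpow (hp : 0 < p) (hpq : p ≤ q) (hmu : 0 ≤ mu)
    (hgap : (2 : ℝ) ^ (1 / p) * mu < lam) : 2 * mu ^ q < lam ^ q := by
  have hexp : 1 ≤ 1 / p * q := by rwa [one_div_mul_eq_div, one_le_div hp]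
  calc 2 * mu ^ q ≤ (2 : ℝ) ^ (1 / p * q) * mu ^ q := by
        gcongr
        exact Real.self_le_rpow_of_one_le one_le_two hexp
    _ = ((2 : ℝ) ^ (1 / p) * mu) ^ q := by
        rw [Real.mul_rpow (by positivity) hmu, Real.rpow_mul zero_le_two]
    _ < lam ^ q := by gcongr; exact hp.trans_le hpq

theorem le_two_rpow_mul_of_Hf_le (hp : 0 < p) (hpq : p ≤ q) (hmu : 0 ≤ mu) (haw : 0 ≤ a w)
    (hcoeff : a w * lam ^ q ≤ lam ^ p + 2 * (a v * lam ^ q))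
    (hlevel : Hf a p q v lam ≤ Hf a p q w mu) : lam ≤ (2 : ℝ) ^ (1 / p) * mu := by
  by_contra! hgap
  have hgap_p : 2 * mu ^ p < lam ^ p := two_mul_rpow_lt_rpow hp le_rfl hmu hgap
  have hgap_q : a w * (2 * mu ^ q) ≤ a w * lam ^ q :=
    mul_le_mul_of_nonneg_left (two_mul_rpow_lt_rpow hp hpq hmu hgap).le haw
  unfold Hf at hlevel
  linarith

/-- The `10` in the decay bound absorbs `10 ^ α ≤ 10`. -/
theorem mul_rpow_le_rpow_add_of_decay {α A B C ρ : ℝ} (hα : α ≤ 1) (hC : 0 ≤ C) (hρ : 0 ≤ ρ)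
    (hlam : 0 < lam) (hAB : B - A ≤ C * (10 * ρ) ^ α)
    (hdecay : ρ ^ α * lam ^ (q - p) ≤ 1 / (1 + 10 * C)) :
    B * lam ^ q ≤ lam ^ p + A * lam ^ q := by
  have hten : (10 * ρ) ^ α ≤ 10 * ρ ^ α := by
    rw [Real.mul_rpow (by norm_num) hρ]
    gcongr
    exact Real.rpow_le_self_of_one_le (by norm_num) hα
  have hsmall : 10 * C * (ρ ^ α * lam ^ (q - p)) ≤ 1 :=
    calc 10 * C * (ρ ^ α * lam ^ (q - p)) ≤ 10 * C * (1 / (1 + 10 * C)) := by gcongr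
      _ ≤ 1 := by rw [mul_one_div]; exact div_le_one_of_le₀ (by linarith) (by linarith)
  have hdiff : (B - A) * lam ^ q ≤ lam ^ p :=
    calc (B - A) * lam ^ q ≤ C * (10 * ρ ^ α) * lam ^ q := by
          gcongr
          exact hAB.trans (by gcongr)
      _ = 10 * C * (ρ ^ α * lam ^ (q - p)) * lam ^ p := by
          rw [← sub_add_cancel q p, Real.rpow_add hlam, add_sub_cancel_right]
          ring
      _ ≤ lam ^ p := mul_le_of_le_one_left (by positivity) hsmall
  linarith

theorem lt_of_mul_sSup_level_lt_Hf {E : Set (Pt n)} {K : ℝ} (hp : 0 ≤ p) (hq : 0 ≤ q)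
    (hE : BddAbove (a '' E)) (hz : z ∈ E) (haz : 0 ≤ a z) (hK : 1 ≤ K)
    (hlam : 0 ≤ lam) (hmu : 0 ≤ mu)
    (hlevel : K * (mu ^ p + sSup (a '' E) * mu ^ q) < Hf a p q z lam) : mu < lam := by
  have hsup : a z ≤ sSup (a '' E) := le_csSup hE (mem_image_of_mem a hz)
  have hsup_nonneg : 0 ≤ sSup (a '' E) := haz.trans hsup
  contrapose! hlevel
  calc Hf a p q z lam ≤ mu ^ p + sSup (a '' E) * mu ^ q := by unfold Hf; gcongr
    _ ≤ K * (mu ^ p + sSup (a '' E) * mu ^ q) := le_mul_of_one_le_left (by positivity) hK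

theorem one_le_radius_ratio_rpow {R R₁ R₂ s : ℝ} (hR₁ : 0 ≤ R₁) (hR₁₂ : R₁ < R₂)
    (hR₂ : R₂ ≤ 2 * R) (hs : 0 ≤ s) : 1 ≤ (32 * R / (R₂ - R₁)) ^ s := by
  refine Real.one_le_rpow ?_ hs
  rw [one_le_div (sub_pos.2 hR₁₂)]
  linarith

theorem level_exponent_nonneg (n : ℕ) {δ₀ δ : ℝ} (hp : 0 ≤ p) (hpq : p ≤ q)
    (hδ₀ : q * (1 - δ₀) ≤ 2) (hδ : δ₀ ≤ δ) (hδ₁ : δ ≤ 1) :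
    0 ≤ q * ((n : ℝ) + 2) / (2 + p * (δ - 1)) := by
  have hdeficit : p * (1 - δ) ≤ q * (1 - δ₀) :=
    mul_le_mul hpq (by linarith) (by linarith) (hp.trans hpq)
  exact div_nonneg (mul_nonneg (hp.trans hpq) (by positivity)) (by linarith)

end Levels

end DoublePhase

theorem vitali_scale_comparison_general {n : ℕ} {p q α C : ℝ} {a : Pt n → ℝ} {v w : Pt n}
    {πv πw ρv ρw : ℝ} (hp : 2 ≤ p) (hpq : p ≤ q) (hα : α ∈ Set.Icc (0 : ℝ) 1) (hC : 0 ≤ C)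
    (hav : 0 ≤ a v) (haw : 0 ≤ a w)
    (hHol : |a w - a v| ≤ C * max (‖w.1 - v.1‖ ^ α) (|w.2 - v.2| ^ (α / 2)))
    (hπv : 1 ≤ πv) (hπw : 1 ≤ πw) (hlevel : Hf a p q v πv ≤ Hf a p q w πw)
    (hdec : a v * πv ^ q ≤ πv ^ p → ρv ^ α * πv ^ (q - p) ≤ 1 / (1 + 10 * C))
    (hcomp : πv ^ p < a v * πv ^ q → ∀ z ∈ Qc v (10 * ρv), a z ≤ 2 * a v)
    (hmeet : (intrinsicCylinder a p q v πv (2 * ρv) ∩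
      intrinsicCylinder a p q w πw (2 * ρw)).Nonempty)
    (hρ : ρw ≤ 2 * ρv) :
    πv ≤ (2 : ℝ) ^ (1 / p) * πw := by
  have hw : w ∈ Qc v (2 * ρv + 2 * ρw) :=
    mem_Qc_of_intrinsicCylinder_inter_nonempty hp hav haw hπv hπw hmeet
  have hρv : 0 < ρv := by linarith [pos_of_mem_Qc hw]
  have hw10 : w ∈ Qc v (10 * ρv) := Qc_mono (by linarith) hw
  have hcoeff : a w * πv ^ q ≤ πv ^ p + 2 * (a v * πv ^ q) := by
    rcases le_or_gt (a v * πv ^ q) (πv ^ p) with hphase | hphase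
    · have hdiff : a w - a v ≤ C * (10 * ρv) ^ α :=
        (le_abs_self _).trans (hHol.trans (by gcongr; exact max_rpow_le_of_mem_Qc hα.1 hw10))
      have hsum : a w * πv ^ q ≤ πv ^ p + a v * πv ^ q :=
        mul_rpow_le_rpow_add_of_decay hα.2 hC hρv.le (by linarith) hdiff (hdec hphase)
      have : 0 ≤ a v * πv ^ q := by positivity
      linarith
    · calc a w * πv ^ q ≤ 2 * a v * πv ^ q := by gcongr; exact hcomp hphase w hw10
        _ ≤ πv ^ p + 2 * (a v * πv ^ q) := by
          rw [mul_assoc]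
          exact le_add_of_nonneg_left (by positivity)
  exact le_two_rpow_mul_of_Hf_le (by linarith) hpq (by linarith) haw hcoeff hlevel

/-- Vitali comparison lemma: comparability of intrinsic scaling parameters
of intersecting stopping-time cylinders. -/
theorem vitali_scale_comparison (n N : ℕ) (p q α L₁ L₂ aH δ₀ : ℝ)
    (hδ₀ : δ₀ ∈ Set.Ioo (0 : ℝ) 1)
    (hδ₀q : q < p + α * (2 - q * (1 - δ₀)) / ((n : ℝ) + 2))
    (hδ₀2 : 1 < 2 - q * (1 - δ₀)) (hδ₀p : 2 < δ₀ * p)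
    (S : Setting n N p q α L₁ L₂ aH) (u : Pt n → Vec N) (Du : Pt n → Mat N n) (δ : ℝ)
    (hδ : δ ∈ Set.Ioo δ₀ 1) (hsol : VeryWeakSolution S u Du δ)
    (z₀ : Pt n) (R R₁ R₂ c₀ π₀ PiV : ℝ)
    (hR : 0 < R) (hQ2R : Qc z₀ (2 * R) ⊆ cyl S.Ω S.T)
    (hRR₁ : R ≤ R₁) (hR₁₂ : R₁ < R₂) (hR₂ : R₂ ≤ 2 * R)
    (hc₀ : 1 < c₀) (hπ₀ : 1 < π₀)
    (hπ₀eq : π₀ ^ 2 * (π₀ ^ p + sSup (S.a '' Qc z₀ (2 * R)) * π₀ ^ q) ^ (δ - 1)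
      = (⨍ z in Qc z₀ (2 * R), (HDu S Du z + HFf S z) ^ δ) + c₀ ^ (2 / p))
    (hPiV : (32 * R / (R₂ - R₁)) ^ (q * ((n : ℝ) + 2) / (2 + p * (δ - 1)))
        * (π₀ ^ p + sSup (S.a '' Qc z₀ (2 * R)) * π₀ ^ q) < PiV)
    (v w : Pt n) (πv πw ρv ρw : ℝ)
    (hv : v ∈ Qc z₀ R₁) (hvΨ : PiV < HDu S Du v)
    (hw : w ∈ Qc z₀ R₁) (hwΨ : PiV < HDu S Du w)
    (hπv : 0 < πv) (hπveq : PiV = πv ^ p + S.a v * πv ^ q)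
    (hπw : 0 < πw) (hπweq : PiV = πw ^ p + S.a w * πw ^ q)
    (hρv : ρv ∈ Set.Ioo (0 : ℝ) ((R₂ - R₁) / 16))
    (hρw : ρw ∈ Set.Ioo (0 : ℝ) ((R₂ - R₁) / 16))
    (hstopv :
      (S.a v * πv ^ q ≤ πv ^ p →
        (⨍ z in Qp p v πv ρv, (HDu S Du z + HFf S z) ^ δ) = πv ^ (δ * p) ∧
        ∀ s ∈ Set.Ioo ρv (R₂ - R₁),
          (⨍ z in Qp p v πv s, (HDu S Du z + HFf S z) ^ δ) < πv ^ (δ * p)) ∧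
      (πv ^ p < S.a v * πv ^ q →
        (⨍ z in Gpq S.a p q v πv ρv, (HDu S Du z + HFf S z) ^ δ) = PiV ^ δ ∧
        ∀ s ∈ Set.Ioo ρv (R₂ - R₁),
          (⨍ z in Gpq S.a p q v πv s, (HDu S Du z + HFf S z) ^ δ) < PiV ^ δ))
    (hstopw :
      (S.a w * πw ^ q ≤ πw ^ p →
        (⨍ z in Qp p w πw ρw, (HDu S Du z + HFf S z) ^ δ) = πw ^ (δ * p) ∧
        ∀ s ∈ Set.Ioo ρw (R₂ - R₁),
          (⨍ z in Qp p w πw s, (HDu S Du z + HFf S z) ^ δ) < πw ^ (δ * p)) ∧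
      (πw ^ p < S.a w * πw ^ q →
        (⨍ z in Gpq S.a p q w πw ρw, (HDu S Du z + HFf S z) ^ δ) = PiV ^ δ ∧
        ∀ s ∈ Set.Ioo ρw (R₂ - R₁),
          (⨍ z in Gpq S.a p q w πw s, (HDu S Du z + HFf S z) ^ δ) < PiV ^ δ))
    (hdecv : S.a v * πv ^ q ≤ πv ^ p → ρv ^ α * πv ^ (q - p) ≤ 1 / (1 + 10 * aH))
    (hdecw : S.a w * πw ^ q ≤ πw ^ p → ρw ^ α * πw ^ (q - p) ≤ 1 / (1 + 10 * aH))
    (hcompv : πv ^ p < S.a v * πv ^ q →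
      ∀ z ∈ Qc v (10 * ρv), S.a v / 2 ≤ S.a z ∧ S.a z ≤ 2 * S.a v)
    (hcompw : πw ^ p < S.a w * πw ^ q →
      ∀ z ∈ Qc w (10 * ρw), S.a w / 2 ≤ S.a z ∧ S.a z ≤ 2 * S.a w)
    (hmeet : (Uw S v πv ρv ∩ Uw S w πw ρw).Nonempty)
    (hρ : ρw ≤ 2 * ρv) :
    πv ≤ (2 : ℝ) ^ (1 / p) * πw := by
  have hp : 0 ≤ p := by linarith [S.hp2]
  have hsub : Qc z₀ R₁ ⊆ Qc z₀ (2 * R) := Qc_mono (by linarith)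
  have hfactor : 1 ≤ (32 * R / (R₂ - R₁)) ^ (q * ((n : ℝ) + 2) / (2 + p * (δ - 1))) :=
    one_le_radius_ratio_rpow (by linarith) hR₁₂ hR₂
      (level_exponent_nonneg n hp S.hpq.le (by linarith) hδ.1.le hδ.2.le)
  have one_le_scale : ∀ z ∈ Qc z₀ R₁, ∀ π > 0, PiV = Hf S.a p q z π → 1 ≤ π :=
    fun z hz π hπ hlevel ↦ hπ₀.le.trans <| le_of_lt <|
      lt_of_mul_sSup_level_lt_Hf hp (hp.trans S.hpq.le) (S.haB.mono (image_subset_range _ _))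
        (hsub hz) (S.ha0 z) hfactor hπ.le (by linarith) (hlevel ▸ hPiV)
  have hvΩ := hQ2R (hsub hv)
  have hwΩ := hQ2R (hsub hw)
  exact vitali_scale_comparison_general S.hp2.le S.hpq.le (Ioc_subset_Icc_self S.hα) S.haH.le
    (S.ha0 v) (S.ha0 w) (S.haHol w.1 hwΩ.1 v.1 hvΩ.1 w.2 hwΩ.2 v.2 hvΩ.2)
    (one_le_scale v hv πv hπv hπveq) (one_le_scale w hw πw hπw hπweq)
    (hπveq.symm.trans hπweq).le hdecv (fun hphase z hz ↦ (hcompv hphase z hz).2) hmeet hρ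
end
end
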